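/- arXiv:1202.5253 — 4 statements merged into one kernel-verified Lean document; each statement's English description precedes it below -/
import Mathlib

section
/- Any polynomial solution Ψ(t) of the scattering equation X_1(t)Ψ(t) = RΨ(t) on the span of link patterns LP(2n), normalized so that not all components vanish, has some component of degree at least n−1 in t. -/
open Finset Polynomial

/-- A link pattern on `2n` points: a fixed-point-free non-crossing involution. -/
def IsLinkPattern (n : ℕ) (f : Fin (2 * n) → Fin (2 * n)) : Prop :=
  Function.Involutive f ∧ (∀ i, f i ≠ i) ∧
    ∀ i j : Fin (2 * n),
      ¬ ((i : ℕ) < (j : ℕ) ∧ (j : ℕ) < (f i : ℕ) ∧ (f i : ℕ) < (f j : ℕ))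

instance (n : ℕ) : DecidablePred (IsLinkPattern n) := fun _ => by
  unfold IsLinkPattern Function.Involutive; infer_instance

/-- The inverse rotation `R⁻¹` on link patterns: the arc `{i+1, j+1}` becomes `{i, j}`. -/
def rotinvf (N : ℕ) [NeZero N] (f : Fin N → Fin N) : Fin N → Fin N :=
  fun i => f (i + 1) - 1

/-- The diagrammatic action of the Temperley–Lieb generator `e₁` on a link pattern
(at `τ = 1`): the points `1, 2` (indices `0, 1`) get joined by a short arc, and the
former partners of `1` and `2` get joined to each other; closed loops are erased. -/
def e1f (N : ℕ) [NeZero N] (f : Fin N → Fin N) : Fin N → Fin N :=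
  fun i =>
    if i = 0 then 1 else if i = 1 then 0
    else if i = f 0 then f 1 else if i = f 1 then f 0 else f i

/-!
Choose `q` with `q + q⁻¹ = 1`. Expanding every arc as a spin singlet with weights `q` and `1` maps
link patterns to words with `n` spins up and `n` spins down; this map is triangular for the
lexicographic order, hence injective. In the spin basis the scattering equation describes a particle
that meets its right neighbour and leaves it at the end of the word, so in a word `s ++ w` the
letters of `w` are those already met.

Suppose that `t ^ m` divides all components `s ++ w`, where `w` has `m` spins up. Then it divides
all components `s ++ w ++ [down]`, and once these are known to vanish, `t ^ (m + 1)` divides all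
components `s ++ w ++ [up]`. Conversely, the components `s ++ w` vanish as soon as the components
`s ++ w ++ [down]` and `s ++ w ++ [up]` do. When `s` is a single letter, `t ^ (n - 1)` divides the
component, which is therefore zero if its degree is less than `n - 1`; the induction ends at the
empty word `w`.
-/

section LinkPatterns

variable {n : ℕ} {σ π : Fin (2 * n) → Fin (2 * n)}

section FinArithmetic

variable [NeZero (2 * n)]

theorem fin_val_one_two_mul : ((1 : Fin (2 * n)) : ℕ) = 1 := by
  have := NeZero.ne (2 * n)
  rw [Fin.val_one', Nat.mod_eq_of_lt (by omega)]

theorem fin_zero_ne_one_two_mul : (0 : Fin (2 * n)) ≠ 1 := by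
  rw [ne_eq, Fin.ext_iff, fin_val_one_two_mul, Fin.val_zero]
  exact zero_ne_one

theorem fin_val_add_one_two_mul (i : Fin (2 * n)) :
    ((i + 1 : Fin (2 * n)) : ℕ) = if (i : ℕ) + 1 = 2 * n then 0 else (i : ℕ) + 1 := by
  rw [Fin.val_add, fin_val_one_two_mul]
  split_ifs with h
  · rw [h, Nat.mod_self]
  · exact Nat.mod_eq_of_lt (by omega)

theorem fin_val_sub_one {N : ℕ} [NeZero N] (i : Fin N) :
    ((i - 1 : Fin N) : ℕ) = if (i : ℕ) = 0 then N - 1 else (i : ℕ) - 1 := by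
  split_ifs with h
  · obtain rfl : i = 0 := Fin.ext h
    obtain ⟨m, rfl⟩ := Nat.exists_eq_add_one_of_ne_zero (NeZero.ne N)
    simp
  · exact Fin.val_sub_one_of_ne_zero fun h0 => h (by rw [h0, Fin.val_zero])

end FinArithmetic

theorem rotinvf_injective {N : ℕ} [NeZero N] : Function.Injective (rotinvf N) := by
  intro f g h
  funext i
  simpa only [rotinvf, sub_add_cancel, sub_left_inj] using congrFun h (i - 1)

namespace IsLinkPattern

theorem involutive (hσ : IsLinkPattern n σ) : Function.Involutive σ := hσ.1

theorem apply_ne (hσ : IsLinkPattern n σ) (i : Fin (2 * n)) : σ i ≠ i := hσ.2.1 i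

theorem not_crossing (hσ : IsLinkPattern n σ) (i j : Fin (2 * n)) :
    ¬ ((i : ℕ) < j ∧ (j : ℕ) < σ i ∧ (σ i : ℕ) < σ j) := hσ.2.2 i j

theorem val_apply_ne (hσ : IsLinkPattern n σ) (i : Fin (2 * n)) : (σ i : ℕ) ≠ i :=
  Fin.val_ne_of_ne (hσ.apply_ne i)

theorem one_lt_and_lt_of_ne [NeZero (2 * n)] (hπ : IsLinkPattern n π) (h : π 0 ≠ 1) :
    1 < (π 1 : ℕ) ∧ (π 1 : ℕ) < π 0 := by
  have hinv : ∀ i, π (π i) = i := hπ.involutive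
  have h0 := hπ.val_apply_ne 0
  have h1 := hπ.val_apply_ne 1
  have h10 : (π 1 : ℕ) ≠ (0 : Fin (2 * n)) := fun h' => h (by rw [← Fin.ext h', hinv])
  have h01 : (π 0 : ℕ) ≠ π 1 :=
    fun h' => fin_zero_ne_one_two_mul (hπ.involutive.injective (Fin.ext h'))
  have hcross := hπ.not_crossing 0 1
  rw [ne_eq, Fin.ext_iff] at h
  simp only [fin_val_one_two_mul, Fin.val_zero] at *
  omega

protected theorem rotinvf [NeZero (2 * n)] (hσ : IsLinkPattern n σ) :
    IsLinkPattern n (rotinvf (2 * n) σ) := by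
  have hinv : ∀ i, σ (σ i) = i := hσ.involutive
  refine ⟨fun i => ?_, fun i h => ?_, fun i j => ?_⟩
  · simp only [rotinvf, sub_add_cancel, hinv, add_sub_cancel_right]
  · exact hσ.apply_ne _ (sub_eq_iff_eq_add.1 h)
  · have hij := hσ.not_crossing (i + 1) (j + 1)
    have hji := hσ.not_crossing (σ (j + 1)) (i + 1)
    rw [hinv] at hji
    simp only [rotinvf, fin_val_sub_one]
    simp only [fin_val_add_one_two_mul] at hij hji
    split_ifs at * <;> omega

theorem e1f_eq_self [NeZero (2 * n)] (hπ : IsLinkPattern n π) (h : π 0 = 1) :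
    e1f (2 * n) π = π := by
  have h' : π 1 = 0 := by rw [← h, hπ.involutive]
  funext i
  unfold e1f
  split_ifs <;> simp_all

protected theorem e1f [NeZero (2 * n)] (hπ : IsLinkPattern n π) :
    IsLinkPattern n (e1f (2 * n) π) := by
  by_cases h : π 0 = 1
  · rwa [hπ.e1f_eq_self h]
  obtain ⟨h1, h01⟩ := hπ.one_lt_and_lt_of_ne h
  have hinv : ∀ i, π (π i) = i := hπ.involutive
  have hne := hπ.apply_ne
  have hz := fin_zero_ne_one_two_mul (n := n)
  have hv := fin_val_one_two_mul (n := n)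
  refine ⟨fun i => ?_, fun i => ?_, fun i j => ?_⟩
  · unfold e1f
    grind
  · unfold e1f
    grind
  · -- A crossing that involves the new arc `{π 1, π 0}` gives a crossing of `π` with its arc
    -- at `0` or at `1`.
    have hij := hπ.not_crossing i j
    have h0j := hπ.not_crossing 0 j
    have h1i := hπ.not_crossing 1 i
    simp only [Fin.val_zero, hv] at h0j h1i
    unfold e1f
    split_ifs <;> simp only [Fin.ext_iff, Fin.val_zero, hv] at * <;> grind

end IsLinkPattern

end LinkPatterns

section SpinWeights

variable {L : Type*} [CommRing L]

/-- The weight of an arc whose left end carries the spin `x` and whose right end carries the spin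
`y`, where `true` stands for spin up. -/
def arcWeight (q : L) (x y : Bool) : L :=
  if x = y then 0 else if x then q else 1

/-- The factor picked up by a spin `x` carried once around the circle. It is only used for
`q + q⁻¹ = 1`, and `q⁻¹` is written `1 - q`. -/
def twist (q : L) (x : Bool) : L :=
  if x then q else 1 - q

/-- The contribution of the point `i` to `spinWeight`: every arc is counted at its left end. -/
def arcFactor (q : L) {N : ℕ} (σ : Fin N → Fin N) (w : Fin N → Bool) (i : Fin N) : L :=
  if i < σ i then arcWeight q (w i) (w (σ i)) else 1

/-- The coefficient of the spin word `w` in the image of the link pattern `σ` in the spin basis. -/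
def spinWeight (q : L) {N : ℕ} (σ : Fin N → Fin N) (w : Fin N → Bool) : L :=
  ∏ i, arcFactor q σ w i

variable {q : L} {N n : ℕ}

theorem twist_mul_twist_not (hq : q ^ 2 - q + 1 = 0) (x : Bool) : twist q x * twist q (!x) = 1 := by
  cases x <;> grind [twist]

theorem arcWeight_eq_twist_mul (hq : q ^ 2 - q + 1 = 0) (x y : Bool) :
    arcWeight q x y = twist q x * arcWeight q y x := by
  cases x <;> cases y <;> grind [arcWeight, twist]

theorem arcWeight_loop (q : L) :
    arcWeight q true false + (1 - q) * arcWeight q false true = 1 := by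
  simp [arcWeight]

theorem arcWeight_zigzag (hq : q ^ 2 - q + 1 = 0) (x y : Bool) :
    arcWeight q true y * arcWeight q false x +
      (1 - q) * (arcWeight q false y * arcWeight q true x) = arcWeight q x y := by
  cases x <;> cases y <;> grind [arcWeight]

theorem isUnit_arcWeight (hq : q ^ 2 - q + 1 = 0) {x y : Bool} (h : x ≠ y) :
    IsUnit (arcWeight q x y) := by
  have : IsUnit q := IsUnit.of_mul_eq_one (1 - q) (by linear_combination -hq)
  cases x <;> cases y <;> simp_all [arcWeight]

theorem isUnit_spinWeight (hq : q ^ 2 - q + 1 = 0) {σ : Fin N → Fin N} {w : Fin N → Bool}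
    (h : ∀ i, w i ≠ w (σ i)) : IsUnit (spinWeight q σ w) := by
  refine IsUnit.prod_univ_iff.2 fun i => ?_
  unfold arcFactor
  split_ifs
  exacts [isUnit_arcWeight hq (h i), isUnit_one]

theorem ne_apply_of_spinWeight_ne_zero {σ : Fin N → Fin N} {w : Fin N → Bool}
    (hinv : Function.Involutive σ) (hfix : ∀ i, σ i ≠ i) (h : spinWeight q σ w ≠ 0) (i : Fin N) :
    w i ≠ w (σ i) := by
  have hleft (j : Fin N) (hj : j < σ j) : w j ≠ w (σ j) := fun hw =>
    h (prod_eq_zero (mem_univ j) (by simp [arcFactor, arcWeight, hj, hw]))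
  rcases (hfix i).lt_or_gt with hi | hi
  · simpa only [hinv i] using (hleft (σ i) (by rwa [hinv i])).symm
  · exact hleft i hi

theorem spinWeight_rotinvf [NeZero N] (hq : q ^ 2 - q + 1 = 0) {σ : Fin N → Fin N}
    (hinv : Function.Involutive σ) (h0 : σ 0 ≠ 0) (w : Fin N → Bool) :
    spinWeight q σ w = twist q (w 0) * spinWeight q (rotinvf N σ) fun i => w (i + 1) := by
  set g := fun i => arcFactor q (rotinvf N σ) (fun i => w (i + 1)) (i - 1) with hg
  have hreindex : spinWeight q (rotinvf N σ) (fun i => w (i + 1)) = ∏ i, g i :=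
    (Fintype.prod_equiv (Equiv.subRight 1) _ _ fun _ => rfl).symm
  have hg_apply (i : Fin N) :
      g i = if i - 1 < σ i - 1 then arcWeight q (w i) (w (σ i)) else 1 := by
    simp only [hg, arcFactor, rotinvf, sub_add_cancel]
  have hpos : 0 < σ 0 := (Fin.pos_iff_ne_zero' _).2 h0
  have hends : ∏ i ∈ {0, σ 0}, arcFactor q σ w i = twist q (w 0) * ∏ i ∈ {0, σ 0}, g i := by
    have hlt : σ 0 - 1 < 0 - 1 := by
      have := (σ 0).isLt
      rw [Fin.lt_def, Fin.val_zero] at hpos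
      rw [Fin.lt_def, fin_val_sub_one, fin_val_sub_one, Fin.val_zero, if_pos rfl, if_neg hpos.ne']
      omega
    rw [prod_pair h0.symm, prod_pair h0.symm, hg_apply, hg_apply, hinv, if_neg hlt.not_gt,
      if_pos hlt, arcFactor, arcFactor, hinv, if_pos hpos, if_neg hpos.not_gt, mul_one, one_mul,
      ← arcWeight_eq_twist_mul hq]
  have hrest : ∏ i ∈ {0, σ 0}ᶜ, arcFactor q σ w i = ∏ i ∈ {0, σ 0}ᶜ, g i := by
    refine prod_congr rfl fun i hi => ?_
    simp only [mem_compl, mem_insert, mem_singleton, not_or] at hi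
    have hσi : σ i ≠ 0 := fun h => hi.2 (by rw [← h, hinv])
    have hlt : i - 1 < σ i - 1 ↔ i < σ i := by
      have hi0 := Fin.val_ne_of_ne hi.1
      have hσi0 := Fin.val_ne_of_ne hσi
      rw [Fin.val_zero] at hi0 hσi0
      rw [Fin.lt_def, Fin.lt_def, fin_val_sub_one, fin_val_sub_one, if_neg hi0, if_neg hσi0]
      omega
    simp only [hg_apply, hlt, arcFactor]
  rw [hreindex, spinWeight, ← prod_mul_prod_compl {0, σ 0}, hends, hrest, mul_assoc,
    prod_mul_prod_compl]

/-- The word `w` with the spins at the first two points replaced by `a` and `b`. -/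
def replaceFirstTwo {N : ℕ} [NeZero N] (w : Fin N → Bool) (a b : Bool) : Fin N → Bool :=
  Function.update (Function.update w 0 a) 1 b

variable [NeZero (2 * n)] {π : Fin (2 * n) → Fin (2 * n)}

theorem spinWeight_loop (hinv : Function.Involutive π) (h : π 0 = 1) (w : Fin (2 * n) → Bool)
    (a b : Bool) :
    spinWeight q π (replaceFirstTwo w a b) =
      arcWeight q a b * ∏ i ∈ {0, 1}ᶜ, arcFactor q π w i := by
  have h01 := fin_zero_ne_one_two_mul (n := n)
  have h10 : π 1 = 0 := by rw [← h, hinv]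
  have hpos : (0 : Fin (2 * n)) < 1 := (Fin.pos_iff_ne_zero' _).2 h01.symm
  rw [spinWeight, ← prod_mul_prod_compl {0, 1}, prod_pair h01]
  congr 1
  · simp [arcFactor, replaceFirstTwo, h, h10, hpos, hpos.not_gt, h01]
  · refine prod_congr rfl fun i hi => ?_
    simp only [mem_compl, mem_insert, mem_singleton, not_or] at hi
    have hπ0 : π i ≠ 0 := fun h' => hi.2 (by rw [← h, ← h', hinv])
    have hπ1 : π i ≠ 1 := fun h' => hi.1 (by rw [← h10, ← h', hinv])
    simp [arcFactor, replaceFirstTwo, hi, hπ0, hπ1]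

theorem prod_eq_four_mul_prod_compl (hinv : Function.Involutive π) (hfix : ∀ i, π i ≠ i)
    (h : π 0 ≠ 1) (f : Fin (2 * n) → L) :
    ∏ i, f i = f 0 * f 1 * (f (π 1) * f (π 0)) * ∏ i ∈ {0, 1, π 1, π 0}ᶜ, f i := by
  have h01 := fin_zero_ne_one_two_mul (n := n)
  have hπ10 : π 1 ≠ 0 := fun h' => h (by rw [← h', hinv])
  have hπne : π 1 ≠ π 0 := hinv.injective.ne h01.symm
  have hmem1 : 1 ∉ ({π 1, π 0} : Finset (Fin (2 * n))) := by
    simp [(hfix 1).symm, Ne.symm h]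
  have hmem0 : 0 ∉ ({1, π 1, π 0} : Finset (Fin (2 * n))) := by
    simp [h01, hπ10.symm, (hfix 0).symm]
  rw [← prod_mul_prod_compl {0, 1, π 1, π 0}, prod_insert hmem0, prod_insert hmem1,
    prod_pair hπne, ← mul_assoc (f 0)]

theorem spinWeight_zigzag (hπ : IsLinkPattern n π) (h : π 0 ≠ 1) (w : Fin (2 * n) → Bool)
    (a b : Bool) :
    spinWeight q π (replaceFirstTwo w a b) =
      arcWeight q a (w (π 0)) * arcWeight q b (w (π 1)) *
        ∏ i ∈ {0, 1, π 1, π 0}ᶜ, arcFactor q π w i := by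
  have h01 := fin_zero_ne_one_two_mul (n := n)
  have hinv : ∀ i, π (π i) = i := hπ.involutive
  have hπ10 : π 1 ≠ 0 := fun h' => h (by rw [← h', hinv])
  have hlt0 : 0 < π 0 := (Fin.pos_iff_ne_zero' _).2 (hπ.apply_ne 0)
  have hlt1 : 1 < π 1 := by
    rw [Fin.lt_def, fin_val_one_two_mul]
    exact (hπ.one_lt_and_lt_of_ne h).1
  rw [spinWeight, prod_eq_four_mul_prod_compl hπ.involutive hπ.apply_ne h]
  congr 1
  · simp [arcFactor, replaceFirstTwo, hinv, h, hπ10, h01, hlt0, hlt1, hlt0.not_gt, hlt1.not_gt,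
      hπ.apply_ne 0, hπ.apply_ne 1]
  · refine prod_congr rfl fun i hi => ?_
    simp only [mem_compl, mem_insert, mem_singleton, not_or] at hi
    have hπ0 : π i ≠ 0 := fun h' => hi.2.2.2 (by rw [← h', hinv])
    have hπ1 : π i ≠ 1 := fun h' => hi.2.2.1 (by rw [← h', hinv])
    simp [arcFactor, replaceFirstTwo, hi, hπ0, hπ1]

theorem spinWeight_e1f_of_ne (hπ : IsLinkPattern n π) (h : π 0 ≠ 1) (w : Fin (2 * n) → Bool) :
    spinWeight q (e1f (2 * n) π) w =
      arcWeight q (w 0) (w 1) * arcWeight q (w (π 1)) (w (π 0)) *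
        ∏ i ∈ {0, 1, π 1, π 0}ᶜ, arcFactor q π w i := by
  have h01 := fin_zero_ne_one_two_mul (n := n)
  have hπ10 : π 1 ≠ 0 := fun h' => h (by rw [← h', hπ.involutive])
  have hπne : π 1 ≠ π 0 := hπ.involutive.injective.ne h01.symm
  have hpos : (0 : Fin (2 * n)) < 1 := (Fin.pos_iff_ne_zero' _).2 h01.symm
  have hlt : π 1 < π 0 := (hπ.one_lt_and_lt_of_ne h).2
  rw [spinWeight, prod_eq_four_mul_prod_compl hπ.involutive hπ.apply_ne h]
  congr 1
  · simp [arcFactor, e1f, h01.symm, hπ10, h, hπne, hpos, hlt, hpos.not_gt, hlt.not_gt,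
      hπ.apply_ne 0, hπ.apply_ne 1]
  · refine prod_congr rfl fun i hi => ?_
    simp only [mem_compl, mem_insert, mem_singleton, not_or] at hi
    simp [arcFactor, e1f, hi]

theorem spinWeight_e1f (hq : q ^ 2 - q + 1 = 0) (hπ : IsLinkPattern n π) (w : Fin (2 * n) → Bool) :
    spinWeight q (e1f (2 * n) π) w = arcWeight q (w 0) (w 1) *
      (spinWeight q π (replaceFirstTwo w true false) +
        (1 - q) * spinWeight q π (replaceFirstTwo w false true)) := by
  by_cases h : π 0 = 1
  · have hw : replaceFirstTwo w (w 0) (w 1) = w := by simp [replaceFirstTwo]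
    conv_lhs => rw [hπ.e1f_eq_self h, ← hw]
    simp only [spinWeight_loop hπ.involutive h]
    linear_combination -(arcWeight q (w 0) (w 1) * ∏ i ∈ {0, 1}ᶜ, arcFactor q π w i) *
      arcWeight_loop q
  · rw [spinWeight_e1f_of_ne hπ h, spinWeight_zigzag hπ h, spinWeight_zigzag hπ h]
    linear_combination -(arcWeight q (w 0) (w 1) *
      ∏ i ∈ {0, 1, π 1, π 0}ᶜ, arcFactor q π w i) * arcWeight_zigzag hq (w (π 1)) (w (π 0))

end SpinWeights

section Openers

/-- The word of a link pattern with spin up exactly at the left ends of the arcs. -/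
def openers {N : ℕ} (σ : Fin N → Fin N) (i : Fin N) : Bool :=
  decide (i < σ i)

section Involutive

variable {N : ℕ} {σ : Fin N → Fin N} {w : Fin N → Bool}

theorem openers_ne_apply (hinv : Function.Involutive σ) (hfix : ∀ i, σ i ≠ i) (i : Fin N) :
    openers σ i ≠ openers σ (σ i) := by
  simp only [openers, hinv i, ne_eq, decide_eq_decide]
  rcases (hfix i).lt_or_gt with h | h <;> simp [h, h.le]

theorem toLex_le_openers (hinv : Function.Involutive σ) (hw : ∀ i, w i ≠ w (σ i)) :
    toLex w ≤ toLex (openers σ) := by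
  by_contra! ⟨i, hbefore, hi⟩
  obtain ⟨hopen, hwi⟩ : openers σ i = false ∧ w i = true := Bool.lt_iff.1 hi
  have hfix : σ i ≠ i := fun h => hw i (by rw [h])
  have hlt : σ i < i := lt_of_le_of_ne (not_lt.1 (of_decide_eq_false hopen)) hfix
  have hpartner : openers σ (σ i) = w (σ i) := hbefore (σ i) hlt
  exact hw i (by rw [hwi, ← hpartner, openers, hinv, decide_eq_true hlt])

theorem two_mul_card_filter_true (hinv : Function.Involutive σ) (hw : ∀ i, w i ≠ w (σ i)) :
    2 * #{i | w i = true} = N := by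
  have hswap : #{i | w i = true} = #{i | ¬ w i = true} := by
    refine card_nbij' σ σ (fun i hi => ?_) (fun i hi => ?_) (fun i _ => hinv i) fun i _ => hinv i
    all_goals
      have := hw i
      simp_all
  have hadd := card_filter_add_card_filter_not (s := univ) fun i => w i = true
  rw [card_univ, Fintype.card_fin] at hadd
  omega

end Involutive

namespace IsLinkPattern

variable {n : ℕ} {σ π : Fin (2 * n) → Fin (2 * n)}

theorem not_apply_lt_apply (hσ : IsLinkPattern n σ) (hπ : IsLinkPattern n π)
    (hopen : ∀ i, i < σ i ↔ i < π i) {i : Fin (2 * n)} (hi : i < σ i)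
    (hagree : ∀ j, i < j → j < π j → σ j = π j) : ¬ σ i < π i := by
  intro hlt
  set j := σ i with hj
  have hσj : σ j = i := hσ.involutive i
  have hπj : π j < j :=
    lt_of_le_of_ne (not_lt.1 fun h => hi.not_gt (by simpa only [hσj] using (hopen j).2 h))
      (hπ.apply_ne j)
  have hne : π j ≠ i := fun h => hlt.ne (by rw [← h, hπ.involutive])
  have hgt : i < π j := by
    have hcross := hπ.not_crossing (π j) i
    rw [hπ.involutive] at hcross
    exact lt_of_le_of_ne (not_lt.1 fun h => hcross ⟨h, hi, hlt⟩) hne.symm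
  have hσπ : σ (π j) = j := by
    rw [hagree (π j) hgt (by rwa [hπ.involutive]), hπ.involutive]
  exact hne (hσ.involutive.injective (hσπ.trans hj))

theorem eq_of_openers_eq (hσ : IsLinkPattern n σ) (hπ : IsLinkPattern n π)
    (h : openers σ = openers π) : σ = π := by
  have hopen (i : Fin (2 * n)) : i < σ i ↔ i < π i := by
    simpa only [openers, decide_eq_decide] using congrFun h i
  have hleft (i : Fin (2 * n)) (hi : i < σ i) : σ i = π i := by
    induction i using WellFoundedGT.induction with
    | ind i ih =>
      have hσπ := not_apply_lt_apply hσ hπ hopen hi fun j hij hj => ih j hij ((hopen j).2 hj)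
      have hπσ := not_apply_lt_apply hπ hσ (fun j => (hopen j).symm) ((hopen i).1 hi)
        fun j hij hj => (ih j hij hj).symm
      exact le_antisymm (not_lt.1 hπσ) (not_lt.1 hσπ)
  funext i
  rcases (hσ.apply_ne i).lt_or_gt with hi | hi
  · have hright := hleft (σ i) (by rwa [hσ.involutive])
    rw [hσ.involutive] at hright
    rw [hright, hπ.involutive, ← hright]
  · exact hleft i hi

end IsLinkPattern

end Openers

section SpinComponents

variable {K L : Type*} [CommRing K] [CommRing L] {n : ℕ} {q : L}

/-- The link patterns on `2n` points as a finite set. -/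
def linkPatterns (n : ℕ) : Finset (Fin (2 * n) → Fin (2 * n)) :=
  {σ | IsLinkPattern n σ}

theorem mem_linkPatterns {σ : Fin (2 * n) → Fin (2 * n)} :
    σ ∈ linkPatterns n ↔ IsLinkPattern n σ :=
  mem_filter_univ σ

/-- The coefficient of the spin word `w` in the image of `Ψ` in the spin basis. -/
noncomputable def spinComponent (q : L) (Ψ : (Fin (2 * n) → Fin (2 * n)) → L[X])
    (w : Fin (2 * n) → Bool) : L[X] :=
  ∑ σ ∈ linkPatterns n, C (spinWeight q σ w) * Ψ σ

theorem natDegree_spinComponent_le {Ψ : (Fin (2 * n) → Fin (2 * n)) → L[X]} {d : ℕ}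
    (hd : ∀ σ, IsLinkPattern n σ → (Ψ σ).natDegree ≤ d) (w : Fin (2 * n) → Bool) :
    (spinComponent q Ψ w).natDegree ≤ d :=
  natDegree_sum_le_of_forall_le _ _ fun σ hσ =>
    (natDegree_C_mul_le _ _).trans (hd σ (mem_linkPatterns.1 hσ))

theorem card_filter_true_of_spinComponent_ne_zero {Ψ : (Fin (2 * n) → Fin (2 * n)) → L[X]}
    {w : Fin (2 * n) → Bool} (h : spinComponent q Ψ w ≠ 0) : #{i | w i = true} = n := by
  obtain ⟨σ, hσ, hne⟩ := exists_ne_zero_of_sum_ne_zero h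
  rw [mem_linkPatterns] at hσ
  have hweight : spinWeight q σ w ≠ 0 := fun h0 => hne (by rw [h0, C_0, zero_mul])
  exact Nat.mul_left_cancel two_pos (two_mul_card_filter_true hσ.involutive
    (ne_apply_of_spinWeight_ne_zero hσ.involutive hσ.apply_ne hweight))

theorem eq_zero_of_spinComponent_eq_zero (hq : q ^ 2 - q + 1 = 0)
    {Ψ : (Fin (2 * n) → Fin (2 * n)) → L[X]} (h : ∀ w, spinComponent q Ψ w = 0)
    {σ : Fin (2 * n) → Fin (2 * n)} (hσ : IsLinkPattern n σ) : Ψ σ = 0 := by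
  classical
  by_contra hne
  obtain ⟨τ, hτ, hmax⟩ := exists_max_image {π ∈ linkPatterns n | Ψ π ≠ 0}
    (fun π => toLex (openers π)) ⟨σ, mem_filter.2 ⟨mem_linkPatterns.2 hσ, hne⟩⟩
  obtain ⟨hτmem, hτne⟩ := mem_filter.1 hτ
  have hτpat := mem_linkPatterns.1 hτmem
  have hsingle : spinComponent q Ψ (openers τ) = C (spinWeight q τ (openers τ)) * Ψ τ := by
    refine sum_eq_single_of_mem τ hτmem fun π hπ hπτ => by_contra fun hterm => hπτ ?_
    have hweight : spinWeight q π (openers τ) ≠ 0 := fun h0 => hterm (by rw [h0, C_0, zero_mul])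
    have hΨπ : Ψ π ≠ 0 := fun h0 => hterm (by rw [h0, mul_zero])
    have hπpat := mem_linkPatterns.1 hπ
    have hle := toLex_le_openers hπpat.involutive
      (ne_apply_of_spinWeight_ne_zero hπpat.involutive hπpat.apply_ne hweight)
    exact hπpat.eq_of_openers_eq hτpat
      (toLex_inj.1 (le_antisymm (hmax π (mem_filter.2 ⟨hπ, hΨπ⟩)) hle))
  have hunit : IsUnit (C (spinWeight q τ (openers τ)) : L[X]) :=
    (isUnit_spinWeight hq (openers_ne_apply hτpat.involutive hτpat.apply_ne)).map C
  rw [h, eq_comm, hunit.mul_right_eq_zero] at hsingle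
  exact hτne hsingle

variable [NeZero (2 * n)]

/-- The scattering equation `X₁(t)Ψ = RΨ` in coordinates; the sum is the component of `e₁Ψ` at
`σ`. -/
def IsScatteringSolution (n : ℕ) [NeZero (2 * n)]
    (Ψ : (Fin (2 * n) → Fin (2 * n)) → K[X]) : Prop :=
  ∀ σ, IsLinkPattern n σ →
    X * Ψ σ + (1 - X) * ∑ π with IsLinkPattern n π ∧ e1f (2 * n) π = σ, Ψ π =
      Ψ (rotinvf (2 * n) σ)

theorem IsScatteringSolution.map {Ψ : (Fin (2 * n) → Fin (2 * n)) → K[X]}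
    (hΨ : IsScatteringSolution n Ψ) (f : K →+* L) :
    IsScatteringSolution n fun σ => (Ψ σ).map f := by
  intro σ hσ
  simpa [Polynomial.map_sum] using congrArg (Polynomial.map f) (hΨ σ hσ)

variable {Ψ : (Fin (2 * n) → Fin (2 * n)) → L[X]}

theorem sum_mul_sum_e1f_eq (hq : q ^ 2 - q + 1 = 0) (Ψ : (Fin (2 * n) → Fin (2 * n)) → L[X])
    (w : Fin (2 * n) → Bool) :
    ∑ σ ∈ linkPatterns n, C (spinWeight q σ w) *
        ∑ π with IsLinkPattern n π ∧ e1f (2 * n) π = σ, Ψ π =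
      C (arcWeight q (w 0) (w 1)) *
        (spinComponent q Ψ (replaceFirstTwo w true false) +
          C (1 - q) * spinComponent q Ψ (replaceFirstTwo w false true)) := by
  have hmaps : ∀ π ∈ linkPatterns n, e1f (2 * n) π ∈ linkPatterns n := fun π hπ =>
    mem_linkPatterns.2 (mem_linkPatterns.1 hπ).e1f
  calc
    _ = ∑ σ ∈ linkPatterns n, ∑ π ∈ linkPatterns n with e1f (2 * n) π = σ,
          C (spinWeight q (e1f (2 * n) π) w) * Ψ π := by
      refine sum_congr rfl fun σ _ => ?_
      rw [linkPatterns, filter_filter, mul_sum]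
      exact sum_congr rfl fun π hπ => by rw [(mem_filter.1 hπ).2.2]
    _ = ∑ π ∈ linkPatterns n, C (spinWeight q (e1f (2 * n) π) w) * Ψ π :=
      sum_fiberwise_of_maps_to hmaps _
    _ = _ := by
      simp only [spinComponent, mul_sum, ← sum_add_distrib]
      refine sum_congr rfl fun π hπ => ?_
      rw [spinWeight_e1f hq (mem_linkPatterns.1 hπ)]
      simp only [C_mul, C_add]
      ring

theorem sum_mul_rotinvf_eq (hq : q ^ 2 - q + 1 = 0) (Ψ : (Fin (2 * n) → Fin (2 * n)) → L[X])
    (w : Fin (2 * n) → Bool) :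
    ∑ σ ∈ linkPatterns n, C (spinWeight q σ w) * Ψ (rotinvf (2 * n) σ) =
      C (twist q (w 0)) * spinComponent q Ψ fun i => w (i + 1) := by
  have himage : (linkPatterns n).image (rotinvf (2 * n)) = linkPatterns n :=
    eq_of_subset_of_card_le
      (image_subset_iff.2 fun σ hσ => mem_linkPatterns.2 (mem_linkPatterns.1 hσ).rotinvf)
      (card_image_of_injective _ rotinvf_injective).ge
  have hreindex := sum_image (s := linkPatterns n)
    (f := fun σ => C (spinWeight q σ fun i => w (i + 1)) * Ψ σ) rotinvf_injective.injOn
  rw [himage] at hreindex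
  rw [spinComponent, hreindex, mul_sum]
  refine sum_congr rfl fun σ hσ => ?_
  have hσ := mem_linkPatterns.1 hσ
  rw [spinWeight_rotinvf hq hσ.involutive (hσ.apply_ne 0), C_mul, mul_assoc]

theorem IsScatteringSolution.spinComponent_eq (hΨ : IsScatteringSolution n Ψ)
    (hq : q ^ 2 - q + 1 = 0) (w : Fin (2 * n) → Bool) :
    X * spinComponent q Ψ w + (1 - X) * (C (arcWeight q (w 0) (w 1)) *
        (spinComponent q Ψ (replaceFirstTwo w true false) +
          C (1 - q) * spinComponent q Ψ (replaceFirstTwo w false true))) =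
      C (twist q (w 0)) * spinComponent q Ψ fun i => w (i + 1) := by
  rw [← sum_mul_sum_e1f_eq hq, ← sum_mul_rotinvf_eq hq, spinComponent, mul_sum, mul_sum,
    ← sum_add_distrib]
  refine sum_congr rfl fun σ hσ => ?_
  rw [← hΨ σ (mem_linkPatterns.1 hσ)]
  ring

end SpinComponents

section SpinRecursion

variable {L : Type*} [CommRing L]

/-- The scattering system in the spin basis, for polynomials `ψ` indexed by words of length `N`. The
first letter of a word is a particle that meets the second letter; the letter left behind moves to
the end, so that a word `s ++ w` has `w` as the letters already met. -/
def IsSpinSolution (q : L) (N : ℕ) (ψ : List Bool → L[X]) : Prop :=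
  ∀ (x y : Bool) (l : List Bool), l.length + 2 = N →
    X * ψ (x :: y :: l) + (1 - X) * (C (arcWeight q x y) *
        (ψ (true :: false :: l) + C (1 - q) * ψ (false :: true :: l))) =
      C (twist q x) * ψ (y :: (l ++ [x]))

variable {q : L} {N : ℕ} {ψ : List Bool → L[X]}

theorem C_mul_C_one_sub (hq : q ^ 2 - q + 1 = 0) : (C q * C (1 - q) : L[X]) = 1 := by
  rw [← C_mul, ← C_1]
  congr 1
  linear_combination -hq

namespace IsSpinSolution

theorem eq_C_mul_X_mul (hψ : IsSpinSolution q N ψ) (hq : q ^ 2 - q + 1 = 0) (x : Bool)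
    {l : List Bool} (hl : l.length + 2 = N) :
    ψ (x :: (l ++ [x])) = C (twist q !x) * (X * ψ (x :: x :: l)) := by
  have h := hψ x x l hl
  simp only [arcWeight, if_true, C_0, zero_mul, mul_zero, add_zero] at h
  rw [h, ← mul_assoc, ← C_mul, mul_comm (twist q !x), twist_mul_twist_not hq, C_1, one_mul]

theorem up_append_down (hψ : IsSpinSolution q N ψ) (hq : q ^ 2 - q + 1 = 0)
    {l : List Bool} (hl : l.length + 2 = N) :
    ψ (true :: (l ++ [false])) =
      C q * ((1 - X) * ψ (true :: false :: l)) +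
        (C q * X + (1 - X)) * ψ (false :: true :: l) := by
  have h := hψ false true l hl
  simp only [arcWeight, twist, Bool.false_eq_true, if_false, C_1, one_mul] at h
  linear_combination -ψ (true :: (l ++ [false])) * C_mul_C_one_sub hq - C q * h
    + (1 - X) * ψ (false :: true :: l) * C_mul_C_one_sub hq

theorem mul_down_append_up_sub (hψ : IsSpinSolution q N ψ) (hq : q ^ 2 - q + 1 = 0)
    {l : List Bool} (hl : l.length + 2 = N) :
    C q * ψ (false :: (l ++ [true])) - ψ (true :: (l ++ [false])) =
      X * (ψ (true :: false :: l) - C q * ψ (false :: true :: l)) := by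
  have hup := hψ.up_append_down hq hl
  have hdown := hψ true false l hl
  simp only [arcWeight, twist, Bool.true_eq_false, if_true, if_false] at hdown
  linear_combination -hdown - hup + (1 - X) * ψ (false :: true :: l) * C_mul_C_one_sub hq

variable {w : List Bool} {k : ℕ}

theorem pow_dvd_append_down (hψ : IsSpinSolution q N ψ) (hq : q ^ 2 - q + 1 = 0) {m : ℕ}
    (hk : w.length + (k + 2) = N) (hw : ∀ s : List Bool, s.length = k + 2 → X ^ m ∣ ψ (s ++ w))
    {s : List Bool} (hs : s.length = k + 1) : X ^ m ∣ ψ (s ++ (w ++ [false])) := by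
  obtain ⟨y, s, rfl⟩ := List.exists_cons_of_length_eq_add_one hs
  have hs : s.length = k := by simpa using hs
  have hl : (s ++ w).length + 2 = N := by simp only [List.length_append]; omega
  have hdvd (x y : Bool) : X ^ m ∣ ψ (x :: y :: (s ++ w)) := hw (x :: y :: s) (by simp [hs])
  rw [List.cons_append, ← List.append_assoc]
  cases y
  · rw [hψ.eq_C_mul_X_mul hq false hl]
    exact ((hdvd _ _).mul_left _).mul_left _
  · rw [hψ.up_append_down hq hl]
    exact (((hdvd _ _).mul_left _).mul_left _).add ((hdvd _ _).mul_left _)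

theorem pow_succ_dvd_append_up (hψ : IsSpinSolution q N ψ) (hq : q ^ 2 - q + 1 = 0) {m : ℕ}
    (hk : w.length + (k + 2) = N) (hw : ∀ s : List Bool, s.length = k + 2 → X ^ m ∣ ψ (s ++ w))
    (hdown : ∀ s : List Bool, s.length = k + 1 → ψ (s ++ (w ++ [false])) = 0)
    {s : List Bool} (hs : s.length = k + 1) : X ^ (m + 1) ∣ ψ (s ++ (w ++ [true])) := by
  obtain ⟨y, s, rfl⟩ := List.exists_cons_of_length_eq_add_one hs
  have hs' : s.length = k := by simpa using hs
  have hl : (s ++ w).length + 2 = N := by simp only [List.length_append]; omega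
  have hdvd (x y : Bool) : X ^ m ∣ ψ (x :: y :: (s ++ w)) := hw (x :: y :: s) (by simp [hs'])
  rw [List.cons_append, ← List.append_assoc, pow_succ']
  cases y
  · have hzero : ψ (true :: (s ++ w ++ [false])) = 0 := by
      simpa using hdown (true :: s) (by simpa using hs')
    have hmul := hψ.mul_down_append_up_sub hq hl
    rw [hzero, sub_zero] at hmul
    have hunit : IsUnit (C q : L[X]) := IsUnit.of_mul_eq_one _ (C_mul_C_one_sub hq)
    rw [← hunit.dvd_mul_left, hmul]
    exact mul_dvd_mul_left _ ((hdvd _ _).sub ((hdvd _ _).mul_left _))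
  · rw [hψ.eq_C_mul_X_mul hq true hl]
    exact (mul_dvd_mul_left _ (hdvd _ _)).mul_left _

theorem eq_zero_of_append_eq_zero (hψ : IsSpinSolution q N ψ) (hq : q ^ 2 - q + 1 = 0)
    (hk : w.length + (k + 2) = N)
    (hzero : ∀ (x : Bool) (s : List Bool), s.length = k + 1 → ψ (s ++ (w ++ [x])) = 0)
    {s : List Bool} (hs : s.length = k + 2) : ψ (s ++ w) = 0 := by
  obtain ⟨x, s, rfl⟩ := List.exists_cons_of_length_eq_add_one hs
  obtain ⟨y, s, rfl⟩ := List.exists_cons_of_length_eq_add_one (by simpa using hs)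
  have hs : s.length = k := by simpa using hs
  have hl : (s ++ w).length + 2 = N := by simp only [List.length_append]; omega
  have hback (x y : Bool) : ψ (y :: (s ++ w ++ [x])) = 0 := by
    simpa using hzero x (y :: s) (by simpa using hs)
  have hup := hψ.up_append_down hq hl
  have hmul := hψ.mul_down_append_up_sub hq hl
  rw [hback] at hup hmul
  rw [hback, mul_zero, sub_zero, eq_comm, isRegular_X.left.mul_left_eq_zero_iff] at hmul
  have hsq : (C q ^ 2 - C q + 1 : L[X]) = 0 := by
    rw [← C_pow, ← C_sub, ← C_1, ← C_add, hq, C_0]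
  have hdu : ψ (false :: true :: (s ++ w)) = 0 := by
    linear_combination -C (1 - q) * hup - C (1 - q) * C q * (1 - X) * hmul
      - C (1 - q) * (1 - X) * ψ (false :: true :: (s ++ w)) * hsq
      - ψ (false :: true :: (s ++ w)) * C_mul_C_one_sub hq
  have hud : ψ (true :: false :: (s ++ w)) = 0 := by rwa [hdu, mul_zero, sub_zero] at hmul
  have hsame : ψ (x :: x :: (s ++ w)) = 0 := by
    have h := hψ x x _ hl
    rw [hback] at h
    simpa [arcWeight, isRegular_X.left.mul_left_eq_zero_iff] using h
  cases x <;> cases y <;> assumption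

theorem eq_zero_of_pow_count_dvd (hψ : IsSpinSolution q N ψ) (hq : q ^ 2 - q + 1 = 0)
    (hdeg : ∀ s : List Bool, s.length = N → ψ s ≠ 0 → (ψ s).natDegree + 1 < s.count true) :
    ∀ (k : ℕ) (w : List Bool), w.length + (k + 1) = N →
      (∀ s : List Bool, s.length = k + 1 → X ^ w.count true ∣ ψ (s ++ w)) →
      ∀ s : List Bool, s.length = k + 1 → ψ (s ++ w) = 0 := by
  intro k
  induction k with
  | zero =>
    intro w hk hw s hs
    by_contra hne
    have hlt := hdeg (s ++ w) (by simp only [List.length_append]; omega) hne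
    have hcount : s.count true ≤ s.length := List.count_le_length
    rw [List.count_append] at hlt
    exact hne (leadingCoeff_eq_zero.1 (X_pow_dvd_iff.1 (hw s hs) _ (by omega)))
  | succ k ih =>
    intro w hk hw s hs
    have hlen (x : Bool) : (w ++ [x]).length + (k + 1) = N := by simp; omega
    have hdown : ∀ s : List Bool, s.length = k + 1 → ψ (s ++ (w ++ [false])) = 0 :=
      ih _ (hlen false) fun s hs => by simpa using hψ.pow_dvd_append_down hq hk hw hs
    have hup : ∀ s : List Bool, s.length = k + 1 → ψ (s ++ (w ++ [true])) = 0 :=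
      ih _ (hlen true) fun s hs => by simpa using hψ.pow_succ_dvd_append_up hq hk hw hdown hs
    exact hψ.eq_zero_of_append_eq_zero hq hk (Bool.rec hdown hup) hs

theorem eq_zero (hψ : IsSpinSolution q N ψ) (hq : q ^ 2 - q + 1 = 0) (hN : N ≠ 0)
    (hdeg : ∀ s : List Bool, s.length = N → ψ s ≠ 0 → (ψ s).natDegree + 1 < s.count true)
    {s : List Bool} (hs : s.length = N) : ψ s = 0 := by
  obtain ⟨k, rfl⟩ := Nat.exists_eq_add_one_of_ne_zero hN
  simpa using hψ.eq_zero_of_pow_count_dvd hq hdeg k [] (by simp) (by simp) s hs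

end IsSpinSolution

end SpinRecursion

section LowDegree

variable {L : Type*} [CommRing L] {q : L} {n : ℕ}

/-- The word on `N` points spelled by the list `s`, extended by spins down if `s` is too short. -/
def listWord (N : ℕ) (s : List Bool) (i : Fin N) : Bool :=
  s.getD i false

theorem listWord_ofFn {N : ℕ} (w : Fin N → Bool) : listWord N (List.ofFn w) = w := by
  funext i
  simp [listWord]

theorem count_true_eq_card_filter_listWord {N : ℕ} {s : List Bool} (hs : s.length = N) :
    s.count true = #{i | listWord N s i = true} := by
  refine (Fin.card_filter_univ_eq_vector_get_eq_count true
    (⟨s, hs⟩ : List.Vector Bool N)).symm.trans ?_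
  exact congrArg card (filter_congr fun i _ => by simp [listWord, List.Vector.get, hs])

variable [NeZero (2 * n)]

theorem listWord_cons_cons_one (x y : Bool) (l : List Bool) :
    listWord (2 * n) (x :: y :: l) 1 = y := by
  rw [listWord, fin_val_one_two_mul]
  rfl

theorem replaceFirstTwo_listWord (x y a b : Bool) (l : List Bool) :
    replaceFirstTwo (listWord (2 * n) (x :: y :: l)) a b = listWord (2 * n) (a :: b :: l) := by
  funext i
  unfold replaceFirstTwo
  rcases eq_or_ne i 1 with rfl | h1
  · rw [Function.update_self, listWord_cons_cons_one]
  rw [Function.update_of_ne h1]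
  rcases eq_or_ne i 0 with rfl | h0
  · simp [listWord]
  rw [Function.update_of_ne h0]
  obtain ⟨k, hk⟩ : ∃ k, (i : ℕ) = k + 2 := by
    have h0 := Fin.val_ne_of_ne h0
    have h1 := Fin.val_ne_of_ne h1
    rw [Fin.val_zero] at h0
    rw [fin_val_one_two_mul] at h1
    exact ⟨i - 2, by omega⟩
  simp [listWord, hk]

theorem listWord_cons_add_one {x : Bool} {l : List Bool} (hl : l.length + 1 = 2 * n)
    (i : Fin (2 * n)) : listWord (2 * n) (x :: l) (i + 1) = listWord (2 * n) (l ++ [x]) i := by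
  unfold listWord
  rw [fin_val_add_one_two_mul]
  split_ifs with h
  · have hi : (i : ℕ) = l.length := by omega
    simp [hi]
  · rw [List.getD_cons_succ, List.getD_append _ _ _ _ (by omega)]

theorem IsScatteringSolution.isSpinSolution {Ψ : (Fin (2 * n) → Fin (2 * n)) → L[X]}
    (hΨ : IsScatteringSolution n Ψ) (hq : q ^ 2 - q + 1 = 0) :
    IsSpinSolution q (2 * n) fun s => spinComponent q Ψ (listWord (2 * n) s) := by
  intro x y l hl
  have h := hΨ.spinComponent_eq hq (listWord (2 * n) (x :: y :: l))
  have hrot : (fun i => listWord (2 * n) (x :: y :: l) (i + 1)) =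
      listWord (2 * n) (y :: (l ++ [x])) :=
    funext (listWord_cons_add_one (by simpa using hl))
  rwa [replaceFirstTwo_listWord, replaceFirstTwo_listWord, listWord_cons_cons_one, hrot] at h

theorem IsScatteringSolution.eq_zero_of_natDegree_le {Ψ : (Fin (2 * n) → Fin (2 * n)) → L[X]}
    (hΨ : IsScatteringSolution n Ψ) (hq : q ^ 2 - q + 1 = 0) {d : ℕ} (hdn : d + 1 < n)
    (hd : ∀ σ, IsLinkPattern n σ → (Ψ σ).natDegree ≤ d) {σ : Fin (2 * n) → Fin (2 * n)}
    (hσ : IsLinkPattern n σ) : Ψ σ = 0 := by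
  refine eq_zero_of_spinComponent_eq_zero hq (fun w => ?_) hσ
  rw [← listWord_ofFn w]
  refine (hΨ.isSpinSolution hq).eq_zero hq (NeZero.ne _) (fun s hs hne => ?_) (List.length_ofFn ..)
  rw [count_true_eq_card_filter_listWord hs, card_filter_true_of_spinComponent_ne_zero hne]
  have := natDegree_spinComponent_le (q := q) hd (listWord (2 * n) s)
  omega

end LowDegree

theorem scattering_degree_lower_bound_general {K : Type*} [CommRing K] {n : ℕ} [NeZero (2 * n)]
    {Ψ : (Fin (2 * n) → Fin (2 * n)) → K[X]} (hΨ : IsScatteringSolution n Ψ)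
    (hne : ∃ f, IsLinkPattern n f ∧ Ψ f ≠ 0) :
    ∃ f, IsLinkPattern n f ∧ n - 1 ≤ (Ψ f).natDegree := by
  obtain ⟨σ, hσ, hΨσ⟩ := hne
  by_contra! hsmall
  have hn : n - 2 + 1 < n := by
    have := hsmall σ hσ
    omega
  let L := QuadraticAlgebra K (-1) 1
  let q : L := QuadraticAlgebra.omega
  have hq : q ^ 2 - q + 1 = 0 := by
    rw [sq, QuadraticAlgebra.omega_mul_omega_eq_add, neg_one_smul, one_smul]
    ring
  have hdeg (π) (hπ : IsLinkPattern n π) : ((Ψ π).map (algebraMap K L)).natDegree ≤ n - 2 :=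
    natDegree_map_le.trans (by have := hsmall π hπ; omega)
  have hzero := (hΨ.map (algebraMap K L)).eq_zero_of_natDegree_le hq hn hdeg hσ
  exact hΨσ ((Polynomial.map_eq_zero_iff QuadraticAlgebra.algebraMap_injective).1 hzero)

/-- **Degree lower bound for polynomial solutions of the scattering equation.**
Any polynomial solution `Ψ(t)` of `X₁(t)Ψ(t) = RΨ(t)` on the span of link
patterns `LP(2n)`, not all of whose components vanish, has some component of
degree at least `n − 1` in `t`. -/
theorem scattering_degree_lower_bound {K : Type*} [Field K] (n : ℕ) [NeZero (2 * n)]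
    (Ψ : (Fin (2 * n) → Fin (2 * n)) → Polynomial K)
    (heq : ∀ σ, IsLinkPattern n σ →
      Polynomial.X * Ψ σ +
          (1 - Polynomial.X) *
            ∑ π ∈ Finset.univ.filter
                (fun π => IsLinkPattern n π ∧ e1f (2 * n) π = σ), Ψ π
        = Ψ (rotinvf (2 * n) σ))
    (hne : ∃ f, IsLinkPattern n f ∧ Ψ f ≠ 0) :
    ∃ f, IsLinkPattern n f ∧ n - 1 ≤ (Ψ f).natDegree :=
  scattering_degree_lower_bound_general heq hne
end

section
/- The total number of n×n alternating sign matrices (equivalently, fully-packed loop configurations on the n×n square with alternating boundary conditions and fixed boundary coloring) is ∏_{j=0}^{n-1} (3j+1)!/(n+j)!. -/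
open Finset

/-- An alternating sign matrix of size `n`: entries in `{−1, 0, 1}`, every row
and column sums to `1`, and the nonzero entries alternate in sign along each
row and column (equivalently, all partial row and column sums are `0` or `1`). -/
def IsASM (n : ℕ) (A : Matrix (Fin n) (Fin n) ℤ) : Prop :=
  (∀ i j, A i j = -1 ∨ A i j = 0 ∨ A i j = 1) ∧
  (∀ i, ∑ j, A i j = 1) ∧
  (∀ j, ∑ i, A i j = 1) ∧
  (∀ i k, (∑ j ∈ Finset.univ.filter (fun j => j ≤ k), A i j) = 0 ∨
          (∑ j ∈ Finset.univ.filter (fun j => j ≤ k), A i j) = 1) ∧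
  (∀ j k, (∑ i ∈ Finset.univ.filter (fun i => i ≤ k), A i j) = 0 ∨
          (∑ i ∈ Finset.univ.filter (fun i => i ≤ k), A i j) = 1)

/-!
Alternating sign matrices are the states of the six-vertex model with domain wall boundary: the
horizontal and vertical edge states are the partial sums along rows and columns. Give row `i` a
variable `x i` and column `j` a variable `y j`, with weights `x - ω y`, `y - ω x` and `1 - ω` where
`ω` is a primitive cube root of unity; when all variables are `1`, every vertex has weight `1 - ω`,
so the partition function `Z` counts the matrices.

For this `ω`, `Z` is a Schur function of all `2n` variables together: `Z` times their Vandermonde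
determinant is a constant times the alternant with exponents `0, 1, 3, 4, 6, 7, …`. By induction on
`n`, view the difference of the two sides as a polynomial in `y 0`. Its degree is at most `3n - 2`,
and it vanishes at the other `2n - 1` variables, where both alternants do, and at the `n` points
`ω² x i`. At `y 0 = ω² x 0` the corner vertex is frozen, so `Z` reduces to size `n - 1`; since
`(ω² x 0)³ = (x 0)³`, so does the alternant. The other `i` follow from the symmetry of `Z` in `x`,
a consequence of the Yang–Baxter equation.

Substituting successive powers of `q` for the variables turns both alternants into Vandermonde
determinants of `q`-integers, up to the same power of `q - 1`, and `q = 1` gives the count.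
-/

namespace SixVertex

open Polynomial
open scoped Kronecker

variable {R : Type*} [CommRing R]

/-- The six-vertex weights at the crossing of a row with variable `x` and a column with variable
`y`, as a matrix in the states of the left and right edges for given states `b` above and `c` below.
The two flipping weights are `1 - ω` and `(1 - ω) * (x * y)` rather than equal, which keeps all
weights polynomial. -/
def vertex (ω x y : R) (b c : Bool) : Matrix Bool Bool R := Matrix.of fun h m =>
  match h, m, b, c with
  | false, false, false, false => x - ω * y
  | true, true, true, true => x - ω * y
  | false, false, true, true => y - ω * x
  | true, true, false, false => y - ω * x
  | false, true, false, true => 1 - ω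
  | true, false, true, false => (1 - ω) * (x * y)
  | _, _, _, _ => 0

/-- The `R`-matrix, of six-vertex type itself, which exchanges two rows with variables `x` and `x'`
in the Yang–Baxter equation. -/
def rMatrix (ω x x' : R) : Matrix (Bool × Bool) (Bool × Bool) R := Matrix.of fun h m =>
  match h, m with
  | (false, false), (false, false) => x' - ω ^ 2 * x
  | (true, true), (true, true) => x' - ω ^ 2 * x
  | (false, true), (false, true) => x * (1 - ω ^ 2)
  | (true, false), (true, false) => x' * (1 - ω ^ 2)
  | (false, true), (true, false) => ω * (x - x')
  | (true, false), (false, true) => ω * (x - x')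
  | _, _ => 0

theorem yang_baxter {ω : R} (hω : ω ^ 2 + ω + 1 = 0) (x x' y : R) (s s' : Bool) :
    SemiconjBy (rMatrix ω x x') (∑ u, vertex ω x y s u ⊗ₖ vertex ω x' y u s')
      (∑ u, vertex ω x' y s u ⊗ₖ vertex ω x y u s') := by
  ext ⟨h, h'⟩ ⟨m, m'⟩
  simp only [Matrix.mul_apply, Matrix.add_apply, Fintype.sum_prod_type, Fintype.sum_bool,
    Matrix.kroneckerMap_apply]
  cases h <;> cases h' <;> cases m <;> cases m' <;> cases s <;> cases s' <;>
    simp only [vertex, rMatrix, Matrix.of_apply] <;> first | ring1 | grind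

/-- The monodromy matrix of a row of vertices, in the states of its leftmost and rightmost edges,
for given vertical states `s` above and `s'` below. -/
def row {n : ℕ} (ω x : R) (y : Fin n → R) (s s' : Fin n → Bool) : Matrix Bool Bool R :=
  (List.ofFn fun j => vertex ω x (y j) (s j) (s' j)).prod

theorem row_succ {n : ℕ} (ω x : R) (y : Fin (n + 1) → R) (s s' : Fin (n + 1) → Bool) :
    row ω x y s s' =
      vertex ω x (y 0) (s 0) (s' 0) * row ω x (Fin.tail y) (Fin.tail s) (Fin.tail s') := by
  simp [row, List.ofFn_succ, Fin.tail]

theorem sum_fin_succ_arrow {α M : Type*} [Fintype α] [AddCommMonoid M] {n : ℕ}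
    (f : (Fin (n + 1) → α) → M) : ∑ s, f s = ∑ b, ∑ t : Fin n → α, f (Fin.cons b t) := by
  rw [← Fintype.sum_prod_type', ← (Fin.consEquiv fun _ => α).sum_comp]
  rfl

theorem yang_baxter_row {ω : R} (hω : ω ^ 2 + ω + 1 = 0) (x x' : R) {n : ℕ} (y : Fin n → R)
    (s s' : Fin n → Bool) :
    SemiconjBy (rMatrix ω x x') (∑ u, row ω x y s u ⊗ₖ row ω x' y u s')
      (∑ u, row ω x' y s u ⊗ₖ row ω x y u s') := by
  induction n with
  | zero => simp [row]
  | succ n ih =>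
    have split (a b : R) : ∑ u, row ω a y s u ⊗ₖ row ω b y u s' =
        (∑ u, vertex ω a (y 0) (s 0) u ⊗ₖ vertex ω b (y 0) u (s' 0)) *
          ∑ u, row ω a (Fin.tail y) (Fin.tail s) u ⊗ₖ row ω b (Fin.tail y) u (Fin.tail s') := by
      simp only [sum_fin_succ_arrow, row_succ, Matrix.mul_kronecker_mul, Fin.cons_zero,
        Fin.tail_cons, sum_mul_sum]
    rw [split, split]
    exact (yang_baxter hω x x' (y 0) (s 0) (s' 0)).mul_right (ih _ _ _)

/-- The transfer matrix of a row with domain wall boundary (`false` on the left, `true` on the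
right), in the vertical states above and below the row. -/
def transfer {n : ℕ} (ω : R) (y : Fin n → R) (x : R) : Matrix (Fin n → Bool) (Fin n → Bool) R :=
  Matrix.of fun s s' => row ω x y s s' false true

theorem transfer_commute [IsDomain R] {ω : R} (hω : ω ^ 2 + ω + 1 = 0) {x x' : R}
    (hx : x' ≠ ω ^ 2 * x) {n : ℕ} (y : Fin n → R) :
    Commute (transfer ω y x) (transfer ω y x') := by
  ext s s'
  have h := congrArg (· (false, false) (true, true)) (yang_baxter_row hω x x' y s s').eq
  simp only [Matrix.mul_apply, Fintype.sum_prod_type, Fintype.sum_bool, rMatrix, Matrix.of_apply,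
    Matrix.sum_apply, Matrix.kroneckerMap_apply] at h
  simp only [Matrix.mul_apply, transfer, Matrix.of_apply]
  refine mul_left_cancel₀ (sub_ne_zero.2 hx) ?_
  linear_combination h

theorem mapMatrix_row {S : Type*} [CommRing S] (φ : R →+* S) {n : ℕ} (ω x : R) (y : Fin n → R)
    (s s' : Fin n → Bool) :
    φ.mapMatrix (row ω x y s s') = row (φ ω) (φ x) (φ ∘ y) s s' := by
  have h (a b : R) (c d : Bool) :
      φ.mapMatrix (vertex ω a b c d) = vertex (φ ω) (φ a) (φ b) c d := by
    ext h m
    cases h <;> cases m <;> cases c <;> cases d <;> simp [vertex]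
  rw [row, map_list_prod, List.map_ofFn]
  exact congrArg (fun v => (List.ofFn v).prod) (funext fun j => h ..)

/-- The partition function of the six-vertex model with domain wall boundary: the vertical states
are `false` above the first row and `true` below the last one. -/
def partitionFunction {m n : ℕ} (ω : R) (x : Fin m → R) (y : Fin n → R) : R :=
  ((List.ofFn x).map (transfer ω y)).prod ⊥ ⊤

theorem mapMatrix_transfer {S : Type*} [CommRing S] (φ : R →+* S) {n : ℕ} (ω x : R)
    (y : Fin n → R) :
    φ.mapMatrix (transfer ω y x) = transfer (φ ω) (φ ∘ y) (φ x) := by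
  ext s s'
  simp [transfer, ← mapMatrix_row]

theorem map_partitionFunction {S : Type*} [CommRing S] (φ : R →+* S) {m n : ℕ} (ω : R)
    (x : Fin m → R) (y : Fin n → R) :
    φ (partitionFunction ω x y) = partitionFunction (φ ω) (φ ∘ x) (φ ∘ y) := by
  have h := map_list_prod φ.mapMatrix ((List.ofFn x).map (transfer ω y))
  simp only [List.map_ofFn, Function.comp_def, mapMatrix_transfer] at h
  simpa [partitionFunction, List.map_ofFn, Function.comp_def] using congrArg (· ⊥ ⊤) h

theorem partitionFunction_comp_perm [IsDomain R] {ω : R} (hω : ω ^ 2 + ω + 1 = 0) {m n : ℕ}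
    {x : Fin m → R} (hx : ∀ i j, i ≠ j → x i ≠ ω ^ 2 * x j) (y : Fin n → R)
    (σ : Equiv.Perm (Fin m)) :
    partitionFunction ω (x ∘ σ) y = partitionFunction ω x y := by
  have hperm := (Equiv.Perm.ofFn_comp_perm σ x).symm.map (transfer ω y)
  have hcomm : ((List.ofFn x).map (transfer ω y)).Pairwise Commute := by
    rw [List.map_ofFn, List.pairwise_ofFn]
    exact fun i j hij => transfer_commute hω (hx j i hij.ne') y
  exact congrArg (· ⊥ ⊤) (hperm.prod_eq' hcomm).symm

section TransferCons

variable {n : ℕ} (ω x : R) (y : Fin (n + 1) → R) (s t : Fin n → Bool)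

theorem transfer_cons_true_true :
    transfer ω y x (Fin.cons true s) (Fin.cons true t) =
      (y 0 - ω * x) * transfer ω (Fin.tail y) x s t := by
  simp [transfer, row_succ, Matrix.mul_apply, vertex]

theorem transfer_cons_true_false :
    transfer ω y x (Fin.cons true s) (Fin.cons false t) = 0 := by
  simp [transfer, row_succ, Matrix.mul_apply, vertex]

theorem transfer_cons_false_true :
    transfer ω y x (Fin.cons false s) (Fin.cons true t) =
      (1 - ω) * row ω x (Fin.tail y) s t true true := by
  simp [transfer, row_succ, Matrix.mul_apply, vertex]

theorem transfer_cons_false_false :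
    transfer ω y x (Fin.cons false s) (Fin.cons false t) =
      (x - ω * y 0) * transfer ω (Fin.tail y) x s t := by
  simp [transfer, row_succ, Matrix.mul_apply, vertex]

end TransferCons

theorem row_bot_true_true {n : ℕ} (ω x : R) (y : Fin n → R) (t : Fin n → Bool) :
    row ω x y ⊥ t true true = if t = ⊥ then ∏ j, (y j - ω * x) else 0 := by
  induction n with
  | zero => simp [row, Subsingleton.elim t ⊥]
  | succ n ih =>
    induction t using Fin.consCases with
    | _ c t =>
    have hbot : Fin.tail (⊥ : Fin (n + 1) → Bool) = ⊥ := rfl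
    have hcons : (Fin.cons c t : Fin (n + 1) → Bool) = ⊥ ↔ c = false ∧ t = ⊥ := by
      rw [← Fin.cons_self_tail (⊥ : Fin (n + 1) → Bool), Fin.cons_inj, hbot]
      exact Iff.rfl
    rw [row_succ, Matrix.mul_apply, Fintype.sum_bool, hbot, Fin.tail_cons, ih, Fin.prod_univ_succ]
    cases c <;> simp [vertex, hcons, Fin.tail]

theorem prod_transfer_cons_true {n : ℕ} (ω : R) (y : Fin (n + 1) → R) (s t : Fin n → Bool)
    (l : List R) :
    (l.map (transfer ω y)).prod (Fin.cons true s) (Fin.cons true t) =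
      (l.map fun x => y 0 - ω * x).prod * (l.map (transfer ω (Fin.tail y))).prod s t := by
  induction l generalizing s with
  | nil => simp [Matrix.one_apply]
  | cons x l ih =>
    simp [Matrix.mul_apply, sum_fin_succ_arrow, transfer_cons_true_true, transfer_cons_true_false,
      ih, mul_sum, mul_mul_mul_comm]

-- The weight `x 0 - ω * y 0` of the corner vanishes, so the corner vertex flips, and this forces
-- the states of the rest of the first row and column.
theorem partitionFunction_succ_of_eq_mul {n : ℕ} {ω : R} {x y : Fin (n + 1) → R}
    (h : x 0 = ω * y 0) :
    partitionFunction ω x y = (1 - ω) * (∏ j, (Fin.tail y j - ω * x 0)) *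
      (∏ i, (y 0 - ω * Fin.tail x i)) * partitionFunction ω (Fin.tail x) (Fin.tail y) := by
  have hbot : (⊥ : Fin (n + 1) → Bool) = Fin.cons false ⊥ := (Fin.cons_self_tail _).symm
  have htop : (⊤ : Fin (n + 1) → Bool) = Fin.cons true ⊤ := (Fin.cons_self_tail _).symm
  have hrest := prod_transfer_cons_true ω y ⊥ ⊤ (List.ofFn (Fin.tail x))
  rw [List.map_ofFn (g := fun x => y 0 - ω * x), List.prod_ofFn] at hrest
  rw [partitionFunction, List.ofFn_succ, List.map_cons, List.prod_cons, Matrix.mul_apply,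
    sum_fin_succ_arrow, hbot, htop]
  simp only [Fintype.sum_bool, transfer_cons_false_false, transfer_cons_false_true,
    row_bot_true_true, h, sub_self, mul_ite, ite_mul, mul_zero, zero_mul, sum_ite_eq', mem_univ,
    if_true, sum_const_zero, add_zero]
  change _ * ((List.ofFn (Fin.tail x)).map (transfer ω y)).prod _ _ = _
  simp only [hrest, partitionFunction, Function.comp_apply]
  ring

theorem mul_mem_degreeLT {p q : R[X]} {a b : ℕ} (hp : p.natDegree ≤ a) (hq : q ∈ degreeLT R b) :
    p * q ∈ degreeLT R (a + b) := by
  rw [mem_degreeLT] at hq ⊢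
  calc (p * q).degree ≤ p.degree + q.degree := degree_mul_le p q
    _ ≤ a + q.degree := by gcongr; exact degree_le_of_natDegree_le hp
    _ < a + b := WithBot.add_lt_add_left WithBot.coe_ne_bot hq
    _ = (a + b : ℕ) := (Nat.cast_add a b).symm

theorem prod_transfer_cons_true_mem_degreeLT {n : ℕ} (ω : R) (y : Fin n → R)
    (s t : Fin n → Bool) (l : List R) :
    ((l.map C).map (transfer (C ω) (Fin.cons X (C ∘ y)))).prod (Fin.cons true s) (Fin.cons true t)
      ∈ degreeLT R (l.length + 1) := by
  have hconst : ((l.map C).map (transfer (C ω) (C ∘ y))).prod s t =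
      C ((l.map (transfer ω y)).prod s t) := by
    have h := map_list_prod (C.mapMatrix : Matrix (Fin n → Bool) _ R →+* _) (l.map (transfer ω y))
    simp only [List.map_map, Function.comp_def, mapMatrix_transfer] at h
    simpa [Function.comp_def] using (congrArg (· s t) h).symm
  have hlinear : ((l.map C).map fun a => X - C ω * a).prod.natDegree ≤ l.length := by
    refine (natDegree_list_prod_le _).trans ((List.sum_le_card_nsmul _ 1 ?_).trans (by simp))
    simp only [List.forall_mem_map]
    intro a _
    compute_degree
  rw [prod_transfer_cons_true, Fin.tail_cons, hconst]
  exact mul_mem_degreeLT hlinear (mem_degreeLT.2 degree_C_lt)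

-- Only the first column involves `X`, and its vertices where the vertical state flips from `false`
-- to `true` have constant weight: this saves one degree.
theorem prod_transfer_cons_false_mem_degreeLT {n : ℕ} (ω : R) (y : Fin n → R)
    (s t : Fin n → Bool) (l : List R) :
    ((l.map C).map (transfer (C ω) (Fin.cons X (C ∘ y)))).prod (Fin.cons false s) (Fin.cons true t)
      ∈ degreeLT R l.length := by
  induction l generalizing s with
  | nil => simp [Fin.cons_inj]
  | cons a l ih =>
    have htransfer (u : Fin n → Bool) :
        transfer (C ω) (C ∘ y) (C a) s u = C (transfer ω y a s u) := by
      simp [← mapMatrix_transfer]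
    have hrow (u : Fin n → Bool) :
        row (C ω) (C a) (C ∘ y) s u true true = C (row ω a y s u true true) := by
      simp [← mapMatrix_row]
    simp only [List.map_cons, List.prod_cons, Matrix.mul_apply, sum_fin_succ_arrow,
      Fintype.sum_bool]
    refine add_mem (sum_mem fun u _ => ?_) (sum_mem fun u _ => ?_)
    · rw [transfer_cons_false_true, Fin.tail_cons, hrow, ← zero_add (a :: l).length]
      exact mul_mem_degreeLT (by compute_degree) (prod_transfer_cons_true_mem_degreeLT ω y u t l)
    · rw [transfer_cons_false_false, Fin.tail_cons, htransfer, Fin.cons_zero, List.length_cons,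
        add_comm]
      exact mul_mem_degreeLT (by compute_degree) (ih u)

theorem partitionFunction_mem_degreeLT {m n : ℕ} (ω : R) (x : Fin m → R) (y : Fin n → R) :
    partitionFunction (C ω) (C ∘ x) (Fin.cons X (C ∘ y)) ∈ degreeLT R m := by
  have h := prod_transfer_cons_false_mem_degreeLT ω y ⊥ ⊤ (List.ofFn x)
  rw [List.map_ofFn, List.length_ofFn] at h
  have hbot : (⊥ : Fin (n + 1) → Bool) = Fin.cons false ⊥ := (Fin.cons_self_tail _).symm
  have htop : (⊤ : Fin (n + 1) → Bool) = Fin.cons true ⊤ := (Fin.cons_self_tail _).symm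
  rwa [partitionFunction, hbot, htop]

section Alternant

variable (e : ℕ → ℕ) {m : ℕ}

/-- The alternant, the numerator in the bialternant formula for Schur functions. The exponents
`e 0, e 1, …` are increasing rather than decreasing. -/
def alternant (z : Fin m → R) : R := (Matrix.of fun i j : Fin m => z i ^ e j).det

theorem alternant_comp_perm (z : Fin m → R) (σ : Equiv.Perm (Fin m)) :
    alternant e (z ∘ σ) = Equiv.Perm.sign σ * alternant e z :=
  Matrix.det_permute σ (Matrix.of fun i j : Fin m => z i ^ e j)

theorem alternant_eq_zero {z : Fin m → R} {i j : Fin m} (hij : i ≠ j) (h : z i = z j) :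
    alternant e z = 0 :=
  Matrix.det_zero_of_row_eq hij (by ext; simp [h])

theorem map_alternant {S : Type*} [CommRing S] (φ : R →+* S) (z : Fin m → R) :
    φ (alternant e z) = alternant e (φ ∘ z) := by
  rw [alternant, RingHom.map_det]
  congr 1
  ext
  simp

theorem alternant_id (z : Fin m → R) : alternant id z = (Matrix.vandermonde z).det := rfl

theorem alternant_id_cons (a : R) (z : Fin m → R) :
    alternant id (Fin.cons a z : Fin (m + 1) → R) = (∏ k, (z k - a)) * alternant id z := by
  simp only [alternant_id, Matrix.det_vandermonde, Fin.prod_univ_succ, Fin.prod_Ioi_succ,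
    Fin.prod_Ioi_zero, Fin.cons_zero, Fin.cons_succ]

theorem natDegree_alternant_cons_le {d : ℕ} (he : ∀ j ≤ m, e j ≤ d) (z : Fin m → R) :
    (alternant e (Fin.cons X (C ∘ z) : Fin (m + 1) → R[X])).natDegree ≤ d := by
  rw [alternant, Matrix.det_succ_row_zero]
  refine natDegree_sum_le_of_forall_le _ _ fun j _ => ?_
  have hminor : ((Matrix.of fun i j : Fin (m + 1) => (Fin.cons X (C ∘ z) : Fin (m + 1) → R[X]) i ^
      e j).submatrix Fin.succ j.succAbove).det =
      C (Matrix.of fun i k : Fin m => z i ^ e (j.succAbove k)).det := by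
    rw [RingHom.map_det]
    congr 1
    ext1 i k
    simp
  rw [hminor, Matrix.of_apply, Fin.cons_zero]
  calc ((-1) ^ (j : ℕ) * X ^ e j * C _).natDegree ≤ e j := by compute_degree
    _ ≤ d := he j j.is_le

end Alternant

section DoubleStaircase

variable {m : ℕ}

/-- The exponents `0, 1, 3, 4, 6, 7, …` of the alternant of the double staircase partition
`(n - 1, n - 1, …, 1, 1, 0, 0)`. -/
def doubleStaircase (j : ℕ) : ℕ := j + j / 2

theorem doubleStaircase_add_two (j : ℕ) : doubleStaircase (j + 2) = doubleStaircase j + 3 := by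
  unfold doubleStaircase
  omega

theorem det_of_two_rows (M : Matrix (Fin (m + 2)) (Fin (m + 2)) R)
    (h0 : ∀ j : Fin m, M 0 j.succ.succ = 0) (h1 : ∀ j : Fin m, M 1 j.succ.succ = 0) :
    M.det = (M 0 0 * M 1 1 - M 0 1 * M 1 0) *
      (M.submatrix (fun i : Fin m => i.succ.succ) fun j => j.succ.succ).det := by
  have hone (j : Fin m) : (1 : Fin (m + 2)).succAbove j.succ = j.succ.succ := by
    rw [← Fin.succ_zero_eq_one, Fin.succ_succAbove_succ, Fin.zero_succAbove]
  have hone' : (1 : Fin (m + 2)).succAbove 0 = 0 := by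
    rw [← Fin.succ_zero_eq_one, Fin.succ_succAbove_zero]
  simp only [Matrix.det_succ_row_zero (n := m + 1), Matrix.det_succ_row_zero (n := m),
    Fin.sum_univ_succ, Matrix.submatrix_apply, Matrix.submatrix_submatrix, h0, h1,
    Fin.succ_zero_eq_one, Fin.zero_succAbove, hone, hone', Function.comp_def, mul_zero, zero_mul,
    sum_const_zero, add_zero, Fin.val_zero, Fin.val_one, pow_zero, pow_one]
  ring

theorem det_sub_col_add_two (c : R) (M : Matrix (Fin (m + 2)) (Fin (m + 2)) R) :
    (Matrix.of fun i => (Fin.cons (M i 0) (Fin.cons (M i 1) fun j : Fin m =>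
      M i j.succ.succ - c * M i j.castSucc.castSucc) : Fin (m + 2) → R)).det = M.det := by
  let S : Matrix (Fin (m + 2)) (Fin (m + 2)) R :=
    Matrix.of fun k j => if (k : ℕ) + 2 = j then c else 0
  have hS : (1 - S).det = 1 := by
    rw [Matrix.det_of_isUpperTriangular]
    · simp [S]
    · intro i j (hij : (j : ℕ) < i)
      simp [S, show ¬ ((i : ℕ) + 2 = j) by omega, Matrix.one_apply_ne (Fin.ne_of_gt hij)]
  have hMS (i : Fin (m + 2)) (j : Fin m) : (M * S) i j.succ.succ = c * M i j.castSucc.castSucc := by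
    rw [Matrix.mul_apply, sum_eq_single j.castSucc.castSucc]
    · simp [S, mul_comm]
    · intro k _ hk
      have : (k : ℕ) ≠ j := fun h => hk (Fin.ext h)
      simp [S, this]
    · simp
  rw [← mul_one M.det, ← hS, ← Matrix.det_mul, mul_sub, mul_one]
  congr 1
  ext i j
  refine Fin.cases ?_ (fun j => Fin.cases ?_ (fun j => ?_) j) j
  · simp [Matrix.mul_apply, S]
  · simp [Matrix.mul_apply, S]
  · simp [hMS]

theorem alternant_doubleStaircase_cons_cons {a b : R} (h : b ^ 3 = a ^ 3) (z : Fin m → R) :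
    alternant doubleStaircase (Fin.cons b (Fin.cons a z : Fin (m + 1) → R) : Fin (m + 2) → R) =
      (a - b) * (∏ k, (z k ^ 3 - a ^ 3)) * alternant doubleStaircase z := by
  rw [alternant, ← det_sub_col_add_two (a ^ 3), det_of_two_rows, mul_assoc, alternant,
    ← Matrix.det_mul_column]
  · congr 1
    · simp [doubleStaircase]
    · congr 1
      ext i j
      simp [doubleStaircase_add_two, pow_add, sub_mul]
      ring
  · intro j
    simp [doubleStaircase_add_two, pow_add, h]
    ring
  · intro j
    simp [doubleStaircase_add_two, pow_add]
    ring

end DoubleStaircase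

section Interleave

variable {n : ℕ}

/-- The bijection sending the left summand to the odd numbers and the right one to the even
numbers. -/
noncomputable def parityEquiv (n : ℕ) : Fin n ⊕ Fin n ≃ Fin (2 * n) :=
  Equiv.ofBijective
    (Sum.elim (fun i => ⟨2 * i + 1, by omega⟩) fun i => ⟨2 * i, by omega⟩) <| by
    refine (Fintype.bijective_iff_injective_and_card _).2 ⟨?_, by simp [two_mul]⟩
    rintro (i | i) (j | j) h <;> simp [Fin.ext_iff] at h ⊢ <;> omega

/-- The sequence `y 0, x 0, y 1, x 1, …`, in which the variables of the model enter the
alternants. -/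
noncomputable def interleave {α : Type*} (x y : Fin n → α) : Fin (2 * n) → α :=
  Sum.elim x y ∘ (parityEquiv n).symm

theorem interleave_parityEquiv {α : Type*} (x y : Fin n → α) (s : Fin n ⊕ Fin n) :
    interleave x y (parityEquiv n s) = Sum.elim x y s := by
  simp [interleave]

theorem interleave_succ {α : Type*} (x y : Fin (n + 1) → α) :
    interleave x y = (Fin.cons (y 0) (Fin.cons (x 0) (interleave (Fin.tail x) (Fin.tail y)) :
      Fin (2 * n + 1) → α) : Fin (2 * n + 2) → α) := by
  ext k
  obtain ⟨s, rfl⟩ := (parityEquiv (n + 1)).surjective k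
  rw [interleave_parityEquiv]
  rcases s with i | i
  · refine Fin.cases rfl (fun i => ?_) i
    exact (interleave_parityEquiv (Fin.tail x) (Fin.tail y) (Sum.inl i)).symm
  · refine Fin.cases rfl (fun i => ?_) i
    exact (interleave_parityEquiv (Fin.tail x) (Fin.tail y) (Sum.inr i)).symm

theorem comp_interleave {α β : Type*} (f : α → β) (x y : Fin n → α) :
    f ∘ interleave x y = interleave (f ∘ x) (f ∘ y) := by
  rw [interleave, ← Function.comp_assoc, Sum.comp_elim, interleave]

theorem prod_interleave {α M : Type*} [CommMonoid M] (f : α → M) (x y : Fin n → α) :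
    ∏ k, f (interleave x y k) = (∏ i, f (x i)) * ∏ i, f (y i) := by
  simp [← (parityEquiv n).prod_comp, interleave_parityEquiv]

theorem interleave_comp_perm {α : Type*} (x y : Fin n → α) (σ : Equiv.Perm (Fin n)) :
    interleave (x ∘ σ) y =
      interleave x y ∘ (parityEquiv n).permCongr (Equiv.sumCongr σ (Equiv.refl _)) := by
  ext k
  obtain ⟨s, rfl⟩ := (parityEquiv n).surjective k
  rcases s with i | i <;> simp [interleave]

end Interleave

section SchurFormula

variable {ω : R} {n : ℕ}

/-- The constant of proportionality in `SchurIdentity`. -/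
def schurConst (ω : R) (n : ℕ) : R := ∏ k ∈ range n, (1 - ω) * (-ω) ^ k

/-- The evaluation of the partition function as a multiple of the Schur function of the double
staircase, cleared of the Vandermonde denominator so that repeated variables are allowed. -/
def SchurIdentity (ω : R) (x y : Fin n → R) : Prop :=
  partitionFunction ω x y * alternant id (interleave x y) =
    schurConst ω n * alternant doubleStaircase (interleave x y)

theorem SchurIdentity.of_tail (hω : ω ^ 2 + ω + 1 = 0) {x y : Fin (n + 1) → R}
    (h : y 0 = ω ^ 2 * x 0) (ih : SchurIdentity ω (Fin.tail x) (Fin.tail y)) :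
    SchurIdentity ω x y := by
  have hω3 : ω ^ 3 = 1 := by linear_combination (ω - 1) * hω
  set w := interleave (Fin.tail x) (Fin.tail y) with hw
  have hcube (a : R) : a ^ 3 - x 0 ^ 3 = (a - y 0) * (a - x 0) * (a - ω * x 0) := by
    rw [h]
    linear_combination (x 0 * a ^ 2 - ω * x 0 ^ 2 * a + (ω - 1) * x 0 ^ 3) * hω
  have hZ : partitionFunction ω x y = (1 - ω) * (-ω) ^ n * (∏ k, (w k - ω * x 0)) *
      partitionFunction ω (Fin.tail x) (Fin.tail y) := by
    have hlin (a : R) : y 0 - ω * a = -ω * (a - ω * x 0) := by rw [h]; ring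
    rw [partitionFunction_succ_of_eq_mul (by rw [h]; linear_combination (-x 0) * hω3),
      hw, prod_interleave (· - ω * x 0)]
    simp only [hlin, prod_mul_distrib, prod_const, card_univ, Fintype.card_fin]
    ring
  have hy : y 0 ^ 3 = x 0 ^ 3 := sub_eq_zero.1 (by rw [hcube]; ring)
  rw [SchurIdentity, interleave_succ, alternant_doubleStaircase_cons_cons hy, alternant_id_cons,
    alternant_id_cons, hZ, Fin.prod_univ_succ, schurConst, prod_range_succ, ← schurConst]
  simp only [Fin.cons_zero, Fin.cons_succ, hcube, prod_mul_distrib]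
  rw [SchurIdentity] at ih
  linear_combination (1 - ω) * (-ω) ^ n * (x 0 - y 0) * (∏ k, (w k - y 0)) * (∏ k, (w k - x 0)) *
    (∏ k, (w k - ω * x 0)) * ih

theorem SchurIdentity.of_comp_perm [IsDomain R] (hω : ω ^ 2 + ω + 1 = 0) {x y : Fin n → R}
    (hx : ∀ i j, i ≠ j → x i ≠ ω ^ 2 * x j) (σ : Equiv.Perm (Fin n))
    (h : SchurIdentity ω (x ∘ σ) y) : SchurIdentity ω x y := by
  rw [SchurIdentity, partitionFunction_comp_perm hω hx, interleave_comp_perm, alternant_comp_perm,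
    alternant_comp_perm, mul_left_comm, mul_left_comm (schurConst ω n)] at h
  refine mul_left_cancel₀ ?_ h
  rcases Int.units_eq_one_or (Equiv.Perm.sign ((parityEquiv n).permCongr
    (Equiv.sumCongr σ (Equiv.refl _)))) with hσ | hσ <;> simp [hσ]

/-- General position of the variables: their cubes are distinct and the row variables nonzero, so
that the points `x i`, `y j` and `ω ^ 2 * x i` are distinct. -/
def Generic {m : ℕ} (x : Fin m → R) (y : Fin n → R) : Prop :=
  Function.Injective (fun s => Sum.elim x y s ^ 3) ∧ ∀ i, x i ≠ 0

theorem Generic.comp {m m' n' : ℕ} {x : Fin m → R} {y : Fin n → R} (h : Generic x y)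
    {f : Fin m' → Fin m} {g : Fin n' → Fin n} (hf : Function.Injective f)
    (hg : Function.Injective g) : Generic (x ∘ f) (y ∘ g) := by
  refine ⟨?_, fun i => h.2 (f i)⟩
  convert h.1.comp (Sum.map_injective.2 ⟨hf, hg⟩) using 2 with s
  rcases s with s | s <;> rfl

theorem Generic.ne_mul {m : ℕ} {x : Fin m → R} {y : Fin n → R} (h : Generic x y) (hω : ω ^ 3 = 1)
    {i j : Fin m} (hij : i ≠ j) : x i ≠ ω ^ 2 * x j := fun hx =>
  hij <| Sum.inl_injective <| h.1 <| by
    change x i ^ 3 = x j ^ 3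
    rw [hx]
    linear_combination (ω ^ 3 + 1) * x j ^ 3 * hω

theorem SchurIdentity.of_eq_mul [IsDomain R] (hω : ω ^ 2 + ω + 1 = 0) {x y : Fin (n + 1) → R}
    (hx : ∀ i j, i ≠ j → x i ≠ ω ^ 2 * x j) {i : Fin (n + 1)} (h : y 0 = ω ^ 2 * x i)
    (ih : SchurIdentity ω (Fin.tail (x ∘ Equiv.swap 0 i)) (Fin.tail y)) : SchurIdentity ω x y :=
  .of_comp_perm hω hx (Equiv.swap 0 i) (.of_tail hω (by simpa using h) ih)

/-- The difference of the two sides of `SchurIdentity`, as a polynomial in the first column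
variable. -/
noncomputable def schurDefect (ω : R) (x : Fin (n + 1) → R) (y : Fin n → R) : R[X] :=
  let Y : Fin (n + 1) → R[X] := Fin.cons X (C ∘ y)
  partitionFunction (C ω) (C ∘ x) Y * alternant id (interleave (C ∘ x) Y) -
    C (schurConst ω (n + 1)) * alternant doubleStaircase (interleave (C ∘ x) Y)

theorem eval_schurDefect_eq_zero_iff {x : Fin (n + 1) → R} {y : Fin n → R} {c : R} :
    (schurDefect ω x y).eval c = 0 ↔ SchurIdentity ω x (Fin.cons c y : Fin (n + 1) → R) := by
  have hx : evalRingHom c ∘ C ∘ x = x := by ext; simp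
  have hy : evalRingHom c ∘ (Fin.cons X (C ∘ y) : Fin (n + 1) → R[X]) = Fin.cons c y := by
    ext k
    refine Fin.cases ?_ (fun k => ?_) k <;> simp
  rw [← coe_evalRingHom, schurDefect, map_sub, map_mul, map_mul, map_partitionFunction,
    map_alternant, map_alternant, comp_interleave, hx, hy, sub_eq_zero, SchurIdentity]
  simp

theorem natDegree_schurDefect_lt (x : Fin (n + 1) → R) (y : Fin n → R) :
    (schurDefect ω x y).natDegree < 3 * n + 2 := by
  have hZ : (partitionFunction (C ω) (C ∘ x) (Fin.cons X (C ∘ y))).natDegree ≤ n :=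
    natDegree_le_iff_coeff_eq_zero.2 fun k hk => coeff_eq_zero_of_degree_lt <|
      (mem_degreeLT.1 (partitionFunction_mem_degreeLT ω x y)).trans_le (by exact_mod_cast hk)
  have halt {e : ℕ → ℕ} {d : ℕ} (he : ∀ j ≤ 2 * n + 1, e j ≤ d) :
      (alternant e (interleave (C ∘ x) (Fin.cons X (C ∘ y)))).natDegree ≤ d := by
    have hcons : (Fin.cons (C (x 0)) (interleave (Fin.tail (C ∘ x)) (C ∘ y)) :
        Fin (2 * n + 1) → R[X]) = C ∘ Fin.cons (x 0) (interleave (Fin.tail x) y) := by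
      rw [Fin.comp_cons, comp_interleave]
      rfl
    rw [interleave_succ, Fin.cons_zero, Fin.tail_cons, Function.comp_apply, hcons]
    exact natDegree_alternant_cons_le e he _
  refine Nat.lt_succ_of_le ((natDegree_sub_le _ _).trans (max_le ?_ ?_))
  · refine (natDegree_mul_le_of_le hZ (halt (d := 2 * n + 1) fun j hj => hj)).trans (by omega)
  · refine (natDegree_C_mul_le _ _).trans (halt fun j hj => ?_)
    unfold doubleStaircase
    omega

theorem SchurIdentity.of_repeated {x y : Fin n → R} {s t : Fin n ⊕ Fin n} (hst : s ≠ t)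
    (h : Sum.elim x y s = Sum.elim x y t) : SchurIdentity ω x y := by
  have hz (e : ℕ → ℕ) : alternant e (interleave x y) = 0 :=
    alternant_eq_zero e ((parityEquiv n).injective.ne hst) (by simpa [interleave_parityEquiv])
  rw [SchurIdentity, hz, hz, mul_zero, mul_zero]

theorem sq_add_self_add_one [IsDomain R] (hω : IsPrimitiveRoot ω 3) : ω ^ 2 + ω + 1 = 0 := by
  have h := hω.geom_sum_eq_zero (by norm_num)
  simp only [sum_range_succ, sum_range_zero] at h
  linear_combination h

theorem Generic.roots_injective [IsDomain R] (hω : IsPrimitiveRoot ω 3) {m : ℕ} {x : Fin m → R}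
    {y : Fin n → R} (h : Generic x y) :
    Function.Injective (Sum.elim (Sum.elim x y) fun i => ω ^ 2 * x i) := by
  have hcube (i : Fin m) : (ω ^ 2 * x i) ^ 3 = x i ^ 3 := by
    linear_combination (ω ^ 3 + 1) * x i ^ 3 * hω.pow_eq_one
  refine Function.Injective.sumElim (Function.Injective.of_comp (f := (· ^ 3)) h.1) ?_ ?_
  · intro i j hij
    exact Sum.inl_injective (h.1 ((hcube i).symm.trans ((congrArg (· ^ 3) hij).trans (hcube j))))
  · intro s i hs
    have hsi : s = Sum.inl i := h.1 ((congrArg (· ^ 3) hs).trans (hcube i))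
    rw [hsi, Sum.elim_inl, eq_comm, mul_eq_right₀ (h.2 i)] at hs
    exact hω.pow_ne_one_of_pos_of_lt two_ne_zero (by norm_num) hs

theorem schurDefect_eq_zero [IsDomain R] (hω : IsPrimitiveRoot ω 3) {x : Fin (n + 1) → R}
    {y : Fin n → R} (h : Generic x y)
    (ih : ∀ f : Fin n → Fin (n + 1), Function.Injective f → SchurIdentity ω (x ∘ f) y) :
    schurDefect ω x y = 0 := by
  have hsum := sq_add_self_add_one hω
  refine eq_zero_of_natDegree_lt_card_of_eval_eq_zero _ (h.roots_injective hω) ?_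
    ((natDegree_schurDefect_lt x y).trans_eq (by simp; ring))
  rintro ((i | j) | i) <;> rw [eval_schurDefect_eq_zero_iff]
  · exact .of_repeated (s := .inr 0) (t := .inl i) (by simp) (by simp)
  · exact .of_repeated (s := .inr 0) (t := .inr j.succ) (by simp [(Fin.succ_ne_zero j).symm])
      (by simp)
  · exact .of_eq_mul hsum (fun _ _ => h.ne_mul hω.pow_eq_one) (Fin.cons_zero _ _)
      (ih _ ((Equiv.swap 0 i).injective.comp (Fin.succ_injective n)))

theorem schurIdentity [IsDomain R] (hω : IsPrimitiveRoot ω 3) {x y : Fin n → R}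
    (h : Generic x y) : SchurIdentity ω x y := by
  induction n with
  | zero =>
    have hbot : (⊥ : Fin 0 → Bool) = ⊤ := Subsingleton.elim _ _
    simp [SchurIdentity, partitionFunction, schurConst, alternant, hbot]
  | succ n ih =>
    have hy : Fin.cons (y 0) (Fin.tail y) = y := Fin.cons_self_tail y
    have hzero : schurDefect ω x (Fin.tail y) = 0 :=
      schurDefect_eq_zero hω (h.comp Function.injective_id (Fin.succ_injective n)) fun f hf =>
        ih (h.comp hf (Fin.succ_injective n))
    rw [← hy, ← eval_schurDefect_eq_zero_iff, hzero, eval_zero]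

end SchurFormula

section PowerSpecialization

theorem alternant_pow (e : ℕ → ℕ) {m : ℕ} (q : R) :
    alternant e (fun k : Fin m => q ^ (k : ℕ)) = (∏ j : Fin m, (q - 1) ^ (j : ℕ)) *
      (Matrix.vandermonde fun j : Fin m => ∑ i ∈ range (e j), q ^ i).det := by
  have htranspose : Matrix.of (fun i j : Fin m => (q ^ (i : ℕ)) ^ e j) =
      (Matrix.vandermonde fun j : Fin m => (q - 1) * ∑ i ∈ range (e j), q ^ i + 1).transpose := by
    ext i j
    rw [Matrix.transpose_apply, Matrix.vandermonde_apply, mul_geom_sum, sub_add_cancel,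
      Matrix.of_apply, pow_right_comm]
  rw [alternant, htranspose, Matrix.det_transpose, Matrix.det_vandermonde_add,
    ← Matrix.det_mul_row]
  simp only [mul_pow, Matrix.vandermonde]
  rfl

theorem interleave_pow (q : R) (n : ℕ) :
    interleave (fun i : Fin n => q ^ (2 * (i : ℕ) + 1)) (fun i => q ^ (2 * (i : ℕ))) =
      fun k : Fin (2 * n) => q ^ (k : ℕ) := by
  ext k
  obtain ⟨s, rfl⟩ := (parityEquiv n).surjective k
  rw [interleave_parityEquiv]
  rcases s with i | i <;> rfl

theorem generic_X_pow [Nontrivial R] (n : ℕ) :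
    Generic (fun i : Fin n => (X : R[X]) ^ (2 * (i : ℕ) + 1))
      (fun i : Fin n => X ^ (2 * (i : ℕ))) := by
  refine ⟨fun s t h => ?_, fun i => (monic_X_pow _).ne_zero⟩
  have hdeg := congrArg natDegree h
  rcases s with i | i <;> rcases t with j | j <;>
    simp only [Sum.elim_inl, Sum.elim_inr, ← pow_mul, natDegree_X_pow] at hdeg <;>
    simp [Fin.ext_iff] <;> omega

theorem partitionFunction_one_one_mul_det_vandermonde [IsDomain R] {ω : R}
    (hω : IsPrimitiveRoot ω 3) (n : ℕ) :
    partitionFunction ω (1 : Fin n → R) (1 : Fin n → R) *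
        (Matrix.vandermonde fun j : Fin (2 * n) => ((j : ℕ) : R)).det =
      schurConst ω n *
        (Matrix.vandermonde fun j : Fin (2 * n) => (doubleStaircase j : R)).det := by
  have h := schurIdentity (hω.map_of_injective (f := C) C_injective) (generic_X_pow (R := R) n)
  rw [SchurIdentity, interleave_pow, alternant_pow, alternant_pow, mul_left_comm,
    mul_left_comm (schurConst _ _)] at h
  have hne : ∏ j : Fin (2 * n), ((X : R[X]) - 1) ^ (j : ℕ) ≠ 0 :=
    prod_ne_zero_iff.2 fun j _ => pow_ne_zero _ (X_sub_C_ne_zero 1)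
  have heval := congrArg (evalRingHom 1) (mul_left_cancel₀ hne h)
  have hdet (e : ℕ → ℕ) : evalRingHom 1 (Matrix.vandermonde fun j : Fin (2 * n) =>
      ∑ i ∈ range (e j), (X : R[X]) ^ i).det =
      (Matrix.vandermonde fun j : Fin (2 * n) => (e j : R)).det := by
    rw [RingHom.map_det]
    congr 1
    ext
    simp [Matrix.vandermonde, eval_finsetSum]
  have hC : evalRingHom 1 (schurConst (C ω) n) = schurConst ω n := by
    simp [schurConst]
  rw [map_mul, map_mul, map_partitionFunction, hdet, hdet, hC] at heval
  have hone (f : Fin n → ℕ) : (evalRingHom (1 : R) ∘ fun i => X ^ f i) = 1 := by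
    ext
    simp
  rw [hone, hone] at heval
  simpa using heval

end PowerSpecialization

open scoped Nat

section Enumeration

theorem det_vandermonde_eq_prod_range (f : ℕ → R) (m : ℕ) :
    (Matrix.vandermonde fun j : Fin m => f j).det = ∏ j ∈ range m, ∏ i ∈ range j, (f j - f i) := by
  rw [Matrix.det_vandermonde, prod_comm' (t' := univ) (s' := fun j => Iio j) (by simp),
    ← Fin.prod_univ_eq_prod_range (fun j => ∏ i ∈ range j, (f j - f i))]
  refine prod_congr rfl fun j _ => ?_
  have : range (j : ℕ) = (Iio j).map Fin.valEmbedding := by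
    rw [Fin.map_valEmbedding_Iio]
    ext
    simp
  rw [this, prod_map]
  rfl

theorem prod_range_two_mul (f : ℕ → R) (n : ℕ) :
    ∏ j ∈ range (2 * n), f j = ∏ k ∈ range n, (f (2 * k) * f (2 * k + 1)) := by
  induction n with
  | zero => simp
  | succ n ih => rw [mul_add_one, prod_range_succ, prod_range_succ, ih, prod_range_succ, mul_assoc]

theorem prod_range_sub_doubleStaircase_add_two (c : R) (m : ℕ) :
    ∏ i ∈ range (m + 2), (c + 3 - doubleStaircase i) =
      (∏ i ∈ range m, (c - doubleStaircase i)) * ((c + 2) * (c + 3)) := by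
  rw [prod_range_succ', prod_range_succ', mul_assoc]
  congr 1
  · exact prod_congr rfl fun i _ => by rw [doubleStaircase_add_two]; push_cast; ring
  · simp [doubleStaircase]
    ring

theorem prod_doubleStaircase_sub_pair (k : ℕ) :
    (∏ i ∈ range (2 * k), ((3 * k : R) - doubleStaircase i)) *
        ∏ i ∈ range (2 * k + 1), ((3 * k + 1 : R) - doubleStaircase i) =
      (3 * k + 1)! * (3 ^ k * k !) := by
  induction k with
  | zero => simp [doubleStaircase]
  | succ k ih =>
    have hcast : (3 * (k + 1 : ℕ) : R) = 3 * k + 3 := by push_cast; ring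
    rw [hcast, add_right_comm, mul_add_one, add_right_comm (2 * k) 2 1,
      prod_range_sub_doubleStaircase_add_two, prod_range_sub_doubleStaircase_add_two,
      show 3 * (k + 1) + 1 = 3 * k + 1 + 3 by ring]
    simp only [Nat.factorial_succ, pow_succ] at ih ⊢
    push_cast at ih ⊢
    linear_combination (3 * k + 2) * (3 * k + 3) * ((3 * k + 3) * (3 * k + 4)) * ih

theorem det_vandermonde_natCast (n : ℕ) :
    (Matrix.vandermonde fun j : Fin (2 * n) => ((j : ℕ) : R)).det =
      (∏ k ∈ range n, (k ! : R)) * ∏ k ∈ range n, ((n + k)! : R) := by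
  cases n with
  | zero => simp
  | succ n =>
    rw [← prod_range_add, ← two_mul]
    refine (Matrix.det_vandermonde_id_eq_superFactorial (2 * n + 1)).trans ?_
    rw [← Nat.prod_range_succ_factorial, Nat.cast_prod]
    rfl

theorem det_vandermonde_doubleStaircase (n : ℕ) :
    (Matrix.vandermonde fun j : Fin (2 * n) => (doubleStaircase j : R)).det =
      ∏ k ∈ range n, ((3 * k + 1)! * (3 ^ k * k !) : R) := by
  rw [det_vandermonde_eq_prod_range (fun j => (doubleStaircase j : R)), prod_range_two_mul]
  refine prod_congr rfl fun k _ => ?_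
  have heven : doubleStaircase (2 * k) = 3 * k := by unfold doubleStaircase; omega
  have hodd : doubleStaircase (2 * k + 1) = 3 * k + 1 := by unfold doubleStaircase; omega
  rw [← prod_doubleStaircase_sub_pair, heven, hodd]
  push_cast
  rfl

theorem schurConst_mul_prod_three_pow {ω : R} (hω : ω ^ 2 + ω + 1 = 0) (n : ℕ) :
    schurConst ω n * ∏ k ∈ range n, 3 ^ k = (1 - ω) ^ (n * n) := by
  have h : (1 - ω) ^ 2 = -ω * 3 := by linear_combination hω
  induction n with
  | zero => simp [schurConst]
  | succ n ih =>
    rw [schurConst, prod_range_succ, prod_range_succ, ← schurConst]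
    calc _ = (schurConst ω n * ∏ k ∈ range n, 3 ^ k) * ((1 - ω) * (-ω * 3) ^ n) := by
          rw [mul_pow]; ring
      _ = (1 - ω) ^ ((n + 1) * (n + 1)) := by
        rw [ih, ← h, ← pow_mul, ← pow_succ', ← pow_add]
        ring_nf

theorem partitionFunction_one_one_mul_prod_factorial [IsDomain R] [CharZero R] {ω : R}
    (hω : IsPrimitiveRoot ω 3) (n : ℕ) :
    partitionFunction ω (1 : Fin n → R) (1 : Fin n → R) * ∏ k ∈ range n, ((n + k)! : R) =
      (1 - ω) ^ (n * n) * ∏ k ∈ range n, ((3 * k + 1)! : R) := by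
  have h := partitionFunction_one_one_mul_det_vandermonde hω n
  rw [det_vandermonde_natCast, det_vandermonde_doubleStaircase, prod_mul_distrib,
    prod_mul_distrib] at h
  have hne : ∏ k ∈ range n, (k ! : R) ≠ 0 :=
    prod_ne_zero_iff.2 fun k _ => Nat.cast_ne_zero.2 k.factorial_ne_zero
  rw [← schurConst_mul_prod_three_pow (sq_add_self_add_one hω)]
  refine mul_left_cancel₀ hne ?_
  linear_combination h

end Enumeration

section AlternatingSignMatrices

variable {m n : ℕ}

theorem toInt_injective : Function.Injective Bool.toInt := by
  decide

/-- A stretch of a row or column of an alternating sign matrix: the partial sums, which are `h`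
before it, stay in `{0, 1}` and end at `h'`. -/
def IsASMLine (h h' : Bool) (r : Fin n → ℤ) : Prop :=
  (∀ k, h.toInt + ∑ j with j ≤ k, r j = 0 ∨ h.toInt + ∑ j with j ≤ k, r j = 1) ∧
    h.toInt + ∑ j, r j = h'.toInt

theorem isASMLine_zero (h h' : Bool) (r : Fin 0 → ℤ) : IsASMLine h h' r ↔ h = h' := by
  simp [IsASMLine, toInt_injective.eq_iff]

theorem isASMLine_succ (h h' : Bool) (r : Fin (n + 1) → ℤ) :
    IsASMLine h h' r ↔ ∃ b : Bool, h.toInt + r 0 = b.toInt ∧ IsASMLine b h' (Fin.tail r) := by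
  have hbit (z : ℤ) : z = 0 ∨ z = 1 ↔ ∃ b : Bool, z = b.toInt := by simp
  have hzero : ∑ j with j ≤ 0, r j = r 0 := by simp [filter_eq']
  have hsucc (k : Fin n) : ∑ j with j ≤ k.succ, r j = r 0 + ∑ j with j ≤ k, Fin.tail r j := by
    simp [sum_filter, Fin.sum_univ_succ, Fin.tail]
  have htail : ∑ j : Fin n, r j.succ = ∑ j, Fin.tail r j := rfl
  simp only [IsASMLine, Fin.forall_fin_succ, hzero, hsucc, Fin.sum_univ_succ, htail, ← add_assoc,
    hbit (_ + r 0), and_assoc, ← exists_and_right]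
  exact exists_congr fun b => and_congr_right fun hb => by rw [hb]

theorem IsASMLine.mem_Icc {h h' : Bool} {r : Fin n → ℤ} (hr : IsASMLine h h' r) (j : Fin n) :
    r j ∈ Set.Icc (-1) 1 := by
  induction n generalizing h with
  | zero => exact j.elim0
  | succ n ih =>
    obtain ⟨b, hb, htail⟩ := (isASMLine_succ h h' r).1 hr
    refine Fin.cases ?_ (ih htail) j
    rw [Set.mem_Icc]
    cases h <;> cases b <;> simp only [Bool.toInt_false, Bool.toInt_true] at hb <;> omega

theorem vertex_one_one (ω : R) (b c h m : Bool) :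
    vertex ω 1 1 b c h m =
      (1 - ω) * if h.toInt + (c.toInt - b.toInt) = m.toInt then 1 else 0 := by
  cases b <;> cases c <;> cases h <;> cases m <;> simp [vertex]

open Classical in
theorem row_one_one (ω : R) (s s' : Fin n → Bool) (h h' : Bool) :
    row ω 1 1 s s' h h' = (1 - ω) ^ n *
      if IsASMLine h h' (fun j => (s' j).toInt - (s j).toInt) then 1 else 0 := by
  induction n generalizing h with
  | zero => simp [row, isASMLine_zero, Matrix.one_apply]
  | succ n ih =>
    have htail : Fin.tail (1 : Fin (n + 1) → R) = 1 := rfl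
    simp only [row_succ, htail, Matrix.mul_apply, ih, isASMLine_succ, Bool.exists_bool,
      Fintype.sum_bool, Pi.one_apply, vertex_one_one, Fin.tail_def, pow_succ', mul_assoc]
    cases h <;> cases s 0 <;> cases s' 0 <;> simp

/-- The last `m` rows of an alternating sign matrix, the states `s` being the column sums of the
rows above them. -/
def IsPartialASM (s : Fin n → Bool) (A : Fin m → Fin n → ℤ) : Prop :=
  (∀ i, IsASMLine false true (A i)) ∧ ∀ j, IsASMLine (s j) true fun i => A i j

theorem isASM_iff_isPartialASM (A : Matrix (Fin n) (Fin n) ℤ) :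
    IsASM n A ↔ IsPartialASM (m := n) ⊥ A := by
  constructor
  · rintro ⟨-, hrow, hcol, hrow', hcol'⟩
    exact ⟨fun i => by simpa [IsASMLine] using ⟨hrow' i, hrow i⟩,
      fun j => by simpa [IsASMLine] using ⟨hcol' j, hcol j⟩⟩
  · intro h
    have hentry (i j : Fin n) : A i j = -1 ∨ A i j = 0 ∨ A i j = 1 := by
      obtain ⟨hl, hu⟩ := (h.1 i).mem_Icc j
      omega
    have hcol (j : Fin n) : IsASMLine false true fun i => A i j := h.2 j
    simp only [IsPartialASM, IsASMLine, Bool.toInt_false, Bool.toInt_true, zero_add] at h hcol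
    exact ⟨hentry, fun i => (h.1 i).2, fun j => (hcol j).2, fun i => (h.1 i).1,
      fun j => (hcol j).1⟩

theorem finite_isPartialASM (s : Fin n → Bool) :
    Finite {A : Fin m → Fin n → ℤ // IsPartialASM s A} :=
  Set.Finite.to_subtype <| (Set.finite_Icc (fun _ _ => -1 : Fin m → Fin n → ℤ) 1).subset
    fun _ hA => ⟨fun i j => ((hA.1 i).mem_Icc j).1, fun i j => ((hA.1 i).mem_Icc j).2⟩

theorem isPartialASM_succ (s : Fin n → Bool) (A : Fin (m + 1) → Fin n → ℤ) :
    IsPartialASM s A ↔ ∃ s' : Fin n → Bool, (A 0 = fun j => (s' j).toInt - (s j).toInt) ∧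
      IsASMLine false true (A 0) ∧ IsPartialASM s' (Fin.tail A) := by
  have htail (j : Fin n) : Fin.tail (fun i => A i j) = fun i => Fin.tail A i j := rfl
  simp only [IsPartialASM, Fin.forall_fin_succ, isASMLine_succ (s _), Classical.skolem, htail,
    forall_and, funext_iff, eq_sub_iff_add_eq', ← exists_and_left]
  exact exists_congr fun s' => by simp only [and_left_comm, and_assoc, Fin.tail]

/-- Splitting off the first row, recorded by the states `s'` below it. -/
noncomputable def partialASMEquiv (m : ℕ) (s : Fin n → Bool) :
    {A : Fin (m + 1) → Fin n → ℤ // IsPartialASM s A} ≃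
      Σ s' : {s' : Fin n → Bool // IsASMLine false true fun j => (s' j).toInt - (s j).toInt},
        {A : Fin m → Fin n → ℤ // IsPartialASM s'.1 A} := by
  refine Equiv.symm (Equiv.ofBijective (fun p =>
    ⟨Fin.cons (fun j => (p.1.1 j).toInt - (s j).toInt) p.2.1,
      (isPartialASM_succ _ _).2 ⟨p.1.1, rfl, p.1.2, p.2.2⟩⟩) ⟨?_, ?_⟩)
  · rintro ⟨⟨s₁, h₁⟩, A₁, hA₁⟩ ⟨⟨s₂, h₂⟩, A₂, hA₂⟩ h
    simp only [Subtype.mk.injEq, Fin.cons_inj] at h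
    obtain ⟨hs, rfl⟩ := h
    obtain rfl : s₁ = s₂ :=
      funext fun j => toInt_injective (sub_left_injective (congrFun hs j))
    rfl
  · rintro ⟨A, hA⟩
    obtain ⟨s', hs', hline, htail⟩ := (isPartialASM_succ _ _).1 hA
    refine ⟨⟨⟨s', hs' ▸ hline⟩, Fin.tail A, htail⟩, Subtype.ext ?_⟩
    exact (congrArg (Fin.cons · _) hs'.symm).trans (Fin.cons_self_tail A)

open Classical in
theorem card_isPartialASM_succ (m : ℕ) (s : Fin n → Bool) :
    Nat.card {A : Fin (m + 1) → Fin n → ℤ // IsPartialASM s A} =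
      ∑ s' : Fin n → Bool with IsASMLine false true fun j => (s' j).toInt - (s j).toInt,
        Nat.card {A : Fin m → Fin n → ℤ // IsPartialASM s' A} := by
  have := finite_isPartialASM (m := m) (n := n)
  rw [Nat.card_congr (partialASMEquiv m s), Nat.card_sigma]
  exact (sum_subtype _ (fun _ => mem_filter_univ _)
    fun s' => Nat.card {A : Fin m → Fin n → ℤ // IsPartialASM s' A}).symm

theorem transfer_one_one_pow_apply_top (ω : R) (m : ℕ) (s : Fin n → Bool) :
    (transfer ω 1 1 ^ m : Matrix _ _ R) s ⊤ = (1 - ω) ^ (n * m) *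
      (Nat.card {A : Fin m → Fin n → ℤ // IsPartialASM s A} : R) := by
  classical
  induction m generalizing s with
  | zero =>
    have hiff (A : Fin 0 → Fin n → ℤ) : IsPartialASM s A ↔ s = ⊤ := by
      simp [IsPartialASM, isASMLine_zero, funext_iff]
    simp only [hiff]
    by_cases hs : s = ⊤ <;> simp [hs]
  | succ m ih =>
    rw [card_isPartialASM_succ, pow_succ', Matrix.mul_apply, Nat.cast_sum, mul_sum, sum_filter]
    refine sum_congr rfl fun s' _ => ?_
    rw [ih, transfer, Matrix.of_apply, row_one_one]
    split_ifs <;> ring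

theorem partitionFunction_one_one_eq_card (ω : R) (n : ℕ) :
    partitionFunction ω (1 : Fin n → R) (1 : Fin n → R) = (1 - ω) ^ (n * n) *
      (Nat.card {A : Matrix (Fin n) (Fin n) ℤ // IsASM n A} : R) := by
  have hone : List.ofFn (1 : Fin n → R) = List.replicate n 1 := List.ofFn_const n 1
  rw [partitionFunction, hone, List.map_replicate, List.prod_replicate,
    transfer_one_one_pow_apply_top, Nat.card_congr (Equiv.subtypeEquivRight isASM_iff_isPartialASM)]
  rfl

theorem card_mul_prod_factorial (n : ℕ) :
    Nat.card {A : Matrix (Fin n) (Fin n) ℤ // IsASM n A} * ∏ k ∈ range n, (n + k)! =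
      ∏ k ∈ range n, (3 * k + 1)! := by
  have hω := Complex.isPrimitiveRoot_exp 3 three_ne_zero
  have hne := pow_ne_zero (n * n) (sub_ne_zero.2 (hω.ne_one (by norm_num)).symm)
  have h := partitionFunction_one_one_mul_prod_factorial hω n
  rw [partitionFunction_one_one_eq_card, mul_assoc] at h
  exact_mod_cast mul_left_cancel₀ hne h

end AlternatingSignMatrices

end SixVertex

/-- **The ASM theorem**: the number of `n×n` alternating sign matrices
(equivalently, of fully-packed loop configurations on the `n×n` square with
alternating boundary conditions and fixed boundary coloring) is
`∏_{j=0}^{n-1} (3j+1)!/(n+j)!`. -/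
theorem card_ASM (n : ℕ) :
    (Nat.card {A : Matrix (Fin n) (Fin n) ℤ // IsASM n A} : ℚ) =
      ∏ j ∈ Finset.range n,
        ((Nat.factorial (3 * j + 1) : ℚ) / (Nat.factorial (n + j) : ℚ)) := by
  have hne : ∏ j ∈ range n, ((n + j).factorial : ℚ) ≠ 0 :=
    prod_ne_zero_iff.2 fun j _ => Nat.cast_ne_zero.2 (Nat.factorial_ne_zero _)
  rw [prod_div_distrib, eq_div_iff hne]
  exact_mod_cast SixVertex.card_mul_prod_factorial n
end

section
/- The number of n×n alternating sign matrices whose unique 1 in the bottom row is at column j satisfies Z^{[j-1]}(n-1) = [(n+j)!(2n−j)!(2n+1)!]/[n!·j!·(n−j)!·(3n+1)!] · Z(n−1), where Z(m) = ∏_{k=0}^{m-1}(3k+1)!/(m+k)! . Equivalently, the refined ASM numbers A(n,k) = binomial(n+k-2, k-1)·(2n−k−1)!/(n−k)! · ∏_{j=0}^{n-2}(3j+1)!/(n+j)! . -/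
open Finset

/-!
Recording the partial column sums of a matrix turns alternating sign matrices into configurations
of the six-vertex model with all weights equal to `1`. Deform the weights to `1, 1, t, t,
t² - t + 1, 1`, with one parameter `t` per column. The Yang–Baxter relation makes the partition
functions symmetric in the parameters, also when the refinement position is tracked by a generating
function in `(x, y)`; its coefficients are compatible with the map `(x, y) ↦ (-y, x - y)`, whose
cube is the identity. The sum of the generating function, suitably normalised, over an orbit of this
map vanishes, because it is a polynomial of too small a degree with `m + 1` orbits of zeros.

At `t = 1` this says that the generating polynomial `f` of the refined numbers, of degree `m`, makes
the coefficients of `(X - 1) ^ (2 * m + 1) * f` vanish in degrees `m + 1, …, 2 * m`. By Descartes'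
rule of signs such an `f` is determined by its constant term, and finite differences show that
`∑ k, (m + k).choose m * (2 * m - k).choose m * X ^ k` is one. The constant term is the number of
alternating sign matrices of size `m`, hence the sum of the refined numbers of the previous size.
-/

namespace RefinedASM

section Transfer

variable {R : Type*} [CommRing R]

/-- Restriction of a vector indexed by words to the words starting with `a`. -/
def restrict (a : Bool) : Module.End R (List Bool → R) :=
  LinearMap.funLeft R R (List.cons a)

/-- The functional `f ↦ ∑ l', w(l, l') f l'`, where `w(l, l')` is the weight of the six-vertex
column whose left and right edges are the words `l` and `l'`, whose first vertical edge is `v`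
and whose last vertical edge is `true`. The six vertex weights are `1, 1, t, t, t² - t + 1, 1`;
at `t = 1` all of them are `1`. -/
def column (t : R) : Bool → List Bool → (List Bool → R) →ₗ[R] R
  | false, [] => 0
  | true, [] => LinearMap.proj []
  | false, false :: l =>
      column t false l ∘ₗ restrict false + column t true l ∘ₗ restrict true
  | false, true :: l => t • column t false l ∘ₗ restrict true
  | true, false :: l => t • column t true l ∘ₗ restrict false
  | true, true :: l =>
      (t ^ 2 - t + 1) • column t false l ∘ₗ restrict false + column t true l ∘ₗ restrict true

/-- The column transfer operator of the six-vertex model with spectral parameter `t` and first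
vertical edge `v`. -/
def transfer (t : R) (v : Bool) : Module.End R (List Bool → R) :=
  LinearMap.pi (column t v)

section Recursion

variable (t : R) (f : List Bool → R) (l : List Bool)

theorem restrict_apply (a : Bool) : restrict a f l = f (a :: l) := rfl

theorem transfer_false_nil : transfer t false f [] = 0 := rfl

theorem transfer_true_nil : transfer t true f [] = f [] := rfl

theorem transfer_cons (v a : Bool) :
    transfer t v f (a :: l) = restrict a (transfer t v f) l := rfl

theorem restrict_false_transfer_false :
    restrict false (transfer t false f) =
      transfer t false (restrict false f) + transfer t true (restrict true f) := rfl

theorem restrict_true_transfer_false :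
    restrict true (transfer t false f) = t • transfer t false (restrict true f) := rfl

theorem restrict_false_transfer_true :
    restrict false (transfer t true f) = t • transfer t true (restrict false f) := rfl

theorem restrict_true_transfer_true :
    restrict true (transfer t true f) =
      (t ^ 2 - t + 1) • transfer t false (restrict false f) +
        transfer t true (restrict true f) := rfl

end Recursion

theorem transfer_yangBaxter (t u : R) (f : List Bool → R) (l : List Bool) :
    transfer t false (transfer u false f) l = transfer u false (transfer t false f) l ∧
    transfer t true (transfer u true f) l = transfer u true (transfer t true f) l ∧
    transfer t false (transfer u true f) l + u * transfer t true (transfer u false f) l =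
      transfer u false (transfer t true f) l + t * transfer u true (transfer t false f) l ∧
    (1 - u) * transfer t true (transfer u false f) l -
        t * transfer t false (transfer u true f) l =
      (1 - t) * transfer u true (transfer t false f) l -
        u * transfer u false (transfer t true f) l := by
  induction l generalizing f with
  | nil => simp [transfer_false_nil, transfer_true_nil]
  | cons a l ih =>
    obtain ⟨h₁, h₂, h₃, h₄⟩ := ih (restrict false f)
    obtain ⟨k₁, k₂, k₃, k₄⟩ := ih (restrict true f)
    cases a <;>
      simp only [transfer_cons, restrict_false_transfer_false, restrict_true_transfer_false,
        restrict_false_transfer_true, restrict_true_transfer_true, map_add, map_smul,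
        Pi.add_apply, Pi.smul_apply, smul_eq_mul]
    · refine ⟨?_, ?_, ?_, ?_⟩
      · linear_combination h₁ + k₃
      · linear_combination t * u * h₂
      · linear_combination (t + u) * h₃ + h₄ + (1 + t * u) * k₂
      · linear_combination -t * u * h₃ - t * u * k₂
    · refine ⟨?_, ?_, ?_, ?_⟩
      · linear_combination t * u * k₁
      · linear_combination (t + u - t * u) * h₃ + (1 - t * u) * h₄ + k₂
      · linear_combination (t * (u ^ 2 - u + 1) + u * (t ^ 2 - t + 1)) * h₁ +
          (t + u - t * u) * k₃ - t * u * k₄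
      · linear_combination (1 - t - u + t * u - t ^ 2 * u ^ 2) * h₁ +
          (1 - t) * (1 - u) * k₃ + t * u * k₄

theorem transfer_false_comm (t u : R) (f : List Bool → R) :
    transfer t false (transfer u false f) = transfer u false (transfer t false f) :=
  funext fun l => (transfer_yangBaxter t u f l).1

/-- The weight `x - t y` of a column with parameter `t`, for a spectral point `(x, y)`. The
order-three map `(x, y) ↦ (-y, x - y)` permutes the three lines `x = 0`, `x = y`, `y = 0`. -/
def weight (x y t : R) : R := x - t * y

theorem transfer_exchange (x y t u : R) (f : List Bool → R) :
    weight x y t • transfer t false (transfer u true f) -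
        weight (-y) (x - y) u • transfer t true (transfer u false f) =
      weight x y u • transfer u false (transfer t true f) -
        weight (-y) (x - y) t • transfer u true (transfer t false f) := by
  funext l
  obtain ⟨-, -, h, h'⟩ := transfer_yangBaxter t u f l
  simp only [weight, Pi.sub_apply, Pi.smul_apply, smul_eq_mul]
  linear_combination x * h + y * h'

end Transfer

section PartitionFunctions

variable {R : Type*} [CommRing R]

/-- The vector supported on the words all of whose letters are `true`. -/
def allTrue : List Bool → R
  | [] => 1
  | false :: _ => 0
  | true :: l => allTrue l

/-- The six-vertex partition function with columns `ts`, first vertical edges all `false`, and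
right edge all `true`, as a function of the left edge. -/
def partitionFun (ts : List R) : List Bool → R :=
  ts.foldr (fun t => transfer t false) allTrue

/-- The generating function of the partition functions in which the first vertical edge of exactly
one column is `true`. A column `t` contributes `weight x y t` to the left of that column and
`-weight (-y) (x - y) t` to its right. -/
def defectFun (x y : R) : List R → List Bool → R
  | [] => 0
  | t :: ts =>
      weight x y t • transfer t false (defectFun x y ts) +
        (ts.map fun u => -weight (-y) (x - y) u).prod • transfer t true (partitionFun ts)

theorem partitionFun_cons (t : R) (ts : List R) :
    partitionFun (t :: ts) = transfer t false (partitionFun ts) := rfl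

theorem partitionFun_perm {ts us : List R} (h : ts.Perm us) :
    partitionFun ts = partitionFun us :=
  h.foldr_eq' (fun t _ u _ f => transfer_false_comm u t f) _

theorem defectFun_perm (x y : R) {ts us : List R} (h : ts.Perm us) :
    defectFun x y ts = defectFun x y us := by
  induction h with
  | nil => rfl
  | cons t h ih => simp only [defectFun, ih, partitionFun_perm h, (h.map _).prod_eq]
  | trans _ _ ih₁ ih₂ => exact ih₁.trans ih₂
  | swap t u ts =>
    simp only [defectFun, partitionFun_cons, map_add, map_smul, List.map_cons, List.prod_cons]
    linear_combination (norm := module)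
      (ts.map fun u => -weight (-y) (x - y) u).prod • transfer_exchange x y u t (partitionFun ts) +
        (weight x y t * weight x y u) • transfer_false_comm u t (defectFun x y ts)

theorem transfer_true_replicate_false (t : R) (f : List Bool → R) (m : ℕ) :
    transfer t true f (List.replicate m false) = t ^ m * f (List.replicate m false) := by
  induction m generalizing f with
  | zero => simp [transfer_true_nil]
  | succ m ih =>
    rw [List.replicate_succ, transfer_cons, restrict_false_transfer_true, Pi.smul_apply,
      smul_eq_mul, ih, restrict_apply, pow_succ', mul_assoc]

theorem restrict_false_allTrue : restrict false (allTrue : List Bool → R) = 0 := rfl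

theorem restrict_true_allTrue : restrict true (allTrue : List Bool → R) = allTrue := rfl

theorem transfer_true_allTrue (t : R) : transfer t true allTrue = allTrue := by
  funext l
  induction l with
  | nil => rfl
  | cons a l ih =>
    cases a
    · rw [transfer_cons, restrict_false_transfer_true, restrict_false_allTrue, map_zero, smul_zero]
      rfl
    · rw [transfer_cons, restrict_true_transfer_true, restrict_false_allTrue, map_zero, smul_zero,
        zero_add, restrict_true_allTrue, ih]
      rfl

theorem restrict_true_partitionFun (ts : List R) :
    restrict true (partitionFun ts) = ts.prod • partitionFun ts := by
  induction ts with
  | nil => rw [List.prod_nil, one_smul]; rfl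
  | cons t ts ih =>
    rw [partitionFun_cons, restrict_true_transfer_false, ih, map_smul, smul_smul, List.prod_cons]

theorem restrict_false_partitionFun (ts : List R) :
    restrict false (partitionFun ts) = defectFun 1 0 ts := by
  induction ts with
  | nil => rfl
  | cons t ts ih =>
    rw [partitionFun_cons, restrict_false_transfer_false, ih, restrict_true_partitionFun]
    simp [defectFun, weight]

theorem defectFun_concat (x y : R) {t : R} (h : weight (-y) (x - y) t = 0) (ts : List R) :
    defectFun x y (ts ++ [t]) = (ts.map (weight x y)).prod • partitionFun ts := by
  induction ts with
  | nil => simp [defectFun, partitionFun, transfer_true_allTrue]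
  | cons u ts ih =>
    simp only [List.cons_append, defectFun, ih, map_smul, List.map_append, List.map_cons,
      List.map_nil, h, List.prod_append, List.prod_cons, List.prod_nil, neg_zero, zero_mul,
      mul_zero, zero_smul, add_zero, smul_smul, partitionFun_cons]

end PartitionFunctions

section ThreeTerm

variable {R : Type*} [CommRing R]

/-- The summand of `threeTerm` at the spectral point `(x, y)`. -/
def rotationTerm (x y : R) (m : ℕ) (ts : List R) : R :=
  y ^ m * (ts.map (weight (y - x) (-x))).prod * defectFun x y ts (List.replicate m false)

/-- The sum of `rotationTerm` over the orbit of `(x, y)` under `(x, y) ↦ (-y, x - y)`. -/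
def threeTerm (x y : R) (m : ℕ) (ts : List R) : R :=
  rotationTerm x y m ts + rotationTerm (-y) (x - y) m ts + rotationTerm (y - x) (-x) m ts

theorem threeTerm_rotate (x y : R) (m : ℕ) (ts : List R) :
    threeTerm (-y) (x - y) m ts = threeTerm x y m ts := by
  have hx : x - y - -y = x := by ring
  have hy : -y - (x - y) = -x := by ring
  simp only [threeTerm, neg_sub, neg_neg, hx, hy]
  ring

theorem threeTerm_perm (x y : R) (m : ℕ) {ts us : List R} (h : ts.Perm us) :
    threeTerm x y m ts = threeTerm x y m us := by
  simp only [threeTerm, rotationTerm, defectFun_perm _ _ h, (h.map _).prod_eq]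

theorem prod_map_neg {α : Type*} (f : α → R) (l : List α) :
    (l.map fun a => -f a).prod = (-1) ^ l.length * (l.map f).prod := by
  simpa [Function.comp_def] using List.prod_map_neg (l.map f)

theorem threeTerm_cons_eq_zero {x y t : R} (h : weight x y t = 0) (ts : List R) :
    threeTerm x y ts.length (t :: ts) = 0 := by
  have hx : x - y - -y = x := by ring
  have hxt : x = t * y := sub_eq_zero.mp h
  have h₀ : rotationTerm x y ts.length (t :: ts) = (-x) ^ ts.length * weight (y - x) (-x) t *
      (ts.map (weight (y - x) (-x))).prod * (ts.map (weight (-y) (x - y))).prod *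
      partitionFun ts (List.replicate ts.length false) := by
    simp only [rotationTerm, defectFun, h, zero_smul, zero_add, Pi.smul_apply, smul_eq_mul,
      transfer_true_replicate_false, List.map_cons, List.prod_cons, prod_map_neg]
    rw [hxt, ← neg_one_mul (t * y), mul_pow, mul_pow]
    ring
  have h₁ : rotationTerm (-y) (x - y) ts.length (t :: ts) = 0 := by
    simp [rotationTerm, hx, h]
  have h₂ : rotationTerm (y - x) (-x) ts.length (t :: ts) = (-x) ^ ts.length *
      weight (-y) (x - y) t * (ts.map (weight (-y) (x - y))).prod *
      (ts.map (weight (y - x) (-x))).prod *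
      partitionFun ts (List.replicate ts.length false) := by
    have hd : defectFun (y - x) (-x) (t :: ts) =
        (ts.map (weight (y - x) (-x))).prod • partitionFun ts := by
      rw [defectFun_perm _ _ (List.perm_append_singleton t ts).symm, defectFun_concat]
      simpa using h
    have hx' : -x - (y - x) = -y := by ring
    rw [rotationTerm, hd, hx', neg_sub]
    simp only [List.map_cons, List.prod_cons, Pi.smul_apply, smul_eq_mul]
    ring
  rw [threeTerm, h₀, h₁, h₂]
  have hsum : weight (-y) (x - y) t + weight (y - x) (-x) t = 0 := by
    rw [← neg_eq_zero.mpr h, weight, weight, weight]; ring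
  linear_combination (-x) ^ ts.length * (ts.map (weight (-y) (x - y))).prod *
    (ts.map (weight (y - x) (-x))).prod *
      partitionFun ts (List.replicate ts.length false) * hsum

theorem threeTerm_eq_zero {x y t : R} {ts : List R} {m : ℕ} (hm : ts.length = m + 1) (ht : t ∈ ts)
    (h : weight x y t = 0 ∨ weight (-y) (x - y) t = 0 ∨ weight (y - x) (-x) t = 0) :
    threeTerm x y m ts = 0 := by
  classical
  have hperm : ts.Perm (t :: ts.erase t) := List.perm_cons_erase ht
  obtain rfl : (ts.erase t).length = m := by
    rw [List.length_erase_of_mem ht, hm, Nat.add_sub_cancel]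
  have hy : -y - (x - y) = -x := by ring
  rw [threeTerm_perm x y _ hperm]
  rcases h with h | h | h
  · exact threeTerm_cons_eq_zero h _
  · rw [← threeTerm_rotate, threeTerm_cons_eq_zero h]
  · rw [← threeTerm_rotate, ← threeTerm_rotate, neg_sub, hy, threeTerm_cons_eq_zero h]

end ThreeTerm

section Map

variable {R S : Type*} [CommRing R] [CommRing S] (φ : R →+* S)

theorem map_transfer (t : R) (v : Bool) (f : List Bool → R) (l : List Bool) :
    φ (transfer t v f l) = transfer (φ t) v (φ ∘ f) l := by
  induction l generalizing v f with
  | nil => cases v <;> simp [transfer_false_nil, transfer_true_nil]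
  | cons a l ih =>
    have hrestrict (b : Bool) : restrict b (φ ∘ f) = φ ∘ restrict b f := rfl
    cases v <;> cases a <;>
      simp only [transfer_cons, restrict_false_transfer_false, restrict_true_transfer_false,
        restrict_false_transfer_true, restrict_true_transfer_true, Pi.add_apply, Pi.smul_apply,
        smul_eq_mul, map_add, map_mul, map_sub, map_pow, map_one, ih, hrestrict]

theorem map_allTrue (l : List Bool) : φ (allTrue l) = allTrue l := by
  induction l with
  | nil => exact map_one φ
  | cons a l ih =>
    cases a
    · exact map_zero φ
    · exact ih

theorem map_partitionFun (ts : List R) (l : List Bool) :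
    φ (partitionFun ts l) = partitionFun (ts.map φ) l := by
  induction ts generalizing l with
  | nil => exact map_allTrue φ l
  | cons t ts ih =>
    rw [partitionFun_cons, map_transfer, List.map_cons, partitionFun_cons]
    exact congrArg (transfer (φ t) false · l) (funext ih)

theorem map_weight (x y t : R) : φ (weight x y t) = weight (φ x) (φ y) (φ t) := by
  simp [weight]

theorem map_defectFun (x y : R) (ts : List R) (l : List Bool) :
    φ (defectFun x y ts l) = defectFun (φ x) (φ y) (ts.map φ) l := by
  induction ts generalizing l with
  | nil => exact map_zero φ
  | cons t ts ih =>
    have hdefect : φ ∘ defectFun x y ts = defectFun (φ x) (φ y) (ts.map φ) := funext ih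
    have hpartition : φ ∘ partitionFun ts = partitionFun (ts.map φ) :=
      funext (map_partitionFun φ ts)
    simp only [defectFun, List.map_cons, Pi.add_apply, Pi.smul_apply, smul_eq_mul, map_add,
      map_mul, map_weight, map_transfer, map_list_prod, List.map_map, hdefect, hpartition,
      Function.comp_def, map_neg, map_sub]

theorem map_threeTerm (x y : R) (m : ℕ) (ts : List R) :
    φ (threeTerm x y m ts) = threeTerm (φ x) (φ y) m (ts.map φ) := by
  simp only [threeTerm, rotationTerm, map_add, map_mul, map_pow, map_list_prod, List.map_map,
    map_defectFun, map_weight, Function.comp_def, map_neg, map_sub]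

end Map

section Interpolation

open Polynomial

theorem transfer_algebraMap_mem {K R : Type*} [CommRing K] [CommRing R] [Algebra K R]
    (S : Submodule K R) {f : List Bool → R} (hf : ∀ l, f l ∈ S) (t : K) (v : Bool)
    (l : List Bool) : transfer (algebraMap K R t) v f l ∈ S := by
  induction l generalizing v f with
  | nil =>
    cases v
    · exact S.zero_mem
    · exact hf []
  | cons a l ih =>
    have hmem (b v : Bool) : transfer (algebraMap K R t) v (restrict b f) l ∈ S :=
      ih (fun l => hf (b :: l)) v
    have hsmul (c : K) (b v : Bool) :
        algebraMap K R c * transfer (algebraMap K R t) v (restrict b f) l ∈ S := by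
      rw [← Algebra.smul_def]; exact S.smul_mem c (hmem b v)
    cases v <;> cases a
    · exact S.add_mem (hmem _ _) (hmem _ _)
    · exact hsmul t _ _
    · exact hsmul t _ _
    · refine S.add_mem ?_ (hmem _ _)
      have h := hsmul (t ^ 2 - t + 1) false false
      simp only [map_add, map_sub, map_pow, map_one] at h
      exact h

theorem mul_mem_degreeLT {K : Type*} [CommRing K] {p q : K[X]} {a b : ℕ} (hp : p.natDegree ≤ a)
    (hq : q ∈ degreeLT K b) : p * q ∈ degreeLT K (a + b) := by
  rw [mem_degreeLT] at hq ⊢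
  calc (p * q).degree ≤ p.degree + q.degree := degree_mul_le p q
    _ ≤ a + q.degree := by gcongr; exact natDegree_le_iff_degree_le.mp hp
    _ < a + b := WithBot.add_lt_add_left (WithBot.natCast_ne_bot a) hq
    _ = (a + b : ℕ) := (Nat.cast_add a b).symm

section Degree

variable {K : Type*} [CommRing K] {x y : K[X]}

theorem natDegree_weight_C_le (hx : x.natDegree ≤ 1) (hy : y.natDegree ≤ 1) (t : K) :
    (weight x y (C t)).natDegree ≤ 1 :=
  (natDegree_sub_le _ _).trans (max_le hx ((natDegree_C_mul_le _ _).trans hy))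

theorem natDegree_prod_map_C_le {f : K[X] → K[X]} (hf : ∀ t : K, (f (C t)).natDegree ≤ 1)
    (ts : List K) : ((ts.map C).map f).prod.natDegree ≤ ts.length := by
  refine (natDegree_list_prod_le _).trans ((List.sum_le_card_nsmul _ 1 ?_).trans ?_)
  · simpa [List.forall_mem_map] using fun t _ => hf t
  · simp

theorem defectFun_C_mem_degreeLT (hx : x.natDegree ≤ 1) (hy : y.natDegree ≤ 1) (ts : List K)
    (l : List Bool) : defectFun x y (ts.map C) l ∈ degreeLT K ts.length := by
  induction ts generalizing l with
  | nil => exact zero_mem _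
  | cons t ts ih =>
    have hpartition (l : List Bool) : partitionFun (ts.map C) l ∈ degreeLT K 1 := by
      rw [mem_degreeLT, ← map_partitionFun]
      exact degree_C_lt
    have hneg (u : K) : (-weight (-y) (x - y) (C u)).natDegree ≤ 1 := by
      rw [natDegree_neg]
      refine natDegree_weight_C_le ?_ ?_ u
      · rwa [natDegree_neg]
      · exact (natDegree_sub_le x y).trans (max_le hx hy)
    rw [List.map_cons, defectFun, List.length_cons]
    refine add_mem ?_ (mul_mem_degreeLT (natDegree_prod_map_C_le hneg ts)
      (transfer_algebraMap_mem _ hpartition t true l))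
    rw [add_comm]
    exact mul_mem_degreeLT (natDegree_weight_C_le hx hy t) (transfer_algebraMap_mem _ ih t false l)

theorem rotationTerm_C_mem_degreeLT (hx : x.natDegree ≤ 1) (hy : y.natDegree ≤ 1) (m : ℕ)
    (ts : List K) : rotationTerm x y m (ts.map C) ∈ degreeLT K (m + ts.length + ts.length) := by
  have hweight (t : K) : (weight (y - x) (-x) (C t)).natDegree ≤ 1 :=
    natDegree_weight_C_le ((natDegree_sub_le y x).trans (max_le hy hx)) (by rwa [natDegree_neg]) t
  refine mul_mem_degreeLT (natDegree_mul_le_of_le ?_ (natDegree_prod_map_C_le hweight ts))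
    (defectFun_C_mem_degreeLT hx hy ts _)
  simpa using natDegree_pow_le_of_le m hy

theorem threeTerm_C_mem_degreeLT (hx : x.natDegree ≤ 1) (hy : y.natDegree ≤ 1) (m : ℕ)
    (ts : List K) : threeTerm x y m (ts.map C) ∈ degreeLT K (m + ts.length + ts.length) := by
  refine add_mem (add_mem ?_ ?_) ?_ <;> apply rotationTerm_C_mem_degreeLT
  all_goals first
    | assumption
    | rwa [natDegree_neg]
    | exact (natDegree_sub_le _ _).trans (max_le ‹_› ‹_›)

end Degree

section OrderedField

variable {K : Type*} [Field K] [LinearOrder K] [IsStrictOrderedRing K]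

theorem card_union_image_rotate {A : Finset K} (hA : ∀ t ∈ A, 1 < t) :
    #(A ∪ A.image (fun t => 1 - t⁻¹) ∪ A.image (fun t => (1 - t)⁻¹)) = 3 * #A := by
  have hinv (t : K) (ht : t ∈ A) : 0 < 1 - t⁻¹ ∧ 1 - t⁻¹ < 1 :=
    ⟨sub_pos.mpr (inv_lt_one_of_one_lt₀ (hA t ht)),
      sub_lt_self 1 (inv_pos.mpr (zero_lt_one.trans (hA t ht)))⟩
  have hneg (t : K) (ht : t ∈ A) : (1 - t)⁻¹ < 0 := inv_lt_zero.mpr (sub_neg.mpr (hA t ht))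
  have hdisj₁ : Disjoint A (A.image fun t => 1 - t⁻¹) := by
    simp only [disjoint_right, mem_image, forall_exists_index, and_imp, forall_apply_eq_imp_iff₂]
    exact fun t ht h => ((hinv t ht).2.trans (hA _ h)).false
  have hdisj₂ : Disjoint (A ∪ A.image fun t => 1 - t⁻¹) (A.image fun t => (1 - t)⁻¹) := by
    simp only [disjoint_right, mem_image, mem_union, forall_exists_index, and_imp,
      forall_apply_eq_imp_iff₂]
    rintro t ht (h | ⟨u, hu, h⟩)
    · exact ((hneg t ht).trans (zero_lt_one.trans (hA _ h))).false
    · exact (((hneg t ht).trans (hinv u hu).1).trans_eq h).false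
  rw [card_union_of_disjoint hdisj₂, card_union_of_disjoint hdisj₁,
    card_image_of_injective A fun t u h => inv_injective (sub_right_injective h),
    card_image_of_injective A fun t u h => sub_right_injective (inv_injective h)]
  ring

theorem threeTerm_X_one_eq_zero {m : ℕ} {ts : List K} (hm : ts.length = m + 1) (hnodup : ts.Nodup)
    (hts : ∀ t ∈ ts, 1 < t) : threeTerm (X : K[X]) 1 m (ts.map C) = 0 := by
  have hA (t : K) (ht : t ∈ ts.toFinset) : 1 < t := hts t (List.mem_toFinset.mp ht)
  refine eq_zero_of_degree_lt_of_eval_finset_eq_zero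
    (ts.toFinset ∪ ts.toFinset.image (fun t => 1 - t⁻¹) ∪ ts.toFinset.image (fun t => (1 - t)⁻¹))
    ?_ ?_
  · have hdegree := mem_degreeLT.mp <|
      threeTerm_C_mem_degreeLT natDegree_X_le (natDegree_one.trans_le zero_le_one) m ts
    rw [card_union_image_rotate hA, List.toFinset_card_of_nodup hnodup]
    exact hdegree.trans_le (by rw [hm]; exact_mod_cast (by lia))
  · intro s hs
    have heval : eval s (threeTerm (X : K[X]) 1 m (ts.map C)) = threeTerm s 1 m ts := by
      rw [← coe_evalRingHom, map_threeTerm]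
      simp [Function.comp_def]
    simp only [mem_union, mem_image, List.mem_toFinset] at hs
    rw [heval]
    obtain (hs | ⟨t, ht, rfl⟩) | ⟨t, ht, rfl⟩ := hs
    · exact threeTerm_eq_zero hm hs (Or.inl (by simp [weight]))
    · have ht₀ : t ≠ 0 := (zero_lt_one.trans (hts t ht)).ne'
      refine threeTerm_eq_zero hm ht (Or.inr (Or.inl ?_))
      rw [weight]
      field_simp
      ring
    · have ht₁ : 1 - t ≠ 0 := (sub_neg.mpr (hts t ht)).ne
      refine threeTerm_eq_zero hm ht (Or.inr (Or.inr ?_))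
      rw [weight]
      field_simp
      ring

/-- The parameters `t` need to be distinct for the interpolation above; at `t = 1` the identity is
recovered as the constant term in `Y` of the one with parameters `1 + Y, 1 + 2 Y, …`. -/
theorem threeTerm_replicate_one_eq_zero (m : ℕ) :
    threeTerm (X : K[X]) 1 m (List.replicate (m + 1) 1) = 0 := by
  let perturbed : K[X][X] := threeTerm (C X) 1 m
    ((List.range (m + 1)).map fun j : ℕ => 1 + C (C (j + 1 : K)) * X)
  have hzero : perturbed = 0 := by
    refine eq_zero_of_infinite_isRoot _
      (((Set.Ioi_infinite (0 : K)).image C_injective.injOn).mono ?_)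
    rintro _ ⟨ε, hε, rfl⟩
    have hε : 0 < ε := hε
    have heval : eval (C ε) perturbed = threeTerm (X : K[X]) 1 m
        (((List.range (m + 1)).map fun j : ℕ => 1 + (j + 1) * ε).map C) := by
      rw [← coe_evalRingHom, map_threeTerm]
      simp [Function.comp_def]
    change IsRoot _ _
    rw [IsRoot.def, heval]
    refine threeTerm_X_one_eq_zero (by simp) (List.nodup_range.map fun i j h => ?_) ?_
    · simpa [hε.ne'] using h
    · simp only [List.forall_mem_map]
      intro j _
      exact lt_add_of_pos_right 1 (by positivity)
  have heval : eval 0 perturbed = threeTerm (X : K[X]) 1 m (List.replicate (m + 1) 1) := by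
    rw [← coe_evalRingHom, map_threeTerm]
    simp [Function.comp_def]
  rw [← heval, hzero, eval_zero]

end OrderedField

end Interpolation

section Uniform

variable {R : Type*} [CommRing R]

/-- The six-vertex partition function with all weights equal to `1`, first vertical edges `vs` and
right edge all `true`, as a function of the left edge. -/
def uniformPartitionFun (vs : List Bool) : List Bool → R :=
  vs.foldr (fun v => transfer 1 v) allTrue

theorem uniformPartitionFun_cons (v : Bool) (vs : List Bool) :
    (uniformPartitionFun (v :: vs) : List Bool → R) = transfer 1 v (uniformPartitionFun vs) := rfl

theorem map_uniformPartitionFun {S : Type*} [CommRing S] (φ : R →+* S) (vs l : List Bool) :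
    φ (uniformPartitionFun vs l) = uniformPartitionFun vs l := by
  induction vs generalizing l with
  | nil => exact map_allTrue φ l
  | cons v vs ih =>
    rw [uniformPartitionFun_cons, map_transfer, map_one, uniformPartitionFun_cons]
    exact congrArg (transfer 1 v · l) (funext ih)

theorem partitionFun_replicate_one (N : ℕ) :
    partitionFun (List.replicate N (1 : R)) = uniformPartitionFun (List.replicate N false) := by
  induction N with
  | zero => rfl
  | succ N ih =>
    rw [List.replicate_succ, partitionFun_cons, ih, List.replicate_succ, uniformPartitionFun_cons]

theorem defectFun_replicate_one (x y : R) (N : ℕ) :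
    defectFun x y (List.replicate N 1) = ∑ k : Fin N, ((x - y) ^ (k : ℕ) * x ^ (k.rev : ℕ)) •
      uniformPartitionFun (List.ofFn fun j => decide (j = k)) := by
  induction N with
  | zero => rfl
  | succ N ih =>
    rw [List.replicate_succ, defectFun, ih, partitionFun_replicate_one, Fin.sum_univ_succ,
      add_comm, map_sum, smul_sum]
    congr 1
    · simp [weight, List.ofFn_succ, uniformPartitionFun_cons, Fin.succ_ne_zero]
    · refine sum_congr rfl fun k _ => ?_
      simp [weight, List.ofFn_succ, uniformPartitionFun_cons, smul_smul, pow_succ', mul_assoc,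
        (Fin.succ_ne_zero _).symm]

end Uniform

open Polynomial

section RefinedNumber

/-- The uniform partition function with domain wall boundary and first vertical edge `true` in
column `k`; it counts alternating sign matrices of size `m + 1` with refinement position `k`. -/
def refinedNumber (m : ℕ) (k : Fin (m + 1)) : ℚ :=
  uniformPartitionFun (List.ofFn fun j => decide (j = k)) (List.replicate m false)

theorem refinedNumber_zero : refinedNumber 0 0 = 1 := rfl

theorem refinedNumber_succ_zero (m : ℕ) :
    refinedNumber (m + 1) 0 = ∑ k, refinedNumber m k := by
  have hword : (List.ofFn fun j : Fin (m + 2) => decide (j = 0)) =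
      true :: List.replicate (m + 1) false := by
    simp [List.ofFn_succ, Fin.succ_ne_zero, List.replicate_succ]
  calc refinedNumber (m + 1) 0
      = restrict false (partitionFun (List.replicate (m + 1) 1)) (List.replicate m false) := by
        rw [refinedNumber, hword, uniformPartitionFun_cons, transfer_true_replicate_false, one_pow,
          one_mul, partitionFun_replicate_one]
        rfl
    _ = ∑ k, refinedNumber m k := by
        rw [restrict_false_partitionFun, defectFun_replicate_one]
        simp [refinedNumber]

theorem defectFun_replicate_one_eq_sum_refinedNumber (x y : ℚ[X]) (m : ℕ) :
    defectFun x y (List.replicate (m + 1) 1) (List.replicate m false) =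
      ∑ k : Fin (m + 1), C (refinedNumber m k) * ((x - y) ^ (k : ℕ) * x ^ (k.rev : ℕ)) := by
  rw [defectFun_replicate_one, Finset.sum_apply]
  refine sum_congr rfl fun k _ => ?_
  rw [Pi.smul_apply, smul_eq_mul, mul_comm, refinedNumber, map_uniformPartitionFun]

theorem X_sub_one_pow_mul_ofFn_refinedNumber (m : ℕ) :
    (-1) ^ m * ((X - 1) ^ (2 * m + 1) * Polynomial.ofFn (m + 1) (refinedNumber m)) =
      X ^ (2 * m + 1) * (∑ k : Fin (m + 1), C (refinedNumber m k) * (1 - X) ^ (k.rev : ℕ)) -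
        ∑ k : Fin (m + 1), C (refinedNumber m k) * ((X - 1) ^ (k : ℕ) * X ^ (k.rev : ℕ)) := by
  have h₀ : rotationTerm X 1 m (List.replicate (m + 1) 1) =
      ∑ k : Fin (m + 1), C (refinedNumber m k) * ((X - 1) ^ (k : ℕ) * X ^ (k.rev : ℕ)) := by
    rw [rotationTerm, defectFun_replicate_one_eq_sum_refinedNumber]
    simp [weight]
  have h₁ : rotationTerm (-1) (X - 1) m (List.replicate (m + 1) 1) =
      (-1) ^ m * ((X - 1) ^ (2 * m + 1) * Polynomial.ofFn (m + 1) (refinedNumber m)) := by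
    have hsign (k : Fin (m + 1)) :
        (-1 - (X - 1)) ^ (k : ℕ) * (-1) ^ (k.rev : ℕ) = (-1) ^ m * (X : ℚ[X]) ^ (k : ℕ) := by
      have hk : (k : ℕ) + k.rev = m := by rw [Fin.val_rev]; lia
      rw [show (-1 - (X - 1) : ℚ[X]) = -1 * X by ring, mul_pow, mul_right_comm, ← pow_add, hk]
    rw [rotationTerm, defectFun_replicate_one_eq_sum_refinedNumber, ofFn_eq_sum_monomial]
    simp only [hsign, ← C_mul_X_pow_eq_monomial, mul_left_comm (C _) ((-1) ^ m), ← mul_sum]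
    simp only [weight, List.map_replicate, List.prod_replicate]
    ring
  have h₂ : rotationTerm (1 - X) (-X) m (List.replicate (m + 1) 1) =
      -(X ^ (2 * m + 1) * ∑ k : Fin (m + 1), C (refinedNumber m k) * (1 - X) ^ (k.rev : ℕ)) := by
    rw [rotationTerm, defectFun_replicate_one_eq_sum_refinedNumber]
    simp only [weight, List.map_replicate, List.prod_replicate, sub_neg_eq_add, sub_add_cancel,
      one_pow, one_mul]
    rw [← pow_add, show m + (m + 1) = 2 * m + 1 by ring, Odd.neg_pow ⟨m, rfl⟩, neg_mul]
  have hthree := threeTerm_replicate_one_eq_zero (K := ℚ) m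
  rw [threeTerm, h₀, h₁, h₂] at hthree
  linear_combination hthree

end RefinedNumber

section CoefficientGap

/-- The polynomials `f` of degree at most `m` for which the coefficients of
`(X - 1) ^ (2 * m + 1) * f` vanish in degrees `m + 1, …, 2 * m`. -/
def gapSpace (K : Type*) [CommRing K] (m : ℕ) : Submodule K K[X] where
  carrier := {f | f.natDegree ≤ m ∧
    ∀ r ∈ Ioc m (2 * m), ((X - 1 : K[X]) ^ (2 * m + 1) * f).coeff r = 0}
  zero_mem' := ⟨by simp, by simp⟩
  add_mem' hf hg := ⟨natDegree_add_le_of_degree_le hf.1 hg.1, fun r hr => by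
    rw [mul_add, coeff_add, hf.2 r hr, hg.2 r hr, add_zero]⟩
  smul_mem' c f hf := ⟨(natDegree_smul_le c f).trans hf.1, fun r hr => by
    rw [mul_smul_comm, coeff_smul, hf.2 r hr, smul_zero]⟩

theorem mem_gapSpace {K : Type*} [CommRing K] {m : ℕ} {f : K[X]} :
    f ∈ gapSpace K m ↔ f.natDegree ≤ m ∧
      ∀ r ∈ Ioc m (2 * m), ((X - 1) ^ (2 * m + 1) * f).coeff r = 0 := Iff.rfl

theorem signVariations_lt_card_support {K : Type*} [Field K] [LinearOrder K] {p : K[X]}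
    (hp : p ≠ 0) : p.signVariations < #p.support := by
  induction hn : #p.support using Nat.strong_induction_on generalizing p with
  | _ n ih =>
    subst hn
    by_cases herase : p.eraseLead = 0
    · have hmonomial : p = monomial p.natDegree p.leadingCoeff := by
        simpa [herase] using p.eraseLead_add_monomial_natDegree_leadingCoeff.symm
      rw [hmonomial, signVariations_monomial, ← hmonomial]
      exact card_pos.mpr (nonempty_support_iff.mpr hp)
    · have hcard := eraseLead_support_card_lt hp
      exact ((signVariations_le_eraseLead_succ p).trans_lt
        (Nat.succ_lt_succ (ih _ hcard herase rfl))).trans_le hcard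

section Descartes

variable {K : Type*} [Field K] [LinearOrder K] [IsStrictOrderedRing K]

theorem eq_zero_of_X_sub_one_pow_dvd {p : K[X]} {N : ℕ} (hdvd : (X - C 1) ^ N ∣ p)
    (hcard : #p.support ≤ N) : p = 0 := by
  by_contra hp
  refine absurd hcard (not_le.mpr ?_)
  calc N ≤ p.rootMultiplicity 1 := (le_rootMultiplicity_iff hp).mpr hdvd
    _ = p.roots.count 1 := (count_roots p).symm
    _ ≤ p.roots.countP (0 < ·) := by
      rw [Multiset.count, Multiset.countP_eq_card_filter, Multiset.countP_eq_card_filter]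
      exact Multiset.card_le_card
        (Multiset.monotone_filter_right _ fun _ h => h ▸ one_pos)
    _ ≤ p.signVariations := roots_countP_pos_le_signVariations p
    _ < #p.support := signVariations_lt_card_support hp

theorem eq_zero_of_mem_gapSpace {m : ℕ} {f : K[X]} (hf : f ∈ gapSpace K m)
    (h₀ : f.coeff 0 = 0) : f = 0 := by
  obtain ⟨hdegree, hgap⟩ := mem_gapSpace.mp hf
  set p := (X - 1) ^ (2 * m + 1) * f with hp
  have hsupport : p.support ⊆ Icc 1 m ∪ Ioc (2 * m) (3 * m + 1) := by
    intro r hr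
    have hr := mem_support_iff.mp hr
    have hpos : r ≠ 0 := by
      rintro rfl
      exact hr (by rw [hp, mul_coeff_zero, h₀, mul_zero])
    have hnotMem : ¬(m < r ∧ r ≤ 2 * m) := fun h => hr (hgap r (mem_Ioc.mpr h))
    have hle : r ≤ 2 * m + 1 + m := (le_natDegree_of_ne_zero hr).trans <|
      natDegree_mul_le_of_le
        ((natDegree_pow_le_of_le _ (natDegree_X_sub_C_le 1)).trans_eq (mul_one _)) hdegree
    simp only [mem_union, mem_Icc, mem_Ioc]
    lia
  have hcard : #p.support ≤ 2 * m + 1 := by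
    refine (card_le_card hsupport).trans ((card_union_le _ _).trans ?_)
    rw [Nat.card_Icc, Nat.card_Ioc]
    lia
  have hp₀ : p = 0 := eq_zero_of_X_sub_one_pow_dvd (by rw [C_1]; exact dvd_mul_right _ _) hcard
  exact (mul_eq_zero.mp hp₀).resolve_left (pow_ne_zero _ (X_sub_C_ne_zero 1))

end Descartes

theorem ofFn_refinedNumber_mem_gapSpace (m : ℕ) :
    Polynomial.ofFn (m + 1) (refinedNumber m) ∈ gapSpace ℚ m := by
  refine mem_gapSpace.mpr ⟨Nat.lt_succ_iff.mp (ofFn_natDegree_lt (by simp) _), fun r hr => ?_⟩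
  rw [mem_Ioc] at hr
  have hlow : (∑ k : Fin (m + 1), C (refinedNumber m k) *
      ((X - 1) ^ (k : ℕ) * X ^ (k.rev : ℕ))).coeff r = 0 := by
    refine coeff_eq_zero_of_natDegree_lt (lt_of_le_of_lt ?_ hr.1)
    refine natDegree_sum_le_of_forall_le _ _ fun k _ => (natDegree_C_mul_le _ _).trans ?_
    refine (natDegree_mul_le_of_le (natDegree_pow_le_of_le _ (natDegree_X_sub_C_le 1))
      (natDegree_X_pow_le _)).trans ?_
    rw [Fin.val_rev]
    lia
  have hsign : ((-1) ^ m : ℚ[X]) = C ((-1) ^ m) := by simp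
  have hcoeff := congrArg (coeff · r) (X_sub_one_pow_mul_ofFn_refinedNumber m)
  simp only [coeff_sub, hlow, coeff_X_pow_mul', sub_zero, hsign, coeff_C_mul,
    if_neg (show ¬2 * m + 1 ≤ r by lia)] at hcoeff
  exact (mul_eq_zero.mp hcoeff).resolve_left (pow_ne_zero _ (by norm_num))

/-- The coefficients of the element of `gapSpace ℚ m` with constant term `(2 * m).choose m`. -/
def chooseProd (m k : ℕ) : ℚ := (m + k).choose m * (2 * m - k).choose m

theorem chooseProd_eq_zero_of_lt {m k : ℕ} (hm : m < k) (hk : k ≤ 2 * m) : chooseProd m k = 0 := by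
  rw [chooseProd, Nat.choose_eq_zero_of_lt (show 2 * m - k < m by lia), Nat.cast_zero, mul_zero]

theorem sum_alternating_choose_mul_eval_eq_zero {K : Type*} [CommRing K] {p : K[X]} {n : ℕ}
    (hp : p.natDegree < n) :
    ∑ a ∈ range (n + 1), (-1) ^ (n - a) * (n.choose a : K) * p.eval (a : K) = 0 := by
  simpa [fwdDiff_iter_eq_sum_shift] using congrFun (fwdDiff_iter_eq_zero_of_degree_lt hp) 0

theorem natDegree_descPochhammer_comp_le {R : Type*} [CommRing R] [IsDomain R] (m : ℕ) {q : R[X]}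
    (hq : q.natDegree ≤ 1) : ((descPochhammer R m).comp q).natDegree ≤ m := by
  refine natDegree_comp_le.trans ?_
  rw [descPochhammer_natDegree]
  exact (Nat.mul_le_mul_left m hq).trans_eq (mul_one m)

theorem exists_eval_eq_descFactorial_mul_descFactorial (m b c : ℕ) :
    ∃ p : ℚ[X], p.natDegree ≤ 2 * m ∧ ∀ a ≤ b,
      p.eval (a : ℚ) = (b - a).descFactorial m * (a + c).descFactorial m := by
  refine ⟨(descPochhammer ℚ m).comp (C (b : ℚ) - X) * (descPochhammer ℚ m).comp (X + C (c : ℚ)),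
    ?_, fun a ha => ?_⟩
  · rw [two_mul]
    apply natDegree_mul_le_of_le <;> apply natDegree_descPochhammer_comp_le <;> compute_degree
  · simp only [eval_mul, eval_comp, eval_sub, eval_add, eval_C, eval_X]
    rw [← Nat.cast_sub ha, ← Nat.cast_add, descPochhammer_eval_eq_descFactorial,
      descPochhammer_eval_eq_descFactorial]

theorem sum_alternating_choose_mul_chooseProd {m r : ℕ} (hr : r ∈ Ioc m (2 * m)) :
    ∑ a ∈ range (r + 1), (-1) ^ (2 * m + 1 - a) * ((2 * m + 1).choose a : ℚ) *
      chooseProd m (r - a) = 0 := by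
  obtain ⟨hmr, hrm⟩ := mem_Ioc.mp hr
  obtain ⟨p, hdegree, heval⟩ :=
    exists_eval_eq_descFactorial_mul_descFactorial m (m + r) (2 * m - r)
  have hchooseProd (a : ℕ) (ha : a ≤ r) :
      p.eval (a : ℚ) = (m.factorial : ℚ) ^ 2 * chooseProd m (r - a) := by
    rw [heval a (by lia), chooseProd, Nat.descFactorial_eq_factorial_mul_choose,
      Nat.descFactorial_eq_factorial_mul_choose, show m + r - a = m + (r - a) by lia,
      show a + (2 * m - r) = 2 * m - (r - a) by lia]
    push_cast
    ring
  have hvanish : ∀ a ∈ range (2 * m + 1 + 1), a ∉ range (r + 1) →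
      (-1) ^ (2 * m + 1 - a) * ((2 * m + 1).choose a : ℚ) * p.eval (a : ℚ) = 0 := by
    intro a ha har
    rw [mem_range] at ha har
    rw [heval a (by lia), Nat.descFactorial_of_lt (show m + r - a < m by lia)]
    simp
  have hsum := sum_alternating_choose_mul_eval_eq_zero (Nat.lt_succ_iff.mpr hdegree)
  rw [← sum_subset (range_mono (show r + 1 ≤ 2 * m + 1 + 1 by lia)) hvanish] at hsum
  refine (mul_eq_zero.mp ?_).resolve_left
    (pow_ne_zero 2 (Nat.cast_ne_zero (R := ℚ).mpr m.factorial_ne_zero))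
  rw [mul_sum, ← hsum]
  refine sum_congr rfl fun a ha => ?_
  rw [hchooseProd a (Nat.lt_succ_iff.mp (mem_range.mp ha))]
  ring

theorem coeff_ofFn_chooseProd {m k : ℕ} (hk : k ≤ 2 * m) :
    (Polynomial.ofFn (m + 1) fun i => chooseProd m i).coeff k = chooseProd m k := by
  by_cases h : k < m + 1
  · rw [ofFn_coeff_eq_val_of_lt _ h]
  · rw [ofFn_coeff_eq_zero_of_ge _ (not_lt.mp h), chooseProd_eq_zero_of_lt (by lia) hk]

theorem ofFn_chooseProd_mem_gapSpace (m : ℕ) :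
    (Polynomial.ofFn (m + 1) fun i => chooseProd m i) ∈ gapSpace ℚ m := by
  refine mem_gapSpace.mpr ⟨Nat.lt_succ_iff.mp (ofFn_natDegree_lt (by simp) _), fun r hr => ?_⟩
  rw [coeff_mul, Nat.sum_antidiagonal_eq_sum_range_succ_mk,
    ← sum_alternating_choose_mul_chooseProd hr]
  refine sum_congr rfl fun a _ => ?_
  rw [coeff_ofFn_chooseProd ((Nat.sub_le r a).trans (mem_Ioc.mp hr).2), sub_eq_add_neg,
    show (-1 : ℚ[X]) = C (-1) by simp, coeff_X_add_C_pow]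

end CoefficientGap

section Normalization

theorem chooseProd_zero (m : ℕ) : chooseProd m 0 = m.centralBinom := by
  simp [chooseProd, Nat.centralBinom]

theorem centralBinom_mul_refinedNumber (m : ℕ) (k : Fin (m + 1)) :
    m.centralBinom * refinedNumber m k = refinedNumber m 0 * chooseProd m k := by
  have hmem := sub_mem
    (Submodule.smul_mem _ (m.centralBinom : ℚ) (ofFn_refinedNumber_mem_gapSpace m))
    (Submodule.smul_mem _ (refinedNumber m 0) (ofFn_chooseProd_mem_gapSpace m))
  have hzero := eq_zero_of_mem_gapSpace hmem <| by
    simp only [coeff_sub, coeff_smul, smul_eq_mul, ofFn_coeff_eq_val_of_lt _ m.succ_pos]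
    rw [chooseProd_zero, mul_comm]
    exact sub_self _
  have hcoeff := congrArg (coeff · k) hzero
  simp only [coeff_sub, coeff_smul, smul_eq_mul, ofFn_coeff_eq_val_of_lt _ k.isLt,
    coeff_zero] at hcoeff
  exact sub_eq_zero.mp hcoeff

theorem sum_chooseProd (m : ℕ) :
    ∑ k : Fin (m + 1), chooseProd m k = (3 * m + 1).choose m := by
  have hpow : (PowerSeries.mk 1 : PowerSeries ℚ) ^ (m + 1) * PowerSeries.mk 1 ^ (m + 1) =
      PowerSeries.mk 1 ^ (2 * m + 1 + 1) := by
    rw [← pow_add]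
    ring
  have hcoeff := congrArg (PowerSeries.coeff m) hpow
  simp only [PowerSeries.mk_one_pow_eq_mk_choose_add, PowerSeries.coeff_mul, PowerSeries.coeff_mk,
    Nat.sum_antidiagonal_eq_sum_range_succ_mk] at hcoeff
  rw [Nat.choose_symm_add, show 2 * m + 1 + m = 3 * m + 1 by ring] at hcoeff
  rw [← hcoeff, Fin.sum_univ_eq_sum_range (chooseProd m)]
  refine sum_congr rfl fun k hk => ?_
  rw [chooseProd, show 2 * m - k = m + (m - k) by rw [mem_range] at hk; lia]

/-- The product formula for the number of alternating sign matrices of size `m`. -/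
def asmProduct (m : ℕ) : ℚ :=
  ∏ j ∈ range m, ((3 * j + 1).factorial : ℚ) / (m + j).factorial

theorem prod_factorial_add_succ_mul (m : ℕ) :
    (∏ j ∈ range m, ((m + 1 + j).factorial : ℚ)) * m.factorial =
      (∏ j ∈ range m, ((m + j).factorial : ℚ)) * (2 * m).factorial := by
  have h := (prod_range_succ' (fun j => ((m + j).factorial : ℚ)) m).symm.trans (prod_range_succ _ m)
  simpa only [add_zero, two_mul, add_assoc, add_comm 1] using h

theorem prod_factorial_div_factorial_add_succ (m : ℕ) :
    ∏ j ∈ range m, ((3 * j + 1).factorial : ℚ) / (m + 1 + j).factorial =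
      asmProduct m * m.factorial / (2 * m).factorial := by
  have h := prod_factorial_add_succ_mul m
  have hne (a : ℕ) : (∏ j ∈ range m, ((a + j).factorial : ℚ)) ≠ 0 :=
    prod_ne_zero_iff.mpr fun j _ => by positivity
  have h₁ := hne m
  have h₂ := hne (m + 1)
  rw [asmProduct, prod_div_distrib, prod_div_distrib]
  field_simp
  linear_combination -h

theorem asmProduct_succ_mul_centralBinom (m : ℕ) :
    asmProduct (m + 1) * m.centralBinom = asmProduct m * (3 * m + 1).choose m := by
  rw [asmProduct, prod_range_succ, prod_factorial_div_factorial_add_succ, Nat.centralBinom,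
    Nat.cast_choose ℚ (show m ≤ 2 * m by lia), Nat.cast_choose ℚ (show m ≤ 3 * m + 1 by lia),
    show 2 * m - m = m by lia, show 3 * m + 1 - m = m + 1 + m by lia]
  field_simp

theorem refinedNumber_zero_eq_asmProduct (m : ℕ) : refinedNumber m 0 = asmProduct m := by
  induction m with
  | zero => simp [refinedNumber_zero, asmProduct]
  | succ m ih =>
    refine mul_right_cancel₀ (Nat.cast_ne_zero (R := ℚ).mpr m.centralBinom_ne_zero) ?_
    rw [asmProduct_succ_mul_centralBinom, refinedNumber_succ_zero, mul_comm, mul_sum,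
      sum_congr rfl fun k _ => centralBinom_mul_refinedNumber m k, ← mul_sum, sum_chooseProd, ih]

theorem refinedNumber_eq (m : ℕ) (k : Fin (m + 1)) :
    refinedNumber m k = asmProduct m * chooseProd m k / m.centralBinom := by
  rw [eq_div_iff (Nat.cast_ne_zero.mpr m.centralBinom_ne_zero), mul_comm,
    centralBinom_mul_refinedNumber, refinedNumber_zero_eq_asmProduct]

theorem refinedNumber_eq_choose_mul_prod {m l : ℕ} (hl : l ≤ m) :
    refinedNumber m ⟨l, Nat.lt_succ_of_le hl⟩ =
      ((m + l).choose l : ℚ) * (2 * m - l).factorial / (m - l).factorial *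
        ∏ j ∈ range m, ((3 * j + 1).factorial : ℚ) / (m + 1 + j).factorial := by
  rw [refinedNumber_eq, prod_factorial_div_factorial_add_succ, Nat.centralBinom, chooseProd,
    Nat.choose_symm_add, Nat.cast_choose ℚ (show m ≤ 2 * m - l by lia),
    Nat.cast_choose ℚ (show m ≤ 2 * m by lia), show 2 * m - l - m = m - l by lia,
    show 2 * m - m = m by lia]
  field_simp

end Normalization

section Alternating

/-- The integer sequence `c` has all its partial sums, started at `v`, in `{0, 1}`, and the last
one is `1`. In the six-vertex picture these partial sums are the edges along a line. -/
def IsAlternating {n : ℕ} (v : ℤ) (c : Fin n → ℤ) : Prop :=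
  (∀ r, v + Fin.partialSum c r = 0 ∨ v + Fin.partialSum c r = 1) ∧ v + ∑ i, c i = 1

instance {n : ℕ} (v : ℤ) (c : Fin n → ℤ) : Decidable (IsAlternating v c) :=
  inferInstanceAs (Decidable (_ ∧ _))

theorem IsAlternating.eq_zero_or_one {n : ℕ} {v : ℤ} {c : Fin n → ℤ} (h : IsAlternating v c) :
    v = 0 ∨ v = 1 := by
  simpa using h.1 0

theorem IsAlternating.apply_eq {n : ℕ} {v : ℤ} {c : Fin n → ℤ} (h : IsAlternating v c)
    (i : Fin n) : c i = -1 ∨ c i = 0 ∨ c i = 1 := by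
  have h₀ := h.1 i.castSucc
  have h₁ := h.1 i.succ
  rw [Fin.partialSum_succ] at h₁
  lia

theorem isAlternating_of_isEmpty (v : ℤ) (c : Fin 0 → ℤ) : IsAlternating v c ↔ v = 1 := by
  simp [IsAlternating, Fin.forall_fin_succ]
  lia

theorem isAlternating_cons {n : ℕ} (v a : ℤ) (c : Fin n → ℤ) :
    IsAlternating v (Fin.cons a c : Fin (n + 1) → ℤ) ↔
      (v = 0 ∨ v = 1) ∧ IsAlternating (v + a) c := by
  simp [IsAlternating, Fin.forall_fin_succ (n := n + 1), Fin.partialSum_succ', Fin.sum_univ_succ,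
    add_assoc, and_assoc]

theorem partialSum_eq_sum_filter {M : Type*} [AddCommMonoid M] {n : ℕ} (c : Fin n → M)
    (r : Fin (n + 1)) : Fin.partialSum c r = ∑ i with i.castSucc < r, c i := by
  induction r using Fin.induction with
  | zero => simp
  | succ j ih =>
    have hfilter : (univ.filter fun i : Fin n => i.castSucc < j.succ) =
        insert j (univ.filter fun i => i.castSucc < j.castSucc) := by
      ext i
      simp [Fin.castSucc_lt_succ_iff, le_iff_eq_or_lt]
    rw [Fin.partialSum_succ, ih, hfilter, sum_insert (by simp), add_comm]

theorem partialSum_comp_rev_add {M : Type*} [AddCommMonoid M] {n : ℕ} (c : Fin n → M)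
    (r : Fin (n + 1)) :
    Fin.partialSum (c ∘ Fin.rev) r + Fin.partialSum c r.rev = ∑ i, c i := by
  rw [partialSum_eq_sum_filter, partialSum_eq_sum_filter,
    ← sum_filter_not_add_sum_filter univ (fun i : Fin n => i.castSucc < r.rev)]
  congr 1
  refine sum_equiv Fin.revPerm (fun i => ?_) fun _ _ => rfl
  simp [Fin.lt_def, Fin.val_rev]
  lia

theorem IsAlternating.comp_rev {n : ℕ} {c : Fin n → ℤ} (h : IsAlternating 0 c) :
    IsAlternating 0 (c ∘ Fin.rev) := by
  have htotal : ∑ i, (c ∘ Fin.rev) i = ∑ i, c i := Equiv.sum_comp Fin.revPerm c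
  refine ⟨fun r => ?_, htotal ▸ h.2⟩
  have hrev := partialSum_comp_rev_add c r
  have hr := h.1 r.rev
  have hone := h.2
  lia

theorem isAlternating_comp_rev {n : ℕ} {c : Fin n → ℤ} :
    IsAlternating 0 (c ∘ Fin.rev) ↔ IsAlternating 0 c :=
  ⟨fun h => by simpa [Function.comp_assoc, Fin.rev_involutive.comp_self] using h.comp_rev,
    IsAlternating.comp_rev⟩

theorem isAlternating_zero_iff_sum_filter_le {n : ℕ} (c : Fin n → ℤ) :
    IsAlternating 0 c ↔
      (∀ k, ∑ i with i ≤ k, c i = 0 ∨ ∑ i with i ≤ k, c i = 1) ∧ ∑ i, c i = 1 := by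
  simp [IsAlternating, Fin.forall_fin_succ (n := n), partialSum_eq_sum_filter,
    Fin.castSucc_lt_succ_iff]

theorem isAlternating_zero_single {n : ℕ} (k : Fin n) : IsAlternating 0 (Pi.single k 1) := by
  refine (isAlternating_zero_iff_sum_filter_le _).mpr ⟨fun j => ?_, by simp⟩
  have h : ∑ i with i ≤ j, Pi.single k (1 : ℤ) i = if k ≤ j then 1 else 0 := by
    simp [Pi.single_apply, sum_ite_eq']
  rw [h]
  split_ifs <;> simp

theorem IsAlternating.eq_single {n : ℕ} {c : Fin n → ℤ} (h : IsAlternating 0 c)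
    (hc : ∀ i, 0 ≤ c i) {k : Fin n} (hk : c k = 1) : c = Pi.single k 1 := by
  have hsum : ∑ i ∈ univ.erase k, c i = 0 := by
    have htotal := add_sum_erase univ c (mem_univ k)
    have hone := h.2
    lia
  funext i
  obtain rfl | hi := eq_or_ne i k
  · rw [hk, Pi.single_eq_same]
  · rw [Pi.single_eq_of_ne hi]
    exact (sum_eq_zero_iff_of_nonneg fun i _ => hc i).mp hsum i (mem_erase.mpr ⟨hi, mem_univ i⟩)

end Alternating

section AlternatingMatrix

variable {m n : ℕ}

/-- The matrices whose row `i` is alternating from `v i` and whose column `j` is alternating from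
`h j`. For `v = 0` and `h = 0` these are the alternating sign matrices. -/
def IsAlternatingMatrix (v : Fin n → ℤ) (h : Fin m → ℤ) (A : Fin n → Fin m → ℤ) : Prop :=
  (∀ i, IsAlternating (v i) (A i)) ∧ ∀ j, IsAlternating (h j) fun i => A i j

theorem isASM_iff_isAlternatingMatrix (A : Matrix (Fin n) (Fin n) ℤ) :
    IsASM n A ↔ IsAlternatingMatrix 0 0 A := by
  simp only [IsAlternatingMatrix, Pi.zero_apply]
  refine ⟨fun ⟨_, hrow, hcol, hrow', hcol'⟩ => ?_, fun ⟨hrow, hcol⟩ => ?_⟩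
  · exact ⟨fun i => (isAlternating_zero_iff_sum_filter_le _).mpr ⟨hrow' i, hrow i⟩,
      fun j => (isAlternating_zero_iff_sum_filter_le _).mpr ⟨hcol' j, hcol j⟩⟩
  · have hrow' i := (isAlternating_zero_iff_sum_filter_le _).mp (hrow i)
    have hcol' j := (isAlternating_zero_iff_sum_filter_le _).mp (hcol j)
    exact ⟨fun i => (hrow i).apply_eq, fun i => (hrow' i).2, fun j => (hcol' j).2,
      fun i => (hrow' i).1, fun j => (hcol' j).1⟩

theorem isAlternatingMatrix_cons (v : Fin (n + 1) → ℤ) (h : Fin m → ℤ) (c : Fin m → ℤ)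
    (A : Fin n → Fin m → ℤ) :
    IsAlternatingMatrix v h (Fin.cons c A : Fin (n + 1) → Fin m → ℤ) ↔
      IsAlternating (v 0) c ∧ (∀ j, h j = 0 ∨ h j = 1) ∧
        IsAlternatingMatrix (Fin.tail v) (h + c) A := by
  have hcol (j : Fin m) : (fun i => (Fin.cons c A : Fin (n + 1) → Fin m → ℤ) i j) =
      (Fin.cons (c j) fun i => A i j : Fin (n + 1) → ℤ) := by
    funext i
    cases i using Fin.cases <;> rfl
  simp only [IsAlternatingMatrix, hcol, isAlternating_cons, Fin.forall_fin_succ (n := n),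
    forall_and, Fin.tail, Pi.add_apply]
  tauto

theorem isAlternatingMatrix_swap {v : Fin n → ℤ} {h : Fin m → ℤ}
    {A : Fin n → Fin m → ℤ} :
    IsAlternatingMatrix h v (Function.swap A) ↔ IsAlternatingMatrix v h A :=
  and_comm

theorem isAlternatingMatrix_comp_rev {A : Fin n → Fin m → ℤ} :
    IsAlternatingMatrix 0 0 (A ∘ Fin.rev) ↔ IsAlternatingMatrix 0 0 A :=
  and_congr (Fin.rev_surjective.forall (p := fun i => IsAlternating 0 (A i))).symm
    (forall_congr' fun j => isAlternating_comp_rev (c := fun i => A i j))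

theorem IsAlternatingMatrix.zero_apply_eq_one_iff {A : Fin (n + 1) → Fin m → ℤ}
    (hA : IsAlternatingMatrix 0 0 A) (k : Fin m) : A 0 k = 1 ↔ A 0 = Pi.single k 1 := by
  refine ⟨fun hk => (hA.1 0).eq_single (fun j => ?_) hk, fun h => by rw [h, Pi.single_eq_same]⟩
  rw [← Fin.cons_self_tail A, isAlternatingMatrix_cons] at hA
  have hj := (hA.2.2.2 j).eq_zero_or_one
  simp at hj
  lia

theorem finite_isAlternatingMatrix (v : Fin n → ℤ) (h : Fin m → ℤ) :
    Finite {A // IsAlternatingMatrix v h A} := by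
  have hfinite : {A : Fin n → Fin m → ℤ | ∀ i, A i ∈ {c | ∀ j, c j ∈ Set.Icc (-1 : ℤ) 1}}.Finite :=
    Set.Finite.pi' fun _ => Set.Finite.pi' fun _ => Set.finite_Icc _ _
  refine (hfinite.subset fun A hA i j => ?_).to_subtype
  have hij := (hA.1 i).apply_eq j
  rw [Set.mem_Icc]
  lia

theorem card_subtype_and_zero_eq {α : Type*} (p : (Fin (n + 1) → α) → Prop) (a : α) :
    Nat.card {A // p A ∧ A 0 = a} = Nat.card {B : Fin n → α // p (Fin.cons a B)} := by
  refine Nat.card_congr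
    ⟨fun A => ⟨Fin.tail A.1, ?_⟩, fun B => ⟨Fin.cons a B.1, B.2, rfl⟩, ?_, fun B => ?_⟩
  · obtain ⟨A, hA, rfl⟩ := A
    rwa [Fin.cons_self_tail]
  · rintro ⟨A, hA, rfl⟩
    exact Subtype.ext (Fin.cons_self_tail A)
  · exact Subtype.ext (Fin.tail_cons (α := fun _ => α) a B.1)

theorem card_isASM_last_apply_eq_one (k : Fin (n + 1)) :
    Nat.card {A // IsASM (n + 1) A ∧ A (Fin.last n) k = 1} =
      Nat.card {A : Fin (n + 1) → Fin n → ℤ // IsAlternatingMatrix (Pi.single k 1) 0 A} := by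
  have hrev : Nat.card {A // IsASM (n + 1) A ∧ A (Fin.last n) k = 1} =
      Nat.card {A : Fin (n + 1) → Fin (n + 1) → ℤ //
        IsAlternatingMatrix 0 0 A ∧ A 0 = Pi.single k 1} := by
    refine Nat.card_congr (Equiv.subtypeEquiv (Fin.revPerm.arrowCongr (Equiv.refl _)) fun A => ?_)
    have hA : IsASM (n + 1) A ↔ IsAlternatingMatrix 0 0 (A ∘ Fin.rev) :=
      (isASM_iff_isAlternatingMatrix A).trans isAlternatingMatrix_comp_rev.symm
    rw [hA]
    exact and_congr_right fun h => h.zero_apply_eq_one_iff k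
  rw [hrev, card_subtype_and_zero_eq]
  refine Nat.card_congr (Equiv.subtypeEquiv (Equiv.piComm _) fun B => ?_)
  rw [isAlternatingMatrix_cons, zero_add]
  exact ⟨fun h => isAlternatingMatrix_swap.mpr h.2.2, fun h =>
    ⟨isAlternating_zero_single k, fun _ => Or.inl rfl, isAlternatingMatrix_swap.mp h⟩⟩

end AlternatingMatrix

section Counting

variable {R : Type*} [CommRing R] {m n : ℕ}

theorem toInt_eq_zero_or_one (b : Bool) : b.toInt = 0 ∨ b.toInt = 1 := by
  cases b <;> simp

theorem toInt_eq_one_iff (b : Bool) : b.toInt = 1 ↔ b = true := by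
  cases b <;> simp

theorem isAlternating_toInt_sub_cons (v a b : Bool) (h h' : Fin m → Bool) :
    IsAlternating v.toInt (fun i => ((Fin.cons b h' : Fin (m + 1) → Bool) i).toInt -
        ((Fin.cons a h : Fin (m + 1) → Bool) i).toInt) ↔
      IsAlternating (v.toInt + (b.toInt - a.toInt)) fun i => (h' i).toInt - (h i).toInt := by
  have hdiff : (fun i => ((Fin.cons b h' : Fin (m + 1) → Bool) i).toInt -
      ((Fin.cons a h : Fin (m + 1) → Bool) i).toInt) =
        Fin.cons (b.toInt - a.toInt) fun i => (h' i).toInt - (h i).toInt := by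
    funext i
    cases i using Fin.cases <;> rfl
  rw [hdiff, isAlternating_cons, and_iff_right (toInt_eq_zero_or_one v)]

theorem transfer_one_ofFn (v : Bool) (f : List Bool → R) (h : Fin m → Bool) :
    transfer 1 v f (List.ofFn h) =
      ∑ h' : Fin m → Bool, if IsAlternating v.toInt (fun i => (h' i).toInt - (h i).toInt)
        then f (List.ofFn h') else 0 := by
  induction m generalizing v f with
  | zero => cases v <;> simp [transfer_false_nil, transfer_true_nil, isAlternating_of_isEmpty]
  | succ m ih =>
    cases h using Fin.consCases with | _ a h
    let summand (b : Bool) (h' : Fin m → Bool) : R :=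
      if IsAlternating v.toInt (fun i => ((Fin.cons b h' : Fin (m + 1) → Bool) i).toInt -
        ((Fin.cons a h : Fin (m + 1) → Bool) i).toInt) then f (b :: List.ofFn h') else 0
    have hterm {b w : Bool} (hw : v.toInt + (b.toInt - a.toInt) = w.toInt) :
        ∑ h', summand b h' = transfer 1 w (restrict b f) (List.ofFn h) := by
      rw [ih]
      exact sum_congr rfl fun h' _ =>
        if_congr (by rw [isAlternating_toInt_sub_cons, hw]) rfl rfl
    have hterm_zero {b : Bool} (hw : ¬(v.toInt + (b.toInt - a.toInt) = 0 ∨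
        v.toInt + (b.toInt - a.toInt) = 1)) : ∑ h', summand b h' = 0 :=
      sum_eq_zero fun h' _ => if_neg fun hc =>
        hw ((isAlternating_toInt_sub_cons v a b h h').mp hc).eq_zero_or_one
    have hsum : transfer 1 v f (a :: List.ofFn h) =
        ∑ h', summand false h' + ∑ h', summand true h' := by
      rw [transfer_cons]
      cases v <;> cases a
      · rw [hterm (w := false) rfl, hterm (w := true) rfl, restrict_false_transfer_false]
        rfl
      · rw [hterm_zero (by decide), hterm (w := false) rfl, restrict_true_transfer_false, one_smul,
          zero_add]
      · rw [hterm (w := true) rfl, hterm_zero (by decide), restrict_false_transfer_true, one_smul,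
          add_zero]
      · rw [hterm (w := false) rfl, hterm (w := true) rfl, restrict_true_transfer_true, one_pow,
          sub_self, zero_add, one_smul]
        rfl
    rw [List.ofFn_cons, hsum, ← Equiv.sum_comp (Fin.consEquiv fun _ => Bool),
      Fintype.sum_prod_type, Fintype.sum_bool, add_comm]
    simp only [Fin.consEquiv, Equiv.coe_fn_mk, List.ofFn_cons, summand]

theorem allTrue_ofFn (h : Fin m → Bool) :
    allTrue (List.ofFn h) = if ∀ i, h i = true then (1 : R) else 0 := by
  induction m with
  | zero => simp [allTrue]
  | succ m ih =>
    rw [List.ofFn_succ]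
    cases h₀ : h 0 <;> simp [allTrue, ih, Fin.forall_fin_succ, h₀]

theorem card_isAlternatingMatrix_cons (v : Bool) (vs : Fin n → ℤ) (h : Fin m → Bool) :
    Nat.card {A : Fin (n + 1) → Fin m → ℤ //
        IsAlternatingMatrix (Fin.cons v.toInt vs) (fun j => (h j).toInt) A} =
      ∑ h' : Fin m → Bool, if IsAlternating v.toInt (fun j => (h' j).toInt - (h j).toInt) then
        Nat.card {A : Fin n → Fin m → ℤ // IsAlternatingMatrix vs (fun j => (h' j).toInt) A}
      else 0 := by
  have hfinite := finite_isAlternatingMatrix (Fin.cons v.toInt vs : Fin (n + 1) → ℤ)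
    fun j => (h j).toInt
  let state (A : Fin (n + 1) → Fin m → ℤ) : Fin m → Bool := fun j => (h j).toInt + A 0 j = 1
  have hstate {A : Fin (n + 1) → Fin m → ℤ}
      (hA : IsAlternatingMatrix (Fin.cons v.toInt vs) (fun j => (h j).toInt) A)
      (h' : Fin m → Bool) : state A = h' ↔ A 0 = fun j => (h' j).toInt - (h j).toInt := by
    rw [← Fin.cons_self_tail A, isAlternatingMatrix_cons] at hA
    simp only [funext_iff, state]
    refine forall_congr' fun j => ?_
    have hj : (h j).toInt + A 0 j = 0 ∨ (h j).toInt + A 0 j = 1 := (hA.2.2.2 j).eq_zero_or_one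
    rw [eq_sub_iff_add_eq']
    rcases hj with hj | hj <;> cases h' j <;> simp [hj]
  rw [← Nat.card_congr (Equiv.sigmaFiberEquiv fun A : {A // _} => state A.1), Nat.card_sigma]
  refine sum_congr rfl fun h' _ => ?_
  rw [Nat.card_congr (Equiv.subtypeSubtypeEquivSubtypeInter _ fun A => state A = h'),
    Nat.card_congr (Equiv.subtypeEquivRight fun A => and_congr_right fun hA => hstate hA h'),
    card_subtype_and_zero_eq]
  simp only [isAlternatingMatrix_cons, Fin.cons_zero, Fin.tail_cons]
  have hh : (fun j => (h j).toInt) + (fun j => (h' j).toInt - (h j).toInt) =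
      fun j => (h' j).toInt := by
    funext j
    simp
  split_ifs with hv
  · simp [hv, toInt_eq_zero_or_one, hh]
  · simp [hv]

theorem card_isAlternatingMatrix (v : Fin n → Bool) (h : Fin m → Bool) :
    (Nat.card {A : Fin n → Fin m → ℤ //
        IsAlternatingMatrix (fun i => (v i).toInt) (fun j => (h j).toInt) A} : R) =
      uniformPartitionFun (List.ofFn v) (List.ofFn h) := by
  induction n generalizing h with
  | zero =>
    rw [List.ofFn_zero, uniformPartitionFun, List.foldr_nil, allTrue_ofFn]
    have hiff (A : Fin 0 → Fin m → ℤ) :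
        IsAlternatingMatrix (fun i => (v i).toInt) (fun j => (h j).toInt) A ↔
          ∀ j, h j = true := by
      simp [IsAlternatingMatrix, isAlternating_of_isEmpty, toInt_eq_one_iff]
    simp only [hiff]
    split_ifs with hh <;> simp [hh]
  | succ n ih =>
    cases v using Fin.consCases with | _ a v
    have hcons : (fun i => ((Fin.cons a v : Fin (n + 1) → Bool) i).toInt) =
        Fin.cons a.toInt fun i => (v i).toInt := by
      funext i
      cases i using Fin.cases <;> rfl
    rw [hcons, card_isAlternatingMatrix_cons, List.ofFn_cons, uniformPartitionFun_cons,
      transfer_one_ofFn, Nat.cast_sum]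
    refine sum_congr rfl fun h' _ => ?_
    rw [Nat.cast_ite, Nat.cast_zero, ih]

end Counting

theorem card_isASM_last_apply_eq_one_eq_refinedNumber {m : ℕ} (k : Fin (m + 1)) :
    (Nat.card {A // IsASM (m + 1) A ∧ A (Fin.last m) k = 1} : ℚ) = refinedNumber m k := by
  have hsingle : (Pi.single k 1 : Fin (m + 1) → ℤ) = fun j => (decide (j = k)).toInt := by
    funext j
    by_cases hj : j = k <;> simp [hj]
  have hzero : (0 : Fin m → ℤ) = fun _ => false.toInt := rfl
  rw [card_isASM_last_apply_eq_one, hsingle, hzero, card_isAlternatingMatrix, List.ofFn_const,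
    refinedNumber]

end RefinedASM

/-- **The refined ASM theorem.**  The number `A(n,k)` of `n×n` alternating sign
matrices whose unique `+1` in the bottom row is at column `k` (`1 ≤ k ≤ n`)
equals `C(n+k−2, k−1) · (2n−k−1)!/(n−k)! · ∏_{j=0}^{n-2} (3j+1)!/(n+j)!`. -/
theorem card_refined_ASM (n k : ℕ) (hk1 : 1 ≤ k) (hkn : k ≤ n) :
    (Nat.card {A : Matrix (Fin n) (Fin n) ℤ //
        IsASM n A ∧ A ⟨n - 1, by omega⟩ ⟨k - 1, by omega⟩ = 1} : ℚ) =
      (Nat.choose (n + k - 2) (k - 1) : ℚ) *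
        (Nat.factorial (2 * n - k - 1) : ℚ) / (Nat.factorial (n - k) : ℚ) *
        ∏ j ∈ Finset.range (n - 1),
          ((Nat.factorial (3 * j + 1) : ℚ) / (Nat.factorial (n + j) : ℚ)) := by
  obtain ⟨m, rfl⟩ : ∃ m, n = m + 1 := ⟨n - 1, by lia⟩
  obtain ⟨l, rfl⟩ : ∃ l, k = l + 1 := ⟨k - 1, by lia⟩
  have hl : l ≤ m := by lia
  simp only [show m + 1 + (l + 1) - 2 = m + l by lia,
    show 2 * (m + 1) - (l + 1) - 1 = 2 * m - l by lia,
    Nat.add_sub_add_right, Nat.add_sub_cancel]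
  rw [← RefinedASM.refinedNumber_eq_choose_mul_prod hl]
  exact RefinedASM.card_isASM_last_apply_eq_one_eq_refinedNumber ⟨l, Nat.lt_succ_of_le hl⟩
end

section
/- The determinant identity: det_{1≤i,j≤γ} [ C(α+β−1, β−i+j) + t·C(α+β−1, β−i+j−1) ] = [Δ_α Δ_β Δ_{γ+1} Δ_{α+β+γ−1}] / [Δ_{α+β−1} Δ_{α+γ} Δ_{β+γ}] · Σ_{i=0}^{γ} t^i · C(β−1+i, i) · C(α−1+γ−i, γ−i), where C(n,k) denotes the binomial coefficient and Δ_n = ∏_{k=0}^{n-1} k!. -/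
open Finset Polynomial

/-- The superfactorial `Δ_n = 0!·1!···(n−1)!`. -/
def superfac (n : ℕ) : ℕ := ∏ k ∈ Finset.range n, Nat.factorial k

/-- Binomial coefficient `C(n, k)` with integer lower index, zero when `k < 0`. -/
def chInt (n : ℕ) (k : ℤ) : ℕ := if 0 ≤ k then n.choose k.toNat else 0

/-!
Write `T c` for the Toeplitz matrix with entries `C(α+β−1, c−i+j)`, so that the determinant to be
computed is `det (T β + t T (β−1))`. Both `T (β−1)` and `T β` are obtained from a single
`γ × (γ+1)` Toeplitz matrix `V`, by deleting its last and its first column respectively. If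
`V x = 0`, multiplying `V` (bordered by a unit row) by the matrix with first column `x` followed by
the columns `t eⱼ + s eⱼ₊₁` and taking determinants gives
`x₀ det (s T β + t T (β−1)) = (∑ₖ xₖ (−t)ᵏ s^(γ−k)) det (T β)`.

For binomial coefficients such an `x` is explicit: `xₖ = (−1)ᵏ C(β−1+k, k) C(α−1+γ−k, γ−k)`. Indeed
`C(α+β−1, β−1−i+k) xₖ` is, up to a factor independent of `k`, `(−1)ᵏ C(γ, k)` times a polynomial in
`k` of degree `γ−1`, and the `γ`-th finite difference of such a polynomial vanishes. Taking
`(s, t) = (1, t)` produces the sum in the theorem, while `(s, t) = (0, 1)` relates `det (T (β−1))`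
to `det (T β)` and so yields MacMahon's product for `det (T β)` by induction on `β`.
-/

theorem det_eq_mul_det_submatrix_of_row_zero {R : Type*} [CommRing R] {n : ℕ}
    (M : Matrix (Fin (n + 1)) (Fin (n + 1)) R) (h : ∀ j : Fin n, M 0 j.succ = 0) :
    M.det = M 0 0 * (M.submatrix Fin.succ Fin.succ).det := by
  simp [Matrix.det_succ_row_zero, Fin.sum_univ_succ, h]

theorem det_eq_mul_det_submatrix_of_column_zero {R : Type*} [CommRing R] {n : ℕ}
    (M : Matrix (Fin (n + 1)) (Fin (n + 1)) R) (h : ∀ i : Fin n, M i.succ 0 = 0) :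
    M.det = M 0 0 * (M.submatrix Fin.succ Fin.succ).det := by
  simp [Matrix.det_succ_column_zero, Fin.sum_univ_succ, h]

section Bidiagonal

open scoped Matrix

variable {R : Type*} [CommRing R] {n : ℕ}

/-- The square matrix with first column `x` whose column `j + 1` has the two entries `t`, `s` in
rows `j`, `j + 1`: multiplying by it on the right forms combinations of adjacent columns. -/
def bidiag (s t : R) (x : Fin (n + 1) → R) : Matrix (Fin (n + 1)) (Fin (n + 1)) R :=
  Matrix.of fun i => Fin.cons (x i) fun j =>
    (Pi.single j.succ s + Pi.single j.castSucc t : Fin (n + 1) → R) i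

theorem mul_bidiag_zero {m : Type*} (M : Matrix m (Fin (n + 1)) R) (s t : R)
    (x : Fin (n + 1) → R) (i : m) : (M * bidiag s t x) i 0 = (M *ᵥ x) i :=
  rfl

theorem mul_bidiag_succ {m : Type*} (M : Matrix m (Fin (n + 1)) R) (s t : R)
    (x : Fin (n + 1) → R) (i : m) (j : Fin n) :
    (M * bidiag s t x) i j.succ = s * M i j.succ + t * M i j.castSucc := by
  simp [Matrix.mul_apply, bidiag, Pi.single_apply, mul_add, sum_add_distrib, mul_comm]

theorem det_bidiag_submatrix_succ_succ (s t : R) (x : Fin (n + 1) → R) :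
    ((bidiag s t x).submatrix Fin.succ Fin.succ).det = s ^ n := by
  rw [Matrix.det_of_isUpperTriangular]
  · simp [bidiag, Pi.single_apply, Fin.ext_iff]
  · intro i j hij
    have : (j : ℕ) < i := hij
    simp only [bidiag, Matrix.submatrix_apply, Matrix.of_apply, Fin.cons_succ, Pi.add_apply,
      Pi.single_apply, Fin.ext_iff, Fin.val_succ, Fin.val_castSucc]
    rw [if_neg (by omega), if_neg (by omega), add_zero]

theorem bidiag_submatrix_succ_succAbove_one (s t : R) (x : Fin (n + 2) → R) :
    (bidiag s t x).submatrix Fin.succ (Fin.succAbove 1) = bidiag s t (x ∘ Fin.succ) := by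
  ext i j
  refine Fin.cases ?_ (fun j => ?_) j
  · simp [bidiag]
  · simp [bidiag, Pi.single_apply, Fin.ext_iff]

theorem det_bidiag (s t : R) (x : Fin (n + 1) → R) :
    (bidiag s t x).det = ∑ k : Fin (n + 1), x k * (-t) ^ (k : ℕ) * s ^ (n - k) := by
  induction n with
  | zero => simp [bidiag]
  | succ n ih =>
    have row_zero (j : Fin n) : bidiag s t x 0 j.succ.succ = 0 := by
      have zero_ne_succ (i : Fin (n + 1)) : 0 ≠ i.succ := (Fin.succ_ne_zero i).symm
      simp [bidiag, Pi.single_apply, zero_ne_succ]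
    have corner : bidiag s t x 0 0 = x 0 := rfl
    have next : bidiag s t x 0 1 = t := by
      rw [← Fin.succ_zero_eq_one]
      simp [bidiag]
    have expand : (bidiag s t x).det =
        x 0 * s ^ (n + 1) - t * (bidiag s t (x ∘ Fin.succ)).det := by
      rw [Matrix.det_succ_row_zero, Fin.sum_univ_succ, Fin.sum_univ_succ]
      simp [row_zero, corner, next, det_bidiag_submatrix_succ_succ,
        bidiag_submatrix_succ_succAbove_one, ← sub_eq_add_neg]
    rw [expand, ih, Fin.sum_univ_succ (n := n + 1), mul_sum, sub_eq_add_neg, ← sum_neg_distrib]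
    simp only [Fin.val_zero, Fin.val_succ, Function.comp_apply, pow_zero, mul_one, Nat.sub_zero,
      Nat.add_sub_add_right]
    congr 1
    exact sum_congr rfl fun k _ => by ring

theorem apply_zero_mul_det_add_of_mulVec_eq_zero (V : Matrix (Fin n) (Fin (n + 1)) R)
    {x : Fin (n + 1) → R} (hx : V *ᵥ x = 0) (s t : R) :
    x 0 * (s • V.submatrix id Fin.succ + t • V.submatrix id Fin.castSucc).det =
      (∑ k : Fin (n + 1), x k * (-t) ^ (k : ℕ) * s ^ (n - k)) * (V.submatrix id Fin.succ).det := by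
  let bordered : Matrix (Fin (n + 1)) (Fin (n + 1)) R :=
    Matrix.of (Matrix.vecCons (Pi.single 0 1) V)
  have det_bordered : bordered.det = (V.submatrix id Fin.succ).det := by
    have corner : bordered 0 0 = 1 := by simp [bordered]
    rw [det_eq_mul_det_submatrix_of_row_zero bordered fun j => by simp [bordered], corner, one_mul]
    rfl
  have det_bordered_mul : (bordered * bidiag s t x).det =
      x 0 * (s • V.submatrix id Fin.succ + t • V.submatrix id Fin.castSucc).det := by
    rw [det_eq_mul_det_submatrix_of_column_zero _ fun i => congrFun hx i]
    congr 2
    · simp [mul_bidiag_zero, bordered, Matrix.mulVec]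
    · ext i j
      exact mul_bidiag_succ bordered s t x i.succ j
  rw [← det_bordered_mul, Matrix.det_mul, det_bordered, det_bidiag, mul_comm]

end Bidiagonal

theorem sum_range_neg_one_pow_mul_choose_mul_eval {R : Type*} [CommRing R] {n : ℕ} {P : R[X]}
    (hP : P.natDegree < n) :
    ∑ k ∈ range (n + 1), (-1) ^ k * n.choose k * P.eval (k : R) = 0 := by
  calc ∑ k ∈ range (n + 1), (-1) ^ k * n.choose k * P.eval (k : R)
      = (-1) ^ n * ∑ k ∈ range (n + 1),
          ((-1 : ℤ) ^ (n - k) * n.choose k) • P.eval (0 + k • 1) := by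
        rw [mul_sum]
        refine sum_congr rfl fun k hk => ?_
        have sign : (-1 : R) ^ n * (-1) ^ (n - k) = (-1) ^ k := by
          have hkn : k ≤ n := mem_range_succ_iff.mp hk
          rw [← pow_add, show n + (n - k) = k + 2 * (n - k) by omega, pow_add, pow_mul]
          simp
        simp [← sign, mul_assoc]
    _ = 0 := by
        rw [← fwdDiff_iter_eq_sum_shift (1 : R) P.eval n 0, fwdDiff_iter_eq_zero_of_degree_lt hP]
        simp

theorem superfac_succ (n : ℕ) : superfac (n + 1) = superfac n * n.factorial :=
  prod_range_succ _ _

theorem superfac_ne_zero (n : ℕ) : superfac n ≠ 0 :=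
  prod_ne_zero_iff.mpr fun k _ => k.factorial_ne_zero

theorem chInt_natCast (n k : ℕ) : chInt n k = n.choose k := by
  simp [chInt]

theorem chInt_of_neg (n : ℕ) {k : ℤ} (hk : k < 0) : chInt n k = 0 :=
  if_neg hk.not_ge

theorem factorial_mul_choose_mul_choose_mul_choose {a b k m p q i j : ℕ} (hp : p + i = b + k)
    (hq : q + j = a + m) :
    a.factorial * b.factorial * (k + m).factorial *
        ((p + q).choose p * ((b + k).choose k * (a + m).choose m)) =
      (p + q).factorial *
        ((k + m).choose k * ((b + k).descFactorial i * (a + m).descFactorial j)) := by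
  have descFactorial_i := Nat.factorial_mul_descFactorial (show i ≤ b + k by omega)
  have descFactorial_j := Nat.factorial_mul_descFactorial (show j ≤ a + m by omega)
  rw [show b + k - i = p by omega] at descFactorial_i
  rw [show a + m - j = q by omega] at descFactorial_j
  have choose_p := Nat.add_choose_mul_factorial_mul_factorial q p
  rw [add_comm q p] at choose_p
  have choose_k := Nat.add_choose_mul_factorial_mul_factorial m k
  rw [add_comm m k] at choose_k
  have choose_b := Nat.add_choose_mul_factorial_mul_factorial b k
  have choose_a := Nat.add_choose_mul_factorial_mul_factorial a m
  have pos : 0 < p.factorial * q.factorial * (k.factorial * m.factorial) := by positivity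
  refine Nat.eq_of_mul_eq_mul_left pos ?_
  calc p.factorial * q.factorial * (k.factorial * m.factorial) *
        (a.factorial * b.factorial * (k + m).factorial *
          ((p + q).choose p * ((b + k).choose k * (a + m).choose m)))
      = ((p + q).choose p * q.factorial * p.factorial) *
          ((b + k).choose k * b.factorial * k.factorial) *
          ((a + m).choose m * a.factorial * m.factorial) * (k + m).factorial := by ring
    _ = (p + q).factorial * (p.factorial * (b + k).descFactorial i) *
          (q.factorial * (a + m).descFactorial j) *
          ((k + m).choose k * m.factorial * k.factorial) := by
        rw [choose_p, choose_b, choose_a, choose_k, descFactorial_i, descFactorial_j]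
    _ = p.factorial * q.factorial * (k.factorial * m.factorial) *
          ((p + q).factorial * ((k + m).choose k *
            ((b + k).descFactorial i * (a + m).descFactorial j))) := by ring

theorem factorial_mul_chInt_mul_choose_mul_choose (a b : ℕ) {g i k : ℕ} (hi : i < g)
    (hk : k ≤ g) :
    a.factorial * b.factorial * g.factorial *
        (chInt (a + b + 1) (b - i + k) * ((b + k).choose k * (a + g - k).choose (g - k))) =
      (a + b + 1).factorial *
        (g.choose k * ((b + k).descFactorial i * (a + g - k).descFactorial (g - 1 - i))) := by
  obtain ⟨m, rfl⟩ := Nat.exists_eq_add_of_le hk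
  rw [show a + (k + m) - k = a + m by omega, show k + m - k = m by omega]
  rcases lt_or_ge (b + k) i with hneg | hp
  · rw [chInt_of_neg _ (by omega), Nat.descFactorial_of_lt hneg]
    simp
  rw [show (b : ℤ) - i + k = (b + k - i : ℕ) by omega, chInt_natCast]
  rcases lt_or_ge (a + m) (k + m - 1 - i) with hlarge | hq
  · rw [Nat.choose_eq_zero_of_lt (show a + b + 1 < b + k - i by omega),
      Nat.descFactorial_of_lt hlarge]
    simp
  rw [show a + b + 1 = b + k - i + (a + m - (k + m - 1 - i)) by omega]
  exact factorial_mul_choose_mul_choose_mul_choose (Nat.sub_add_cancel hp) (Nat.sub_add_cancel hq)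

section Toeplitz

open scoped Matrix

/-- The `m × k` Toeplitz matrix of binomial coefficients `C(n, c - i + j)`, cast to `R`. It is
rectangular so that shifting `c` amounts to selecting columns. -/
def chooseToeplitz (R : Type*) [NatCast R] (n : ℕ) (c : ℤ) (m k : ℕ) : Matrix (Fin m) (Fin k) R :=
  Matrix.of fun i j => (chInt n (c - i + j) : R)

theorem chooseToeplitz_submatrix_castSucc (R : Type*) [NatCast R] (n : ℕ) (c : ℤ) (m k : ℕ) :
    (chooseToeplitz R n c m (k + 1)).submatrix id Fin.castSucc = chooseToeplitz R n c m k :=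
  rfl

theorem chooseToeplitz_submatrix_succ (R : Type*) [NatCast R] (n : ℕ) (c : ℤ) (m k : ℕ) :
    (chooseToeplitz R n c m (k + 1)).submatrix id Fin.succ = chooseToeplitz R n (c + 1) m k := by
  ext i j
  simp only [chooseToeplitz, Matrix.submatrix_apply, Matrix.of_apply, id_eq, Fin.val_succ]
  congr 2
  push_cast
  ring

theorem chooseToeplitz_map {R S : Type*} [NonAssocSemiring R] [NonAssocSemiring S] (f : R →+* S)
    (n : ℕ) (c : ℤ) (m k : ℕ) : (chooseToeplitz R n c m k).map f = chooseToeplitz S n c m k := by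
  ext i j
  simp [chooseToeplitz]

theorem det_chooseToeplitz_zero (R : Type*) [CommRing R] (n g : ℕ) :
    (chooseToeplitz R n 0 g g).det = 1 := by
  rw [Matrix.det_of_isUpperTriangular]
  · simp [chooseToeplitz, chInt]
  · intro i j hij
    have : (j : ℕ) < i := hij
    simp only [chooseToeplitz, Matrix.of_apply]
    rw [chInt_of_neg _ (by omega), Nat.cast_zero]

/-- The kernel vector of the `g × (g + 1)` matrix `chooseToeplitz R (a + b + 1) b g (g + 1)`. The
subtractions never truncate, as `k ≤ g`. -/
def toeplitzKernel (R : Type*) [Ring R] (a b g : ℕ) (k : Fin (g + 1)) : R :=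
  (-1) ^ (k : ℕ) * ((b + k).choose k * (a + g - k).choose (g - k))

theorem exists_natDegree_lt_eval_eq_descFactorial_mul_descFactorial (a b : ℕ) {g i : ℕ}
    (hi : i < g) :
    ∃ P : ℤ[X], P.natDegree < g ∧ ∀ k ≤ g, P.eval (k : ℤ) =
      (b + k).descFactorial i * (a + g - k).descFactorial (g - 1 - i) := by
  refine ⟨(descPochhammer ℤ i).comp (X + C (b : ℤ)) *
    (descPochhammer ℤ (g - 1 - i)).comp (C ((a + g : ℕ) : ℤ) - X), ?_, fun k hk => ?_⟩
  · have rising : (X + C (b : ℤ)).natDegree ≤ 1 := by compute_degree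
    have falling : (C ((a + g : ℕ) : ℤ) - X).natDegree ≤ 1 := by compute_degree
    calc _ ≤ i * 1 + (g - 1 - i) * 1 := by
          refine natDegree_mul_le.trans (add_le_add ?_ ?_) <;>
          · refine natDegree_comp_le.trans ?_
            rw [descPochhammer_natDegree]
            gcongr
      _ < g := by omega
  · rw [← descPochhammer_eval_eq_descFactorial, ← descPochhammer_eval_eq_descFactorial,
      Nat.cast_sub (by omega)]
    simp [add_comm]

theorem sum_chInt_mul_choose_mul_choose_eq_zero (a b : ℕ) {g i : ℕ} (hi : i < g) :
    ∑ k ∈ range (g + 1), (chInt (a + b + 1) (b - i + k) : ℤ) *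
      ((-1) ^ k * ((b + k).choose k * (a + g - k).choose (g - k))) = 0 := by
  obtain ⟨P, hdeg, heval⟩ := exists_natDegree_lt_eval_eq_descFactorial_mul_descFactorial a b hi
  have scale_ne_zero : (a.factorial * b.factorial * g.factorial : ℤ) ≠ 0 := by positivity
  refine (mul_eq_zero_iff_left scale_ne_zero).mp ?_
  calc (a.factorial * b.factorial * g.factorial : ℤ) * ∑ k ∈ range (g + 1), _
      = (a + b + 1).factorial * ∑ k ∈ range (g + 1), (-1) ^ k * g.choose k * P.eval (k : ℤ) := by
        rw [mul_sum, mul_sum]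
        refine sum_congr rfl fun k hk => ?_
        have hkg : k ≤ g := mem_range_succ_iff.mp hk
        have term := congrArg (Nat.cast : ℕ → ℤ)
          (factorial_mul_chInt_mul_choose_mul_choose a b hi hkg)
        push_cast at term
        rw [heval k hkg]
        linear_combination (-1) ^ k * term
    _ = 0 := by rw [sum_range_neg_one_pow_mul_choose_mul_eval hdeg, mul_zero]

theorem chooseToeplitz_mulVec_toeplitzKernel (R : Type*) [CommRing R] (a b g : ℕ) :
    chooseToeplitz R (a + b + 1) b g (g + 1) *ᵥ toeplitzKernel R a b g = 0 := by
  ext i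
  have h := congrArg (Int.cast : ℤ → R) (sum_chInt_mul_choose_mul_choose_eq_zero a b i.isLt)
  rw [sum_range] at h
  push_cast at h
  exact h

theorem choose_mul_det_smul_chooseToeplitz_add {R : Type*} [CommRing R] (a b g : ℕ) (s t : R) :
    (a + g).choose g * (s • chooseToeplitz R (a + b + 1) (b + 1) g g +
        t • chooseToeplitz R (a + b + 1) b g g).det =
      (∑ k ∈ range (g + 1), (b + k).choose k * (a + g - k).choose (g - k) * t ^ k * s ^ (g - k)) *
        (chooseToeplitz R (a + b + 1) (b + 1) g g).det := by
  have h := apply_zero_mul_det_add_of_mulVec_eq_zero _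
    (chooseToeplitz_mulVec_toeplitzKernel R a b g) s t
  rw [chooseToeplitz_submatrix_succ, chooseToeplitz_submatrix_castSucc] at h
  have kernel_zero : toeplitzKernel R a b g 0 = (a + g).choose g := by simp [toeplitzKernel]
  rw [← kernel_zero, h, sum_range]
  congr 1
  refine sum_congr rfl fun k _ => ?_
  rw [toeplitzKernel, neg_pow t]
  have sign : (-1 : R) ^ (k : ℕ) * (-1) ^ (k : ℕ) = 1 := by simp [← mul_pow]
  linear_combination
    ((b + k : ℕ).choose k : R) * (a + g - k : ℕ).choose (g - k) * t ^ (k : ℕ) *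
      s ^ (g - k : ℕ) * sign

theorem choose_mul_det_chooseToeplitz (R : Type*) [CommRing R] (a b g : ℕ) :
    (a + g).choose g * (chooseToeplitz R (a + b + 1) b g g).det =
      (b + g).choose g * (chooseToeplitz R (a + b + 1) (b + 1) g g).det := by
  have h := choose_mul_det_smul_chooseToeplitz_add a b g (0 : R) 1
  rw [sum_range_succ, sum_eq_zero] at h
  · simpa using h
  · intro k hk
    rw [zero_pow (Nat.sub_ne_zero_of_lt (mem_range.mp hk)), mul_zero]

end Toeplitz

section BoxFormula

variable (K : Type*) [Field K]

/-- MacMahon's product for the number of plane partitions in an `a × b × c` box, i.e. of rhombus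
tilings of an `(a, b, c)` hexagon, written with superfactorials. -/
def macMahonBox (a b c : ℕ) : K :=
  superfac a * superfac b * superfac c * superfac (a + b + c) /
    (superfac (a + b) * superfac (a + c) * superfac (b + c))

theorem macMahonBox_comm (a b c : ℕ) : macMahonBox K a b c = macMahonBox K b a c := by
  rw [macMahonBox, macMahonBox, add_comm b a]
  ring

variable [CharZero K]

theorem cast_add_choose_right (m n : ℕ) :
    ((m + n).choose n : K) = (m + n).factorial / (m.factorial * n.factorial) := by
  rw [← Nat.choose_symm_add, Nat.cast_add_choose]

theorem macMahonBox_zero_middle (a c : ℕ) : macMahonBox K a 0 c = 1 := by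
  rw [macMahonBox, add_zero, zero_add, show superfac 0 = 1 from rfl, Nat.cast_one, mul_one,
    mul_right_comm]
  exact div_self (by simp [superfac_ne_zero])

theorem choose_mul_macMahonBox_succ (a b c : ℕ) :
    (a + c).choose c * macMahonBox K (a + 1) b c = (a + b + c).choose c * macMahonBox K a b c := by
  simp only [macMahonBox, cast_add_choose_right, add_right_comm _ 1, superfac_succ, Nat.cast_mul]
  field_simp [superfac_ne_zero, Nat.factorial_ne_zero]

theorem det_chooseToeplitz (a b g : ℕ) :
    (chooseToeplitz K (a + b) b g g).det = macMahonBox K a b g := by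
  induction b generalizing a with
  | zero => simp [det_chooseToeplitz_zero, macMahonBox_zero_middle]
  | succ b ih =>
    have choose_ne_zero : ((b + g).choose g : K) ≠ 0 :=
      Nat.cast_ne_zero.mpr (Nat.choose_pos (Nat.le_add_left g b)).ne'
    refine mul_left_cancel₀ choose_ne_zero ?_
    calc ((b + g).choose g : K) * (chooseToeplitz K (a + b + 1) (b + 1 : ℕ) g g).det
        = (a + g).choose g * (chooseToeplitz K (a + 1 + b) b g g).det := by
          rw [Nat.cast_succ, ← choose_mul_det_chooseToeplitz, add_right_comm]
      _ = (a + b + g).choose g * macMahonBox K a b g := by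
          rw [ih, choose_mul_macMahonBox_succ]
      _ = (b + g).choose g * macMahonBox K a (b + 1) g := by
          rw [macMahonBox_comm, macMahonBox_comm K a, choose_mul_macMahonBox_succ, add_comm b a]

theorem det_chooseToeplitz_eq_algebraMap (R : Type*) [CommRing R] [Algebra K R] (a b g : ℕ) :
    (chooseToeplitz R (a + b) b g g).det = algebraMap K R (macMahonBox K a b g) := by
  rw [← det_chooseToeplitz, RingHom.map_det, RingHom.mapMatrix_apply, chooseToeplitz_map]

theorem choose_mul_superfac_div_superfac (a b g : ℕ) :
    (a + g).choose g * (superfac (a + 1) * superfac b * superfac (g + 1) * superfac (a + b + g) /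
      (superfac (a + b) * superfac (a + 1 + g) * superfac (b + g)) : K) = macMahonBox K a b g := by
  simp only [macMahonBox, cast_add_choose_right, add_right_comm _ 1, superfac_succ, Nat.cast_mul]
  field_simp [superfac_ne_zero, Nat.factorial_ne_zero]

end BoxFormula

/-- **Determinant identity** (refined MacMahon-type formula):
`det_{1≤i,j≤γ} [C(α+β−1, β−i+j) + t·C(α+β−1, β−i+j−1)]
 = Δ_α Δ_β Δ_{γ+1} Δ_{α+β+γ−1} / (Δ_{α+β−1} Δ_{α+γ} Δ_{β+γ})
   · Σ_{i=0}^{γ} t^i C(β−1+i, i) C(α−1+γ−i, γ−i)`. -/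
theorem det_refined_macmahon (α β γ : ℕ) (hα : 1 ≤ α) (hβ : 1 ≤ β) :
    Matrix.det (Matrix.of fun i j : Fin γ =>
      Polynomial.C ((chInt (α + β - 1) ((β : ℤ) - (i : ℤ) + (j : ℤ)) : ℚ)) +
        Polynomial.X *
          Polynomial.C ((chInt (α + β - 1) ((β : ℤ) - (i : ℤ) + (j : ℤ) - 1) : ℚ))) =
    Polynomial.C
        ((superfac α * superfac β * superfac (γ + 1) * superfac (α + β + γ - 1) : ℚ) /
          (superfac (α + β - 1) * superfac (α + γ) * superfac (β + γ) : ℚ)) *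
      ∑ i ∈ Finset.range (γ + 1),
        Polynomial.X ^ i *
          Polynomial.C
            ((Nat.choose (β - 1 + i) i * Nat.choose (α - 1 + γ - i) (γ - i) : ℕ) : ℚ) := by
  obtain ⟨a, rfl⟩ := Nat.exists_eq_add_of_le' hα
  obtain ⟨b, rfl⟩ := Nat.exists_eq_add_of_le' hβ
  rw [show a + 1 + (b + 1) - 1 = a + (b + 1) by omega,
    show a + 1 + (b + 1) + γ - 1 = a + (b + 1) + γ by omega, Nat.add_sub_cancel, Nat.add_sub_cancel]
  have matrix_eq : (Matrix.of fun i j : Fin γ =>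
      C (chInt (a + (b + 1)) ((b + 1 : ℕ) - (i : ℤ) + (j : ℤ)) : ℚ) +
        X * C (chInt (a + (b + 1)) ((b + 1 : ℕ) - (i : ℤ) + (j : ℤ) - 1) : ℚ)) =
      (1 : ℚ[X]) • chooseToeplitz ℚ[X] (a + b + 1) (b + 1) γ γ +
        (X : ℚ[X]) • chooseToeplitz ℚ[X] (a + b + 1) b γ γ := by
    ext1 i j
    simp [chooseToeplitz, ← add_assoc, add_sub_right_comm]
  have det_eq : (chooseToeplitz ℚ[X] (a + b + 1) (b + 1) γ γ).det =
      C (macMahonBox ℚ a (b + 1) γ) :=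
    mod_cast det_chooseToeplitz_eq_algebraMap ℚ ℚ[X] a (b + 1) γ
  have choose_ne_zero : ((a + γ).choose γ : ℚ[X]) ≠ 0 :=
    Nat.cast_ne_zero.mpr (Nat.choose_pos (Nat.le_add_left γ a)).ne'
  refine mul_left_cancel₀ choose_ne_zero ?_
  rw [matrix_eq, choose_mul_det_smul_chooseToeplitz_add, det_eq,
    ← choose_mul_superfac_div_superfac, C_mul, map_natCast, mul_comm, mul_assoc]
  congr 2
  refine sum_congr rfl fun k _ => ?_
  simp only [Nat.cast_mul, C_mul, map_natCast, one_pow, mul_one]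
  ring
end
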